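/- Let p ≥ q ≥ 1 and n = p + q. For γ = (γ₁ ≥ … ≥ γ_n ≥ 0) ∈ ℝⁿ, s = (s₁ ≥ … ≥ s_p ≥ 0) ∈ ℝ^p and t = (t₁ ≥ … ≥ t_q ≥ 0) ∈ ℝ^q, the triple (γ, s, t) belongs to T(p,q) (i.e. there exists an n×n complex matrix X with s(X) = γ, s(X₁₁) = s and s(X₂₂) = t) if and only if (γ̂, ŝ, t̂) ∈ LR(2p, 2q). -/

import Mathlib

open Matrix

/-- Eigenvalues of a (Hermitian) complex matrix, listed in decreasing order. -/
noncomputable def eigVec {k : ℕ} (X : Matrix (Fin k) (Fin k) ℂ) (hX : X.IsHermitian) :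
    Fin k → ℝ :=
  fun i => hX.eigenvalues (Tuple.sort hX.eigenvalues i.rev)

/-- The `i`-th (0-based) singular value of a rectangular complex matrix:
the square root of the `i`-th largest eigenvalue of `Y * Yᴴ` (and `0` for `i ≥ a`). -/
noncomputable def sval {a b : ℕ} (Y : Matrix (Fin a) (Fin b) ℂ) (i : ℕ) : ℝ :=
  if h : i < a then
    Real.sqrt (eigVec (Y * Yᴴ) (Matrix.isHermitian_mul_conjTranspose_self Y) ⟨i, h⟩)
  else 0

/-- The Horn cone `Horn(k)`. -/
def Horn (k : ℕ) : Set ((Fin k → ℝ) × (Fin k → ℝ) × (Fin k → ℝ)) :=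
  { v | ∃ (X Y : Matrix (Fin k) (Fin k) ℂ) (hX : X.IsHermitian) (hY : Y.IsHermitian),
      v.1 = eigVec X hX ∧ v.2.1 = eigVec Y hY ∧ v.2.2 = eigVec (X + Y) (hX.add hY) }

/-- The Littlewood–Richardson cone `LR(m,n)`. -/
def LRcone (m n : ℕ) : Set ((Fin (m + n) → ℝ) × (Fin m → ℝ) × (Fin n → ℝ)) :=
  { v | ∃ (M : Matrix (Fin (m + n)) (Fin (m + n)) ℂ) (hM : M.IsHermitian),
      v.1 = eigVec M hM ∧
      v.2.1 = eigVec (M.submatrix (Fin.castAdd n) (Fin.castAdd n))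
        (hM.submatrix (Fin.castAdd n)) ∧
      v.2.2 = eigVec (M.submatrix (Fin.natAdd m) (Fin.natAdd m))
        (hM.submatrix (Fin.natAdd m)) }

/-- Top-left `p × p` block. -/
def blockTL (p q : ℕ) (X : Matrix (Fin (p + q)) (Fin (p + q)) ℂ) : Matrix (Fin p) (Fin p) ℂ :=
  X.submatrix (Fin.castAdd q) (Fin.castAdd q)

/-- Top-right `p × q` block. -/
def blockTR (p q : ℕ) (X : Matrix (Fin (p + q)) (Fin (p + q)) ℂ) : Matrix (Fin p) (Fin q) ℂ :=
  X.submatrix (Fin.castAdd q) (Fin.natAdd p)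

/-- Bottom-left `q × p` block. -/
def blockBL (p q : ℕ) (X : Matrix (Fin (p + q)) (Fin (p + q)) ℂ) : Matrix (Fin q) (Fin p) ℂ :=
  X.submatrix (Fin.natAdd p) (Fin.castAdd q)

/-- Bottom-right `q × q` block. -/
def blockBR (p q : ℕ) (X : Matrix (Fin (p + q)) (Fin (p + q)) ℂ) : Matrix (Fin q) (Fin q) ℂ :=
  X.submatrix (Fin.natAdd p) (Fin.natAdd p)

/-- `λ* = (−λ_k, …, −λ_1)`. -/
def starVec {k : ℕ} (x : Fin k → ℝ) : Fin k → ℝ := fun i => -x i.rev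

/-- `ŝ^{p,q} = (s₁, …, s_q, 0, …, 0, −s_q, …, −s₁) ∈ ℝ^{p+q}` (with `p − q` middle zeros). -/
noncomputable def hatPQ (p q : ℕ) (s : Fin q → ℝ) : Fin (p + q) → ℝ :=
  fun i =>
    if h : (i : ℕ) < q then s ⟨i, h⟩
    else if h' : (i : ℕ) < p then 0
    else -s ⟨p + q - 1 - i, by have := i.isLt; omega⟩

/-- The cone `A(p,q)`: pairs `(e(X), s(X₁₂))` for `X` Hermitian of size `p+q`. -/
def coneA (p q : ℕ) : Set ((Fin (p + q) → ℝ) × (Fin q → ℝ)) :=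
  { v | ∃ (X : Matrix (Fin (p + q)) (Fin (p + q)) ℂ) (hX : X.IsHermitian),
      v.1 = eigVec X hX ∧ ∀ i : Fin q, v.2 i = sval (blockTR p q X) (i : ℕ) }

/-- The cone `S(p,q)`: triples `(s(X), s(X₁₂), s(X₂₁))`. -/
def coneS (p q : ℕ) : Set ((Fin (p + q) → ℝ) × (Fin q → ℝ) × (Fin q → ℝ)) :=
  { v | ∃ X : Matrix (Fin (p + q)) (Fin (p + q)) ℂ,
      (∀ i : Fin (p + q), v.1 i = sval X (i : ℕ)) ∧
      (∀ i : Fin q, v.2.1 i = sval (blockTR p q X) (i : ℕ)) ∧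
      (∀ i : Fin q, v.2.2 i = sval (blockBL p q X) (i : ℕ)) }

/-- The cone `T(p,q)`: triples `(s(X), s(X₁₁), s(X₂₂))`. -/
def coneT (p q : ℕ) : Set ((Fin (p + q) → ℝ) × (Fin p → ℝ) × (Fin q → ℝ)) :=
  { v | ∃ X : Matrix (Fin (p + q)) (Fin (p + q)) ℂ,
      (∀ i : Fin (p + q), v.1 i = sval X (i : ℕ)) ∧
      (∀ i : Fin p, v.2.1 i = sval (blockTL p q X) (i : ℕ)) ∧
      (∀ i : Fin q, v.2.2 i = sval (blockBR p q X) (i : ℕ)) }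

/-- `μ(A) = (a_r − r ≥ … ≥ a₂ − 2 ≥ a₁ − 1)` as a decreasing real vector, for
`A = {a₁ < … < a_r}` a subset of `[n]` (0-based indexing internally). -/
noncomputable def muVec {n r : ℕ} (A : Finset (Fin n)) (h : A.card = r) : Fin r → ℝ :=
  fun k => (((A.orderIsoOfFin h k.rev : Fin n) : ℕ) : ℝ) - ((k.rev : ℕ) : ℝ)

/-- `A^o = {ℓ + 1 − a : a ∈ A}` inside `[ℓ]`. -/
def opp {n : ℕ} (A : Finset (Fin n)) : Finset (Fin n) := A.image Fin.rev

/-- `|s|_{K ∩ [q]}` where `K ⊆ [n]`, `s ∈ ℝ^q` and `[q]` is viewed inside `[n]`. -/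
noncomputable def sumRestr {n q : ℕ} (s : Fin q → ℝ) (K : Finset (Fin n)) : ℝ :=
  ∑ i ∈ K, (if h : (i : ℕ) < q then s ⟨i, h⟩ else 0)

/-- The augmented matrix `Ŷ^{p,q} = [[0, Y], [Yᴴ, 0]]` of size `p + q`. -/
def hatM (p q : ℕ) (Y : Matrix (Fin p) (Fin q) ℂ) : Matrix (Fin (p + q)) (Fin (p + q)) ℂ :=
  Matrix.reindex finSumFinEquiv finSumFinEquiv (Matrix.fromBlocks 0 Y Yᴴ 0)

/-!
The matrix `X` enters through its Hermitian dilation `[[0, X], [Xᴴ, 0]]`, whose eigenvalues are the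
signed singular values of `X`; so one direction only rearranges blocks, and the other asks that a
solution of the Hermitian problem with symmetric spectra can be replaced by one of dilation type.

A Hermitian matrix with given eigenvalues is a weighted sum of the projections onto a flag, up to a
multiple of the identity. The Hermitian problem is therefore solvable exactly when the *moment*, the
pinching of a weighted sum of the projections onto three flags minus a scalar, vanishes on some
orthonormal flags. The solution is of dilation type when all three flags are isotropic for the
indefinite form `J` of signature `(k, k)`, since `J` then anticommutes with the matrices involved.

Suppose the moment has no zero on isotropic flags. By compactness its norm is at least some `δ > 0`
there. The Kempf–Ness functional `∑ wt i * log det (Aᵢᴴ gᴴ g Aᵢ)` is geodesically convex, its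
gradient is the moment, and the descent flow preserves isotropy; hence a positive lower bound
persists on all translates of isotropic flags by invertible elements commuting with the pinching
involution. By subharmonicity of `log det` along analytic discs with isotropic boundary values, it
also holds at the centres of such discs. These centres include all families obtained from isotropic
flags by acting on the positive and negative parts of each `J` independently, which are dense among
all families; so the moment has no zero at all.
-/

namespace FlagMoment

open scoped ComplexOrder Matrix.Norms.Frobenius
open Metric (sphere ball)

section Gram

variable {ι κ : Type*} [Fintype ι] [Fintype κ] [DecidableEq κ]

/-- The orthogonal projection onto the column space of `A`, meaningful when the columns are
linearly independent, that is, when the Gram matrix `Aᴴ * A` is positive definite. -/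
noncomputable def colProj (A : Matrix ι κ ℂ) : Matrix ι ι ℂ := A * (Aᴴ * A)⁻¹ * Aᴴ

/-- The logarithm of the Gram determinant of the columns of `A`. -/
noncomputable def logGram (A : Matrix ι κ ℂ) : ℝ := Real.log ‖(Aᴴ * A).det‖

omit [Fintype κ] in
lemma posDef_gram_of_isometry {Q : Matrix ι κ ℂ} (hQ : Qᴴ * Q = 1) : (Qᴴ * Q).PosDef :=
  hQ ▸ Matrix.PosDef.one

omit [DecidableEq κ] in
lemma mulVec_injective_of_posDef_gram {A : Matrix ι κ ℂ} (hA : (Aᴴ * A).PosDef) :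
    Function.Injective A.mulVec := by
  classical
  exact fun x y h =>
    Matrix.mulVec_injective_of_isUnit hA.isUnit (by simp only [← Matrix.mulVec_mulVec, h])

omit [DecidableEq κ] in
lemma posDef_gram_mul_left {κ' : Type*} [Fintype κ'] {g : Matrix κ' ι ℂ} {A : Matrix ι κ ℂ}
    (hg : Function.Injective g.mulVec) (hA : (Aᴴ * A).PosDef) :
    ((g * A)ᴴ * (g * A)).PosDef := by
  refine Matrix.PosDef.conjTranspose_mul_self _ fun x y h => ?_
  simp only [← Matrix.mulVec_mulVec] at h
  exact mulVec_injective_of_posDef_gram hA (hg h)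

omit [DecidableEq κ] in
lemma gram_mul_right (A : Matrix ι κ ℂ) (R : Matrix κ κ ℂ) :
    (A * R)ᴴ * (A * R) = Rᴴ * (Aᴴ * A) * R := by
  simp only [conjTranspose_mul, Matrix.mul_assoc]

lemma posDef_gram_mul_right {A : Matrix ι κ ℂ} (hA : (Aᴴ * A).PosDef) {R : Matrix κ κ ℂ}
    (hR : IsUnit R) : ((A * R)ᴴ * (A * R)).PosDef :=
  gram_mul_right A R ▸
    hA.conjTranspose_mul_mul_same (Matrix.mulVec_injective_of_isUnit hR)

lemma det_gram_ne_zero {A : Matrix ι κ ℂ} (hA : (Aᴴ * A).PosDef) : (Aᴴ * A).det ≠ 0 :=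
  ((Matrix.isUnit_iff_isUnit_det _).1 hA.isUnit).ne_zero

lemma colProj_mul_right (A : Matrix ι κ ℂ) {R : Matrix κ κ ℂ} (hR : IsUnit R) :
    colProj (A * R) = colProj A := by
  have hRR : R * R⁻¹ = 1 := Matrix.mul_nonsing_inv R ((Matrix.isUnit_iff_isUnit_det R).1 hR)
  have hRR' : (R⁻¹)ᴴ * Rᴴ = 1 := by rw [← conjTranspose_mul, hRR, conjTranspose_one]
  rw [colProj, gram_mul_right, Matrix.mul_inv_rev, Matrix.mul_inv_rev,
    ← conjTranspose_nonsing_inv, conjTranspose_mul]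
  calc A * R * (R⁻¹ * ((Aᴴ * A)⁻¹ * (R⁻¹)ᴴ)) * (Rᴴ * Aᴴ)
      = A * (R * R⁻¹) * (Aᴴ * A)⁻¹ * ((R⁻¹)ᴴ * Rᴴ) * Aᴴ := by simp only [Matrix.mul_assoc]
    _ = colProj A := by rw [hRR, hRR', Matrix.mul_one, Matrix.mul_one, colProj]

lemma colProj_of_isometry {Q : Matrix ι κ ℂ} (hQ : Qᴴ * Q = 1) : colProj Q = Q * Qᴴ := by
  simp [colProj, hQ]

lemma logGram_of_isometry {Q : Matrix ι κ ℂ} (hQ : Qᴴ * Q = 1) : logGram Q = 0 := by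
  simp [logGram, hQ]

lemma isHermitian_colProj (A : Matrix ι κ ℂ) : (colProj A).IsHermitian :=
  Matrix.isHermitian_mul_mul_conjTranspose A (Matrix.isHermitian_conjTranspose_mul_self A).inv

lemma logGram_mul_right {A : Matrix ι κ ℂ} (hA : (Aᴴ * A).PosDef) {R : Matrix κ κ ℂ}
    (hR : IsUnit R) : logGram (A * R) = logGram A + 2 * Real.log ‖R.det‖ := by
  have hR' : R.det ≠ 0 := ((Matrix.isUnit_iff_isUnit_det R).1 hR).ne_zero
  have hA' := det_gram_ne_zero hA
  rw [logGram, logGram, gram_mul_right, det_mul, det_mul, det_conjTranspose, norm_mul, norm_mul,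
    norm_star, Real.log_mul (by positivity) (by positivity),
    Real.log_mul (by positivity) (by positivity)]
  ring

lemma exists_unitary_diagonal {Z : Matrix κ κ ℂ} (hZ : Z.IsHermitian) :
    ∃ U : Matrix κ κ ℂ, Uᴴ * U = 1 ∧
      Z = U * diagonal (fun i => (hZ.eigenvalues i : ℂ)) * Uᴴ :=
  ⟨hZ.eigenvectorUnitary, Unitary.coe_star_mul_self hZ.eigenvectorUnitary, hZ.spectral_theorem⟩

lemma exists_diagonal_mul_mul_diagonal_eq_one {d : κ → ℂ} (hd : ∀ i, 0 < d i) :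
    ∃ f : κ → ℂ, (diagonal f)ᴴ * diagonal d * diagonal f = 1 := by
  refine ⟨fun i => (Real.sqrt (d i).re : ℂ)⁻¹, ?_⟩
  rw [diagonal_conjTranspose, diagonal_mul_diagonal, diagonal_mul_diagonal, ← diagonal_one]
  refine congrArg diagonal (funext fun i => ?_)
  have hpos : 0 < (d i).re := (Complex.pos_iff.1 (hd i)).1
  have hne : (Real.sqrt (d i).re : ℂ) ≠ 0 := by exact_mod_cast (Real.sqrt_pos.2 hpos).ne'
  have hsq : d i = (Real.sqrt (d i).re : ℂ) * Real.sqrt (d i).re := by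
    rw [← Complex.ofReal_mul, Real.mul_self_sqrt hpos.le]
    exact Complex.eq_re_of_ofReal_le (hd i).le
  simp only [Pi.star_apply, Complex.star_def, map_inv₀, Complex.conj_ofReal]
  generalize Real.sqrt (d i).re = r at *
  rw [hsq]
  field_simp

lemma exists_isUnit_gram_mul_eq_one {A : Matrix ι κ ℂ} (hA : (Aᴴ * A).PosDef) :
    ∃ R : Matrix κ κ ℂ, IsUnit R ∧ (A * R)ᴴ * (A * R) = 1 := by
  obtain ⟨U, hU, hAU⟩ := exists_unitary_diagonal hA.1
  obtain ⟨f, hf⟩ := exists_diagonal_mul_mul_diagonal_eq_one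
    (d := fun i => (hA.1.eigenvalues i : ℂ)) fun i => by exact_mod_cast hA.eigenvalues_pos i
  have hgram : (A * (U * diagonal f))ᴴ * (A * (U * diagonal f)) = 1 := by
    calc (A * (U * diagonal f))ᴴ * (A * (U * diagonal f))
        = (diagonal f)ᴴ * (Uᴴ * (Aᴴ * A) * U) * diagonal f := by
          simp only [conjTranspose_mul, Matrix.mul_assoc]
      _ = (diagonal f)ᴴ * ((Uᴴ * U) * diagonal (fun i => (hA.1.eigenvalues i : ℂ)) * (Uᴴ * U)) *
            diagonal f := by
          conv_lhs => rw [hAU]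
          simp only [Matrix.mul_assoc]
      _ = 1 := by rw [hU, Matrix.one_mul, Matrix.mul_one, hf]
  refine ⟨U * diagonal f, ?_, hgram⟩
  rw [gram_mul_right] at hgram
  exact IsUnit.of_mul_eq_one_right _ hgram

lemma exists_isometry {A : Matrix ι κ ℂ} (hA : (Aᴴ * A).PosDef) :
    ∃ (Q : Matrix ι κ ℂ) (R : Matrix κ κ ℂ), Qᴴ * Q = 1 ∧ IsUnit R ∧ A = Q * R := by
  obtain ⟨R, hR, hAR⟩ := exists_isUnit_gram_mul_eq_one hA
  refine ⟨A * R, R⁻¹, hAR, (Matrix.isUnit_nonsing_inv_iff).2 hR, ?_⟩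
  rw [Matrix.mul_assoc, Matrix.mul_nonsing_inv _ ((Matrix.isUnit_iff_isUnit_det R).1 hR),
    Matrix.mul_one]

lemma log_norm_det_eq_sum {Z : Matrix κ κ ℂ} (hZ : Z.PosDef) :
    Real.log ‖Z.det‖ = ∑ i, Real.log (hZ.1.eigenvalues i) := by
  rw [hZ.1.det_eq_prod_eigenvalues, norm_prod,
    Real.log_prod (fun i _ => by simpa using (hZ.eigenvalues_pos i).ne')]
  simp

lemma log_norm_det_le {Z : Matrix κ κ ℂ} (hZ : Z.PosDef) {c : ℝ} (hc : 0 < c) :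
    Real.log ‖Z.det‖ ≤ Z.trace.re / c - Fintype.card κ + Fintype.card κ * Real.log c := by
  have hlog : ∀ i, Real.log (hZ.1.eigenvalues i) ≤ hZ.1.eigenvalues i / c - 1 + Real.log c := by
    intro i
    have := Real.log_le_sub_one_of_pos (div_pos (hZ.eigenvalues_pos i) hc)
    rw [Real.log_div (hZ.eigenvalues_pos i).ne' hc.ne'] at this
    linarith
  rw [log_norm_det_eq_sum hZ, hZ.1.trace_eq_sum_eigenvalues]
  refine (Finset.sum_le_sum fun i _ => hlog i).trans (le_of_eq ?_)
  simp [Finset.sum_add_distrib, Finset.sum_sub_distrib, Finset.sum_div]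

end Gram

section Convexity

variable {ι κ : Type*} [Fintype ι] [Fintype κ] [DecidableEq ι] [DecidableEq κ]

omit [Fintype κ] [DecidableEq κ] in
lemma conjTranspose_mul_diagonal_mul_apply_self (B : Matrix ι κ ℂ) (f : ι → ℝ) (j : κ) :
    (Bᴴ * diagonal (fun i => (f i : ℂ)) * B) j j = ((∑ i, ‖B i j‖ ^ 2 * f i : ℝ) : ℂ) := by
  rw [Matrix.mul_apply]
  push_cast
  refine Finset.sum_congr rfl fun i _ => ?_
  rw [Matrix.mul_diagonal, conjTranspose_apply, ← Complex.conj_mul', Complex.star_def]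
  ring

omit [Fintype κ] [DecidableEq ι] in
lemma sum_norm_sq_col_of_isometry {B : Matrix ι κ ℂ} (hB : Bᴴ * B = 1) (j : κ) :
    ∑ i, ‖B i j‖ ^ 2 = 1 := by
  classical
  have h := conjTranspose_mul_diagonal_mul_apply_self B (fun _ => 1) j
  simp only [Complex.ofReal_one, mul_one, diagonal_one, hB, Matrix.mul_one, one_apply_eq] at h
  exact_mod_cast h.symm

lemma trace_log_diagonal_le_sum_log {B : Matrix ι κ ℂ} (hB : Bᴴ * B = 1) {h : ι → ℝ}
    (hpos : ∀ i, 0 < h i) {lam : κ → ℝ}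
    (hlam : Bᴴ * diagonal (fun i => (h i : ℂ)) * B = diagonal fun j => (lam j : ℂ)) :
    (Bᴴ * diagonal (fun i => (Real.log (h i) : ℂ)) * B).trace.re ≤ ∑ j, Real.log (lam j) := by
  rw [Matrix.trace, Complex.re_sum]
  refine Finset.sum_le_sum fun j _ => ?_
  have hj : lam j = ∑ i, ‖B i j‖ ^ 2 * h i := by
    have := conjTranspose_mul_diagonal_mul_apply_self B h j
    rw [hlam, diagonal_apply_eq] at this
    exact_mod_cast this
  rw [diag_apply, conjTranspose_mul_diagonal_mul_apply_self, Complex.ofReal_re, hj]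
  simpa using strictConcaveOn_log_Ioi.concaveOn.le_map_sum (t := Finset.univ)
    (w := fun i => ‖B i j‖ ^ 2) (p := h) (fun i _ => by positivity)
    (sum_norm_sq_col_of_isometry hB j) (fun i _ => hpos i)

omit [DecidableEq ι] in
lemma exists_isometry_diagonal {A : Matrix ι κ ℂ} (hA : (Aᴴ * A).PosDef) {W : Matrix ι ι ℂ}
    (hW : W.IsHermitian) :
    ∃ (Q : Matrix ι κ ℂ) (R : Matrix κ κ ℂ) (lam : κ → ℝ), Qᴴ * Q = 1 ∧ IsUnit R ∧ A = Q * R ∧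
      Qᴴ * W * Q = diagonal fun j => (lam j : ℂ) := by
  obtain ⟨Q, R, hQ, hR, rfl⟩ := exists_isometry hA
  have hZ := isHermitian_conjTranspose_mul_mul Q hW
  obtain ⟨U, hU, hZU⟩ := exists_unitary_diagonal hZ
  have hU' : U * Uᴴ = 1 := mul_eq_one_comm.1 hU
  refine ⟨Q * U, Uᴴ * R, hZ.eigenvalues, ?_, (IsUnit.of_mul_eq_one _ hU).mul hR, ?_, ?_⟩
  · rw [gram_mul_right, hQ, Matrix.mul_one, hU]
  · rw [Matrix.mul_assoc, ← Matrix.mul_assoc U, hU', Matrix.one_mul]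
  · calc (Q * U)ᴴ * W * (Q * U) = Uᴴ * (Qᴴ * W * Q) * U := by
          simp only [conjTranspose_mul, Matrix.mul_assoc]
      _ = (Uᴴ * U) * diagonal (fun j => (hZ.eigenvalues j : ℂ)) * (Uᴴ * U) := by
          conv_lhs => rw [hZU]
          simp only [Matrix.mul_assoc]
      _ = _ := by rw [hU, Matrix.one_mul, Matrix.mul_one]

/-- The logarithm of the Gram determinant is convex along the geodesics of the symmetric space of
positive definite matrices, hence lies above its tangent. -/
lemma logGram_add_trace_le_logGram_mul {A : Matrix ι κ ℂ} (hA : (Aᴴ * A).PosDef)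
    {g V : Matrix ι ι ℂ} (hV : Vᴴ * V = 1) {h : ι → ℝ} (hpos : ∀ i, 0 < h i)
    (hgV : gᴴ * g = V * diagonal (fun i => (h i : ℂ)) * Vᴴ) :
    logGram A + (colProj A * (V * diagonal (fun i => (Real.log (h i) : ℂ)) * Vᴴ)).trace.re ≤
      logGram (g * A) := by
  have hV' : V * Vᴴ = 1 := mul_eq_one_comm.1 hV
  have hg : IsUnit g := by
    have hdiag : IsUnit (diagonal fun i => (h i : ℂ)) := by
      rw [Matrix.isUnit_diagonal, Pi.isUnit_iff]
      exact fun i => isUnit_iff_ne_zero.2 (by exact_mod_cast (hpos i).ne')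
    refine isUnit_of_mul_isUnit_right (x := gᴴ) (hgV ▸ ?_)
    exact ((IsUnit.of_mul_eq_one _ hV').mul hdiag).mul (IsUnit.of_mul_eq_one _ hV)
  obtain ⟨Q, R, lam, hQ, hR, rfl, hlam⟩ :=
    exists_isometry_diagonal hA (Matrix.isHermitian_conjTranspose_mul_self g)
  have hQ1 := posDef_gram_of_isometry hQ
  have hgQ := posDef_gram_mul_left (Matrix.mulVec_injective_of_isUnit hg) hQ1
  have hgram : (g * Q)ᴴ * (g * Q) = diagonal fun j => (lam j : ℂ) := by
    rw [← hlam]; simp only [conjTranspose_mul, Matrix.mul_assoc]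
  have hlogGram : logGram (g * Q) = ∑ j, Real.log (lam j) := by
    have hne := det_gram_ne_zero hgQ
    rw [logGram, hgram, det_diagonal, norm_prod]
    rw [hgram, det_diagonal, Finset.prod_ne_zero_iff] at hne
    rw [Real.log_prod fun j hj => norm_ne_zero_iff.2 (hne j hj)]
    simp
  have hB : (Vᴴ * Q)ᴴ * (Vᴴ * Q) = 1 := by
    rw [conjTranspose_mul, conjTranspose_conjTranspose, Matrix.mul_assoc, ← Matrix.mul_assoc V,
      hV', Matrix.one_mul, hQ]
  have key := trace_log_diagonal_le_sum_log hB hpos (lam := lam) (by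
    rw [← hlam, hgV]; simp only [conjTranspose_mul, conjTranspose_conjTranspose, Matrix.mul_assoc])
  rw [← Matrix.mul_assoc g, logGram_mul_right hQ1 hR, logGram_mul_right hgQ hR,
    colProj_mul_right _ hR, colProj_of_isometry hQ, logGram_of_isometry hQ, hlogGram,
    Matrix.mul_assoc Q, Matrix.trace_mul_comm]
  simp only [conjTranspose_mul, conjTranspose_conjTranspose, Matrix.mul_assoc] at key ⊢
  linarith

lemma posSemidef_one_sub_mul_conjTranspose {Q : Matrix ι κ ℂ} (hQ : Qᴴ * Q = 1) :
    (1 - Q * Qᴴ).PosSemidef := by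
  have hidem : Q * Qᴴ * (Q * Qᴴ) = Q * Qᴴ := by
    rw [Matrix.mul_assoc, ← Matrix.mul_assoc Qᴴ, hQ, Matrix.one_mul]
  have h : (1 - Q * Qᴴ)ᴴ * (1 - Q * Qᴴ) = 1 - Q * Qᴴ := by
    simp [Matrix.sub_mul, Matrix.mul_sub, hidem]
  exact h ▸ posSemidef_conjTranspose_mul_self _

omit [DecidableEq ι] in
lemma trace_gram_conjTranspose_mul_le {Q Q' : Matrix ι κ ℂ} (hQ : Qᴴ * Q = 1)
    (hQ' : Q'ᴴ * Q' = 1) : ((Qᴴ * Q')ᴴ * (Qᴴ * Q')).trace.re ≤ Fintype.card κ := by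
  classical
  have h := ((posSemidef_one_sub_mul_conjTranspose hQ).conjTranspose_mul_mul_same Q').trace_nonneg
  have e : Q'ᴴ * (1 - Q * Qᴴ) * Q' = 1 - (Qᴴ * Q')ᴴ * (Qᴴ * Q') := by
    rw [Matrix.mul_sub, Matrix.sub_mul, Matrix.mul_one, hQ']
    simp only [conjTranspose_mul, conjTranspose_conjTranspose, Matrix.mul_assoc]
  rw [e, trace_sub, trace_one] at h
  have := (Complex.le_def.1 h).1
  rw [Complex.sub_re, Complex.natCast_re, Complex.zero_re] at this
  linarith

omit [DecidableEq ι] in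
lemma two_mul_log_norm_det_le {A B : Matrix ι κ ℂ} (hA : (Aᴴ * A).PosDef)
    (hB : (Bᴴ * B).PosDef) (hAB : (Aᴴ * B).det ≠ 0) :
    2 * Real.log ‖(Aᴴ * B).det‖ ≤ logGram A + logGram B := by
  obtain ⟨Q, R, hQ, hR, rfl⟩ := exists_isometry hA
  obtain ⟨Q', R', hQ', hR', rfl⟩ := exists_isometry hB
  have hRd : R.det ≠ 0 := ((Matrix.isUnit_iff_isUnit_det R).1 hR).ne_zero
  have hRd' : R'.det ≠ 0 := ((Matrix.isUnit_iff_isUnit_det R').1 hR').ne_zero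
  have hmul : (Q * R)ᴴ * (Q' * R') = Rᴴ * (Qᴴ * Q') * R' := by
    simp only [conjTranspose_mul, Matrix.mul_assoc]
  rw [hmul, det_mul, det_mul, det_conjTranspose] at hAB ⊢
  have hd : (Qᴴ * Q').det ≠ 0 := fun h => hAB (by simp [h])
  have hu : IsUnit (Qᴴ * Q') := (Matrix.isUnit_iff_isUnit_det _).2 (isUnit_iff_ne_zero.2 hd)
  have hlog := log_norm_det_le (Matrix.PosDef.conjTranspose_mul_self (Qᴴ * Q')
    (Matrix.mulVec_injective_of_isUnit hu)) one_pos
  rw [det_mul, det_conjTranspose, norm_mul, norm_star,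
    Real.log_mul (by positivity) (by positivity), div_one, Real.log_one, mul_zero] at hlog
  rw [logGram_mul_right (posDef_gram_of_isometry hQ) hR,
    logGram_mul_right (posDef_gram_of_isometry hQ') hR', logGram_of_isometry hQ,
    logGram_of_isometry hQ', norm_mul, norm_mul, norm_star,
    Real.log_mul (by positivity) (by positivity), Real.log_mul (by positivity) (by positivity)]
  linarith [trace_gram_conjTranspose_mul_le hQ hQ']

end Convexity

section Exponential

variable {𝔸 : Type*} [NormedRing 𝔸] [NormedAlgebra ℂ 𝔸] [CompleteSpace 𝔸]

lemma norm_exp_sub_one_le (x : 𝔸) : ‖NormedSpace.exp x - 1‖ ≤ Real.exp ‖x‖ - 1 := by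
  have h1 := (hasSum_nat_add_iff' 1).2 (NormedSpace.exp_series_hasSum_exp' (𝕂 := ℂ) x)
  have h2 := (hasSum_nat_add_iff' 1).2 (NormedSpace.exp_series_hasSum_exp' (𝕂 := ℝ) ‖x‖)
  rw [← Real.exp_eq_exp_ℝ] at h2
  simp only [Finset.sum_range_one, pow_zero, Nat.factorial_zero, Nat.cast_one, inv_one,
    one_smul] at h1 h2
  refine h1.norm_le_of_bounded h2 fun n => ?_
  rw [norm_smul, norm_inv, smul_eq_mul, Complex.norm_natCast]
  gcongr
  exact norm_pow_le' x (Nat.succ_pos n)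

lemma norm_exp_sub_one_sub_id_le (x : 𝔸) :
    ‖NormedSpace.exp x - 1 - x‖ ≤ Real.exp ‖x‖ - 1 - ‖x‖ := by
  have h1 := (hasSum_nat_add_iff' 2).2 (NormedSpace.exp_series_hasSum_exp' (𝕂 := ℂ) x)
  have h2 := (hasSum_nat_add_iff' 2).2 (NormedSpace.exp_series_hasSum_exp' (𝕂 := ℝ) ‖x‖)
  rw [← Real.exp_eq_exp_ℝ] at h2
  simp only [Finset.sum_range_succ, Finset.sum_range_zero, zero_add, pow_zero, pow_one,
    Nat.factorial_zero, Nat.factorial_one, Nat.cast_one, inv_one, one_smul, ← sub_sub] at h1 h2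
  refine h1.norm_le_of_bounded h2 fun n => ?_
  rw [norm_smul, norm_inv, smul_eq_mul, Complex.norm_natCast]
  gcongr
  exact norm_pow_le' x (Nat.succ_pos _)

end Exponential

section Frobenius

variable {ι κ : Type*} [Fintype ι] [Fintype κ]

lemma frobenius_norm_sq (X : Matrix ι κ ℂ) : ‖X‖ ^ 2 = ∑ i, ∑ j, ‖X i j‖ ^ 2 := by
  rw [frobenius_norm_def, ← Real.sqrt_eq_rpow, Real.sq_sqrt (by positivity)]
  simp

lemma trace_conjTranspose_mul_self_re (X : Matrix ι κ ℂ) : (Xᴴ * X).trace.re = ‖X‖ ^ 2 := by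
  rw [frobenius_norm_sq, Finset.sum_comm, Matrix.trace, Complex.re_sum]
  refine Finset.sum_congr rfl fun j _ => ?_
  rw [diag_apply, Matrix.mul_apply, Complex.re_sum]
  refine Finset.sum_congr rfl fun i _ => ?_
  rw [conjTranspose_apply, Complex.star_def, Complex.conj_mul']
  norm_cast

lemma norm_apply_le_frobenius_norm (X : Matrix ι κ ℂ) (i : ι) (j : κ) : ‖X i j‖ ≤ ‖X‖ := by
  refine (sq_le_sq₀ (norm_nonneg _) (norm_nonneg _)).1 ?_
  rw [frobenius_norm_sq]
  refine le_trans ?_ (Finset.single_le_sum (fun i _ => by positivity) (Finset.mem_univ i))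
  exact Finset.single_le_sum (f := fun j => ‖X i j‖ ^ 2) (fun j _ => by positivity)
    (Finset.mem_univ j)

lemma norm_isometry_mul [DecidableEq ι] {ι' : Type*} [Fintype ι'] {U : Matrix ι' ι ℂ}
    (hU : Uᴴ * U = 1) (X : Matrix ι κ ℂ) : ‖U * X‖ = ‖X‖ := by
  refine (sq_eq_sq₀ (norm_nonneg _) (norm_nonneg _)).1 ?_
  rw [← trace_conjTranspose_mul_self_re, ← trace_conjTranspose_mul_self_re, conjTranspose_mul,
    Matrix.mul_assoc, ← Matrix.mul_assoc Uᴴ, hU, Matrix.one_mul]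

lemma abs_trace_mul_re_le (X : Matrix ι κ ℂ) (Y : Matrix κ ι ℂ) :
    |(X * Y).trace.re| ≤ ‖X‖ * ‖Y‖ := by
  have hX : ‖X‖ = √(∑ x : ι × κ, ‖X x.1 x.2‖ ^ 2) := by
    rw [← Real.sqrt_sq (norm_nonneg X), frobenius_norm_sq, Fintype.sum_prod_type]
  have hY : ‖Y‖ = √(∑ x : ι × κ, ‖Y x.2 x.1‖ ^ 2) := by
    rw [← Real.sqrt_sq (norm_nonneg Y), frobenius_norm_sq, Fintype.sum_prod_type_right]
  have htrace : (X * Y).trace = ∑ x : ι × κ, X x.1 x.2 * Y x.2 x.1 := by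
    rw [Fintype.sum_prod_type]
    simp [Matrix.trace, Matrix.mul_apply]
  calc |(X * Y).trace.re| ≤ ‖∑ x : ι × κ, X x.1 x.2 * Y x.2 x.1‖ :=
        htrace ▸ Complex.abs_re_le_norm _
    _ ≤ ∑ x : ι × κ, ‖X x.1 x.2‖ * ‖Y x.2 x.1‖ :=
        (norm_sum_le _ _).trans_eq (Finset.sum_congr rfl fun _ _ => norm_mul _ _)
    _ ≤ ‖X‖ * ‖Y‖ := hX ▸ hY ▸ Real.sum_mul_le_sqrt_mul_sqrt _ _ _

lemma trace_conjTranspose_re (X : Matrix ι ι ℂ) : Xᴴ.trace.re = X.trace.re := by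
  rw [trace_conjTranspose, Complex.star_def, Complex.conj_re]

variable [DecidableEq κ]

lemma norm_sq_of_isometry {Q : Matrix ι κ ℂ} (hQ : Qᴴ * Q = 1) : ‖Q‖ ^ 2 = Fintype.card κ := by
  rw [← trace_conjTranspose_mul_self_re, hQ]; simp

lemma norm_mul_conjTranspose_le_of_isometry {Q : Matrix ι κ ℂ} (hQ : Qᴴ * Q = 1) :
    ‖Q * Qᴴ‖ ≤ Fintype.card κ := by
  rw [← norm_sq_of_isometry hQ, sq]
  exact (frobenius_norm_mul _ _).trans_eq (by rw [frobenius_norm_conjTranspose])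

variable [DecidableEq ι]

omit [DecidableEq κ] in
lemma norm_exp_mul_le (η : Matrix ι ι ℂ) (A : Matrix ι κ ℂ) :
    ‖NormedSpace.exp η * A‖ ≤ Real.exp ‖η‖ * ‖A‖ := by
  have hsplit : NormedSpace.exp η * A = (NormedSpace.exp η - 1) * A + A := by
    rw [Matrix.sub_mul, Matrix.one_mul, sub_add_cancel]
  rw [hsplit]
  calc ‖(NormedSpace.exp η - 1) * A + A‖ ≤ ‖NormedSpace.exp η - 1‖ * ‖A‖ + ‖A‖ :=
        (norm_add_le _ _).trans (add_le_add_left (frobenius_norm_mul _ _) _)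
    _ ≤ (Real.exp ‖η‖ - 1) * ‖A‖ + ‖A‖ := by gcongr; exact norm_exp_sub_one_le η
    _ = Real.exp ‖η‖ * ‖A‖ := by ring

omit [DecidableEq κ] in
lemma posDef_gram_exp_mul (η : Matrix ι ι ℂ) {A : Matrix ι κ ℂ} (hA : (Aᴴ * A).PosDef) :
    ((NormedSpace.exp η * A)ᴴ * (NormedSpace.exp η * A)).PosDef :=
  posDef_gram_mul_left (Matrix.mulVec_injective_of_isUnit (Matrix.isUnit_exp η)) hA

lemma norm_sq_exp_mul_isometry_le {Q : Matrix ι κ ℂ} (hQ : Qᴴ * Q = 1) {η : Matrix ι ι ℂ}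
    (hη : ‖η‖ ≤ 1) :
    ‖NormedSpace.exp η * Q‖ ^ 2 ≤
      Fintype.card κ + 2 * (Q * Qᴴ * η).trace.re + 6 * Fintype.card κ * ‖η‖ ^ 2 := by
  set R := NormedSpace.exp η - 1 - η with hR
  have hRη : ‖R‖ ≤ ‖η‖ ^ 2 := (norm_exp_sub_one_sub_id_le η).trans ((le_abs_self _).trans
    (Real.abs_exp_sub_one_sub_id_le (by rwa [abs_of_nonneg (norm_nonneg η)])))
  have hsum : ‖η + R‖ ≤ 2 * ‖η‖ := by
    nlinarith [norm_add_le η R, norm_nonneg η]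
  have hcross : (Qᴴ * ((η + R) * Q)).trace.re =
      (Q * Qᴴ * η).trace.re + (Q * Qᴴ * R).trace.re := by
    rw [← Matrix.mul_assoc, Matrix.trace_mul_comm, ← Matrix.mul_assoc, Matrix.mul_add, trace_add,
      Complex.add_re]
  have hcross' : (((η + R) * Q)ᴴ * Q).trace.re = (Qᴴ * ((η + R) * Q)).trace.re := by
    rw [← trace_conjTranspose_re, conjTranspose_mul, conjTranspose_conjTranspose]
  have hexpand : ‖NormedSpace.exp η * Q‖ ^ 2 = Fintype.card κ +
      2 * ((Q * Qᴴ * η).trace.re + (Q * Qᴴ * R).trace.re) + ‖(η + R) * Q‖ ^ 2 := by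
    have hexp : NormedSpace.exp η * Q = Q + (η + R) * Q := by
      rw [hR, Matrix.add_mul, Matrix.sub_mul, Matrix.sub_mul, Matrix.one_mul]; abel
    rw [← trace_conjTranspose_mul_self_re, ← trace_conjTranspose_mul_self_re ((η + R) * Q), hexp,
      conjTranspose_add, Matrix.add_mul, Matrix.mul_add, Matrix.mul_add, hQ, trace_add, trace_add,
      trace_add, Complex.add_re, Complex.add_re, Complex.add_re, hcross', hcross, trace_one,
      Complex.natCast_re]
    ring
  have hlinear : (Q * Qᴴ * R).trace.re ≤ Fintype.card κ * ‖η‖ ^ 2 :=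
    (le_abs_self _).trans ((abs_trace_mul_re_le _ _).trans (mul_le_mul
      (norm_mul_conjTranspose_le_of_isometry hQ) hRη (norm_nonneg _) (Nat.cast_nonneg _)))
  have hquad : ‖(η + R) * Q‖ ^ 2 ≤ 4 * Fintype.card κ * ‖η‖ ^ 2 :=
    calc ‖(η + R) * Q‖ ^ 2 ≤ (2 * ‖η‖ * ‖Q‖) ^ 2 := by
          gcongr
          exact (frobenius_norm_mul _ _).trans (by gcongr)
      _ = 4 * Fintype.card κ * ‖η‖ ^ 2 := by rw [← norm_sq_of_isometry hQ]; ring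
  linarith

lemma logGram_exp_mul_isometry_le {Q : Matrix ι κ ℂ} (hQ : Qᴴ * Q = 1) (η : Matrix ι ι ℂ) :
    logGram (NormedSpace.exp η * Q) ≤
      2 * (Q * Qᴴ * η).trace.re + 6 * Fintype.card κ * ‖η‖ ^ 2 := by
  have hlog : ∀ c : ℝ, 0 < c → logGram (NormedSpace.exp η * Q) ≤
      ‖NormedSpace.exp η * Q‖ ^ 2 / c - Fintype.card κ + Fintype.card κ * Real.log c := by
    intro c hc
    rw [← trace_conjTranspose_mul_self_re]
    exact log_norm_det_le (posDef_gram_exp_mul η (posDef_gram_of_isometry hQ)) hc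
  rcases le_total ‖η‖ 1 with h | h
  · have := hlog 1 one_pos
    rw [Real.log_one, div_one] at this
    linarith [norm_sq_exp_mul_isometry_le hQ h]
  · have hgrowth : logGram (NormedSpace.exp η * Q) ≤ Fintype.card κ * (2 * ‖η‖) := by
      have hnorm : ‖NormedSpace.exp η * Q‖ ^ 2 ≤ Fintype.card κ * Real.exp (2 * ‖η‖) := by
        calc ‖NormedSpace.exp η * Q‖ ^ 2 ≤ (Real.exp ‖η‖ * ‖Q‖) ^ 2 := by
              gcongr; exact norm_exp_mul_le η Q
          _ = Fintype.card κ * Real.exp (2 * ‖η‖) := by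
              rw [mul_pow, norm_sq_of_isometry hQ, mul_comm, ← Real.exp_nat_mul, Nat.cast_ofNat]
      have := hlog _ (Real.exp_pos (2 * ‖η‖))
      rw [Real.log_exp] at this
      linarith [(div_le_iff₀ (Real.exp_pos (2 * ‖η‖))).2 hnorm]
    have htrace : -(Q * Qᴴ * η).trace.re ≤ Fintype.card κ * ‖η‖ :=
      (neg_le_abs _).trans ((abs_trace_mul_re_le _ _).trans
        (mul_le_mul_of_nonneg_right (norm_mul_conjTranspose_le_of_isometry hQ) (norm_nonneg η)))
    have hsq : Fintype.card κ * ‖η‖ ≤ Fintype.card κ * ‖η‖ ^ 2 :=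
      mul_le_mul_of_nonneg_left (by nlinarith) (Nat.cast_nonneg _)
    have : 0 ≤ Fintype.card κ * ‖η‖ ^ 2 := by positivity
    linarith

lemma logGram_exp_mul_le (η : Matrix ι ι ℂ) {A : Matrix ι κ ℂ} (hA : (Aᴴ * A).PosDef) :
    logGram (NormedSpace.exp η * A) ≤
      logGram A + 2 * (colProj A * η).trace.re + 6 * Fintype.card κ * ‖η‖ ^ 2 := by
  obtain ⟨Q, R, hQ, hR, rfl⟩ := exists_isometry hA
  have hQ1 := posDef_gram_of_isometry hQ
  rw [← Matrix.mul_assoc (NormedSpace.exp η), logGram_mul_right hQ1 hR,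
    logGram_mul_right (posDef_gram_exp_mul η hQ1) hR, colProj_mul_right _ hR,
    colProj_of_isometry hQ, logGram_of_isometry hQ]
  linarith [logGram_exp_mul_isometry_le hQ η]

end Frobenius

section Circle

lemma circleAverage_unit_mono {f g : ℂ → ℝ} (hf : ContinuousOn f (sphere 0 1))
    (hg : ContinuousOn g (sphere 0 1)) (h : ∀ z ∈ sphere (0 : ℂ) 1, f z ≤ g z) :
    Real.circleAverage f 0 1 ≤ Real.circleAverage g 0 1 :=
  Real.circleAverage_mono (hf.circleIntegrable zero_le_one) (hg.circleIntegrable zero_le_one)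
    (by simpa using h)

lemma circleAverage_unit_add {f g : ℂ → ℝ} (hf : ContinuousOn f (sphere 0 1))
    (hg : ContinuousOn g (sphere 0 1)) :
    Real.circleAverage (fun z => f z + g z) 0 1 =
      Real.circleAverage f 0 1 + Real.circleAverage g 0 1 :=
  Real.circleAverage_fun_add (hf.circleIntegrable zero_le_one) (hg.circleIntegrable zero_le_one)

lemma circleAverage_const_mul (a : ℝ) (f : ℂ → ℝ) :
    Real.circleAverage (fun z => a * f z) 0 1 = a * Real.circleAverage f 0 1 :=
  Real.circleAverage_fun_smul (a := a) (f := f)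

lemma circleAverage_re {f : ℂ → ℂ} (hf : DiffContOnCl ℂ f (ball 0 1)) :
    Real.circleAverage (fun z => (f z).re) 0 1 = (f 0).re := by
  have hc : ContinuousOn f (sphere 0 1) :=
    hf.continuousOn_ball.mono Metric.sphere_subset_closedBall
  rw [← congrArg Complex.re (DiffContOnCl.circleAverage (R := 1) (by simpa using hf))]
  exact Complex.reCLM.circleAverage_comp_comm (hc.circleIntegrable zero_le_one)

lemma exists_entire_eq_of_mem_span_fourier {T : ℝ} {g : C(AddCircle T, ℂ)}
    (hg : g ∈ Submodule.span ℂ (Set.range (@fourier T))) :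
    ∃ α β : ℂ → ℂ, Differentiable ℂ α ∧ Differentiable ℂ β ∧
      ∀ x, g x = α (AddCircle.toCircle x) + star (β (AddCircle.toCircle x)) := by
  induction hg using Submodule.span_induction with
  | mem g hg =>
    obtain ⟨n, rfl⟩ := hg
    obtain ⟨m, rfl | rfl⟩ := Int.eq_nat_or_neg n
    · exact ⟨fun z => z ^ m, 0, by fun_prop, by fun_prop, fun x => by
        simp [AddCircle.toCircle_nsmul]⟩
    · exact ⟨0, fun z => z ^ m, by fun_prop, by fun_prop, fun x => by
        simp [AddCircle.toCircle_nsmul, AddCircle.toCircle_neg, ← Circle.coe_inv_eq_conj]⟩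
  | zero => exact ⟨0, 0, by fun_prop, by fun_prop, by simp⟩
  | add g₁ g₂ _ _ h₁ h₂ =>
    obtain ⟨α₁, β₁, hα₁, hβ₁, e₁⟩ := h₁
    obtain ⟨α₂, β₂, hα₂, hβ₂, e₂⟩ := h₂
    refine ⟨α₁ + α₂, β₁ + β₂, hα₁.add hα₂, hβ₁.add hβ₂, fun x => ?_⟩
    simp only [ContinuousMap.add_apply, e₁, e₂, Pi.add_apply, star_add]
    ring
  | smul c g _ h =>
    obtain ⟨α, β, hα, hβ, e⟩ := h
    refine ⟨c • α, star c • β, hα.const_smul c, hβ.const_smul _, fun x => ?_⟩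
    simp [e, mul_add]

lemma exists_entire_approx {f : ℂ → ℂ} (hf : ContinuousOn f (sphere 0 1)) {ε : ℝ} (hε : 0 < ε) :
    ∃ α β : ℂ → ℂ, Differentiable ℂ α ∧ Differentiable ℂ β ∧
      ∀ z ∈ sphere (0 : ℂ) 1, ‖α z + star (β z) - f z‖ ≤ ε := by
  have : Fact (0 < 2 * Real.pi) := ⟨by positivity⟩
  let F : C(AddCircle (2 * Real.pi), ℂ) := ⟨fun x => f (AddCircle.toCircle x),
    hf.comp_continuous (continuous_subtype_val.comp AddCircle.continuous_toCircle)
      fun x => mem_sphere_zero_iff_norm.2 (Circle.norm_coe _)⟩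
  have hF : F ∈ closure (Submodule.span ℂ (Set.range (@fourier (2 * Real.pi))) : Set _) := by
    rw [← Submodule.topologicalClosure_coe, span_fourier_closure_eq_top]
    trivial
  obtain ⟨G, hG, hFG⟩ := Metric.mem_closure_iff.1 hF ε hε
  obtain ⟨α, β, hα, hβ, hGαβ⟩ := exists_entire_eq_of_mem_span_fourier hG
  refine ⟨α, β, hα, hβ, fun z hz => ?_⟩
  obtain ⟨x, hx⟩ := (AddCircle.homeomorphCircle (T := 2 * Real.pi) (by positivity)).surjective
    ⟨z, by simpa [Submonoid.unitSphere] using hz⟩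
  obtain rfl : (AddCircle.toCircle x : ℂ) = z := by
    rw [AddCircle.homeomorphCircle_apply] at hx
    rw [hx]
  rw [← hGαβ, ← dist_eq_norm, dist_comm]
  exact (ContinuousMap.dist_apply_le_dist x).trans hFG.le

lemma exists_entire_re_approx {f : ℂ → ℝ} (hf : ContinuousOn f (sphere 0 1)) {ε : ℝ}
    (hε : 0 < ε) : ∃ q : ℂ → ℂ, Differentiable ℂ q ∧
      ∀ z ∈ sphere (0 : ℂ) 1, |(q z).re - f z| ≤ ε := by
  obtain ⟨α, β, hα, hβ, h⟩ := exists_entire_approx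
    (Complex.continuous_ofReal.comp_continuousOn hf) hε
  refine ⟨α + β, hα.add hβ, fun z hz => ?_⟩
  simpa using (Complex.abs_re_le_norm _).trans (h z hz)

lemma log_norm_le_circleAverage {F : ℂ → ℂ} (hF : DiffContOnCl ℂ F (ball 0 1)) {u : ℂ → ℝ}
    (hu : ContinuousOn u (sphere 0 1)) (h0 : F 0 ≠ 0)
    (h : ∀ z ∈ sphere (0 : ℂ) 1, F z ≠ 0 → Real.log ‖F z‖ ≤ u z) :
    Real.log ‖F 0‖ ≤ Real.circleAverage u 0 1 := by
  refine le_of_forall_pos_le_add fun ε hε => ?_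
  obtain ⟨q, hq, hqu⟩ := exists_entire_re_approx hu (half_pos hε)
  have hdiff : DiffContOnCl ℂ (fun z => F z * Complex.exp (-q z)) (ball 0 1) :=
    hF.smul (Differentiable.diffContOnCl (by fun_prop))
  have hbound : ∀ z ∈ frontier (ball (0 : ℂ) 1),
      ‖F z * Complex.exp (-q z)‖ ≤ Real.exp (ε / 2) := by
    intro z hz
    rw [frontier_ball _ one_ne_zero] at hz
    by_cases hFz : F z = 0
    · rw [hFz, zero_mul, norm_zero]; positivity
    rw [norm_mul, Complex.norm_exp, Complex.neg_re, ← Real.exp_log (norm_pos_iff.2 hFz),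
      ← Real.exp_add]
    exact Real.exp_le_exp.2 (by linarith [h z hz hFz, (abs_le.1 (hqu z hz)).1])
  have hmax := Complex.norm_le_of_forall_mem_frontier_norm_le Metric.isBounded_ball hdiff hbound
    (z := 0) (subset_closure (by simp))
  rw [norm_mul, Complex.norm_exp, Complex.neg_re, ← Real.exp_log (norm_pos_iff.2 h0),
    ← Real.exp_add, Real.exp_le_exp] at hmax
  have hmean : (q 0).re ≤ Real.circleAverage u 0 1 + ε / 2 := by
    rw [← circleAverage_re hq.diffContOnCl, ← Real.circleAverage_const (ε / 2) (0 : ℂ) 1,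
      ← circleAverage_unit_add hu continuousOn_const]
    exact circleAverage_unit_mono (Complex.continuous_re.comp hq.continuous).continuousOn
      (hu.add continuousOn_const) fun z hz => by linarith [(abs_le.1 (hqu z hz)).2]
  linarith

end Circle

section MatrixCircle

variable {ι κ : Type*} [Fintype ι] [Fintype κ]

lemma differentiable_apply (i : ι) (j : κ) : Differentiable ℂ fun M : Matrix ι κ ℂ => M i j :=
  (LinearMap.toContinuousLinearMap (Matrix.entryLinearMap ℂ ℂ i j)).differentiable

lemma differentiable_trace : Differentiable ℂ fun M : Matrix ι ι ℂ => M.trace :=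
  (LinearMap.toContinuousLinearMap (Matrix.traceLinearMap ι ℂ ℂ)).differentiable

lemma differentiable_matrix_mul {κ' : Type*} [Fintype κ'] :
    Differentiable ℂ fun M : Matrix ι κ ℂ × Matrix κ κ' ℂ => M.1 * M.2 :=
  (LinearMap.mk₂ ℂ (fun (M : Matrix ι κ ℂ) (N : Matrix κ κ' ℂ) => M * N) Matrix.add_mul
    Matrix.smul_mul Matrix.mul_add fun c M N =>
      Matrix.mul_smul M c N).toContinuousBilinearMap.isBoundedBilinearMap.differentiable

lemma diffContOnCl_matrix_mul {κ' : Type*} [Fintype κ'] {M : ℂ → Matrix ι κ ℂ}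
    {N : ℂ → Matrix κ κ' ℂ} {s : Set ℂ} (hM : DiffContOnCl ℂ M s) (hN : DiffContOnCl ℂ N s) :
    DiffContOnCl ℂ (fun z => M z * N z) s :=
  differentiable_matrix_mul.comp_diffContOnCl (g := fun z => (M z, N z))
    ⟨hM.differentiableOn.prodMk hN.differentiableOn, hM.continuousOn.prodMk hN.continuousOn⟩

lemma differentiable_det [DecidableEq κ] : Differentiable ℂ fun M : Matrix κ κ ℂ => M.det := by
  simp only [Matrix.det_apply]
  refine Differentiable.fun_sum fun σ _ => Differentiable.const_smul (fun M => ?_) _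
  exact (HasFDerivAt.finsetProd (u := Finset.univ) (g := fun i (M : Matrix κ κ ℂ) => M (σ i) i)
    fun i _ => (differentiable_apply (σ i) i M).hasFDerivAt).differentiableAt

lemma differentiable_exp_comp [DecidableEq ι] {ξ : ℂ → Matrix ι ι ℂ} (hξ : Differentiable ℂ ξ) :
    Differentiable ℂ fun z => NormedSpace.exp (ξ z) := fun z =>
  (NormedSpace.exp_analytic (𝕂 := ℂ) (ξ z)).differentiableAt.comp z (hξ z)

lemma differentiable_of_apply {M : ℂ → Matrix ι κ ℂ}
    (hM : ∀ i j, Differentiable ℂ fun z => M z i j) : Differentiable ℂ M := by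
  classical
  have hsum : M = fun z => ∑ i, ∑ j, M z i j • Matrix.single i j (1 : ℂ) := by
    funext z
    conv_lhs => rw [Matrix.matrix_eq_sum_single (M z)]
    simp
  rw [hsum]
  exact Differentiable.fun_sum fun i _ => Differentiable.fun_sum fun j _ =>
    (hM i j).smul_const _

lemma continuousOn_logGram [DecidableEq κ] {X : Type*} [TopologicalSpace X] {s : Set X}
    {G : X → Matrix ι κ ℂ} (hG : ContinuousOn G s) (hs : ∀ x ∈ s, ((G x)ᴴ * G x).PosDef) :
    ContinuousOn (fun x => logGram (G x)) s := by
  have hdet : Continuous fun M : Matrix ι κ ℂ => (Mᴴ * M).det := by fun_prop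
  exact (hdet.comp_continuousOn hG).norm.log fun x hx =>
    norm_ne_zero_iff.2 (det_gram_ne_zero (hs x hx))

lemma continuousOn_colProj [DecidableEq κ] {X : Type*} [TopologicalSpace X] {s : Set X}
    {G : X → Matrix ι κ ℂ} (hG : ContinuousOn G s) (hs : ∀ x ∈ s, ((G x)ᴴ * G x).PosDef) :
    ContinuousOn (fun x => colProj (G x)) s := by
  have hgram : Continuous fun M : Matrix ι κ ℂ => Mᴴ * M := by fun_prop
  have hinv : ContinuousOn (fun x => ((G x)ᴴ * G x)⁻¹) s := by
    simp only [Matrix.inv_def, Ring.inverse_eq_inv']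
    have hdet : ContinuousOn (fun x => ((G x)ᴴ * G x).det⁻¹) s :=
      ((Continuous.matrix_det continuous_id).comp_continuousOn (hgram.comp_continuousOn hG)).inv₀
        fun x hx => det_gram_ne_zero (hs x hx)
    exact hdet.smul
      ((Continuous.matrix_adjugate continuous_id).comp_continuousOn (hgram.comp_continuousOn hG))
  have hprod : Continuous fun M : Matrix ι κ ℂ × Matrix κ κ ℂ => M.1 * M.2 * M.1ᴴ := by fun_prop
  have hcomp := hprod.comp_continuousOn (hG.prodMk hinv)
  simp only [Function.comp_def] at hcomp
  exact hcomp

/-- `det ((G 0)ᴴ * G z)` is holomorphic in `z`, and the Cauchy–Schwarz inequality bounds it with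
equality at `z = 0`. -/
lemma logGram_le_circleAverage [DecidableEq κ] {G : ℂ → Matrix ι κ ℂ}
    (hG : DiffContOnCl ℂ G (ball 0 1)) (h0 : ((G 0)ᴴ * G 0).PosDef)
    (hs : ∀ z ∈ sphere (0 : ℂ) 1, ((G z)ᴴ * G z).PosDef) :
    logGram (G 0) ≤ Real.circleAverage (fun z => logGram (G z)) 0 1 := by
  have hcont : ContinuousOn (fun z => logGram (G z)) (sphere 0 1) :=
    continuousOn_logGram (hG.continuousOn_ball.mono Metric.sphere_subset_closedBall) hs
  have hF : DiffContOnCl ℂ (fun z => ((G 0)ᴴ * G z).det) (ball 0 1) :=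
    differentiable_det.comp_diffContOnCl (diffContOnCl_matrix_mul diffContOnCl_const hG)
  have hmean := log_norm_le_circleAverage hF
    (u := fun z => (1 / 2) * (logGram (G 0) + logGram (G z)))
    (continuousOn_const.mul (continuousOn_const.add hcont)) (det_gram_ne_zero h0)
    fun z hz hne => by linarith [two_mul_log_norm_det_le h0 (hs z hz) hne]
  rw [circleAverage_const_mul, circleAverage_unit_add continuousOn_const hcont,
    Real.circleAverage_const] at hmean
  change logGram (G 0) ≤ _ at hmean
  linarith

lemma frobenius_norm_le_sum (X : Matrix ι κ ℂ) : ‖X‖ ≤ ∑ i, ∑ j, ‖X i j‖ := by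
  refine le_of_sq_le_sq ?_ (by positivity)
  rw [frobenius_norm_sq, ← Finset.sum_product', ← Finset.sum_product']
  exact Finset.sum_sq_le_sq_sum_of_nonneg fun _ _ => norm_nonneg _

lemma exists_entire_matrix_approx {m : ℂ → Matrix ι κ ℂ} (hm : ContinuousOn m (sphere 0 1))
    {ε : ℝ} (hε : 0 < ε) :
    ∃ (α : ℂ → Matrix ι κ ℂ) (β : ℂ → Matrix κ ι ℂ), Differentiable ℂ α ∧ Differentiable ℂ β ∧
      ∀ z ∈ sphere (0 : ℂ) 1, ‖α z + (β z)ᴴ - m z‖ ≤ ε := by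
  set N : ℝ := Fintype.card ι * Fintype.card κ
  have hδ : 0 < ε / (N + 1) := by positivity
  choose α β hα hβ h using fun i j => exists_entire_approx
    ((differentiable_apply i j).continuous.comp_continuousOn hm) hδ
  refine ⟨fun z i j => α i j z, fun z j i => β i j z, differentiable_of_apply hα,
    differentiable_of_apply fun j i => hβ i j, fun z hz => ?_⟩
  calc _ ≤ ∑ _i : ι, ∑ _j : κ, ε / (N + 1) := (frobenius_norm_le_sum _).trans
        (Finset.sum_le_sum fun i _ => Finset.sum_le_sum fun j _ => h i j z hz)
    _ = N * (ε / (N + 1)) := by simp [N, mul_assoc]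
    _ ≤ (N + 1) * (ε / (N + 1)) := by gcongr; linarith
    _ = ε := mul_div_cancel₀ ε (by positivity)

lemma exists_entire_add_conjTranspose_approx {m : ℂ → Matrix ι ι ℂ}
    (hm : ContinuousOn m (sphere 0 1)) (hmh : ∀ z ∈ sphere (0 : ℂ) 1, (m z).IsHermitian) {ε : ℝ}
    (hε : 0 < ε) :
    ∃ ξ : ℂ → Matrix ι ι ℂ, Differentiable ℂ ξ ∧ (ξ 0).IsHermitian ∧
      ∀ z ∈ sphere (0 : ℂ) 1, ‖ξ z + (ξ z)ᴴ - m z‖ ≤ ε := by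
  obtain ⟨α, β, hα, hβ, h⟩ := exists_entire_matrix_approx hm hε
  set η : ℂ → Matrix ι ι ℂ := fun z => (1 / 2 : ℂ) • (α z + β z) with hη
  have hstar : star (1 / 2 : ℂ) = 1 / 2 := by simp
  refine ⟨fun z => η z - (1 / 2 : ℂ) • (η 0 - (η 0)ᴴ), ?_, ?_, fun z hz => ?_⟩
  · exact ((hα.add hβ).const_smul (1 / 2 : ℂ)).sub_const _
  · simp only [Matrix.IsHermitian, conjTranspose_sub, conjTranspose_smul, hstar,
      conjTranspose_conjTranspose]
    module
  · have hsymm : η z - (1 / 2 : ℂ) • (η 0 - (η 0)ᴴ) + (η z - (1 / 2 : ℂ) • (η 0 - (η 0)ᴴ))ᴴ - m z =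
        (1 / 2 : ℂ) • ((α z + (β z)ᴴ - m z) + (α z + (β z)ᴴ - m z)ᴴ) := by
      simp only [hη, conjTranspose_sub, conjTranspose_smul, hstar, conjTranspose_conjTranspose,
        conjTranspose_add, (hmh z hz).eq]
      module
    have hle := norm_add_le (α z + (β z)ᴴ - m z) (α z + (β z)ᴴ - m z)ᴴ
    rw [frobenius_norm_conjTranspose] at hle
    rw [hsymm, norm_smul, show ‖(1 / 2 : ℂ)‖ = 1 / 2 by norm_num]
    linarith [h z hz]

lemma norm_add_conjTranspose_sq (X : Matrix ι ι ℂ) :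
    ‖X + Xᴴ‖ ^ 2 = 2 * ‖X‖ ^ 2 + 2 * (X * X).trace.re := by
  have h1 : (Xᴴ * Xᴴ).trace.re = (X * X).trace.re := by
    rw [← conjTranspose_mul, trace_conjTranspose_re]
  have h2 : (X * Xᴴ).trace.re = ‖X‖ ^ 2 := by
    rw [Matrix.trace_mul_comm, trace_conjTranspose_mul_self_re]
  rw [← trace_conjTranspose_mul_self_re, conjTranspose_add, conjTranspose_conjTranspose,
    Matrix.add_mul, Matrix.mul_add, Matrix.mul_add, trace_add, trace_add, trace_add,
    Complex.add_re, Complex.add_re, Complex.add_re, h1, h2, trace_conjTranspose_mul_self_re]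
  ring

lemma circleAverage_norm_sq_le {ξ : ℂ → Matrix ι ι ℂ} (hξ : Differentiable ℂ ξ)
    (h0 : (ξ 0).IsHermitian) :
    Real.circleAverage (fun z => ‖ξ z‖ ^ 2) 0 1 ≤
      1 / 2 * Real.circleAverage (fun z => ‖ξ z + (ξ z)ᴴ‖ ^ 2) 0 1 := by
  classical
  have hsq : Differentiable ℂ fun z => (ξ z * ξ z).trace :=
    differentiable_trace.comp (f := fun z => ξ z * ξ z) (hξ.mul hξ)
  have hpos : 0 ≤ (ξ 0 * ξ 0).trace.re := by
    nth_rewrite 1 [← h0.eq]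
    rw [trace_conjTranspose_mul_self_re]
    positivity
  have hsplit : (fun z => 1 / 2 * ‖ξ z + (ξ z)ᴴ‖ ^ 2) =
      fun z => ‖ξ z‖ ^ 2 + (ξ z * ξ z).trace.re := by
    funext z
    rw [norm_add_conjTranspose_sq]
    ring
  rw [← circleAverage_const_mul, hsplit,
    circleAverage_unit_add (f := fun z => ‖ξ z‖ ^ 2) (g := fun z => (ξ z * ξ z).trace.re)
      (hξ.continuous.norm.pow 2).continuousOn
      (Complex.continuous_re.comp hsq.continuous).continuousOn,
    circleAverage_re hsq.diffContOnCl]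
  linarith

lemma two_mul_norm_zero_le_circleAverage {ξ : ℂ → Matrix ι ι ℂ} (hξ : Differentiable ℂ ξ)
    (h0 : (ξ 0).IsHermitian) :
    2 * ‖ξ 0‖ ≤ Real.circleAverage (fun z => ‖ξ z + (ξ z)ᴴ‖) 0 1 := by
  have hpair : Differentiable ℂ fun z => (ξ 0 * ξ z).trace :=
    differentiable_trace.comp (f := fun z => ξ 0 * ξ z) (differentiable_matrix_mul.comp
      (f := fun z => (ξ 0, ξ z)) ((differentiable_const (ξ 0)).prodMk hξ))
  have hmean := circleAverage_re hpair.diffContOnCl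
  nth_rewrite 2 [← h0.eq] at hmean
  rw [trace_conjTranspose_mul_self_re] at hmean
  have hle : Real.circleAverage (fun z => (ξ 0 * ξ z).trace.re) 0 1 ≤
      Real.circleAverage (fun z => ‖ξ 0‖ / 2 * ‖ξ z + (ξ z)ᴴ‖) 0 1 := by
    have hsum : Continuous fun z => ξ z + (ξ z)ᴴ :=
      hξ.continuous.add hξ.continuous.matrix_conjTranspose
    refine circleAverage_unit_mono (Complex.continuous_re.comp hpair.continuous).continuousOn
      (continuous_const.mul hsum.norm).continuousOn fun z _ => ?_
    have hadj : (ξ 0 * (ξ z)ᴴ).trace.re = (ξ 0 * ξ z).trace.re := by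
      rw [← trace_conjTranspose_re, conjTranspose_mul, conjTranspose_conjTranspose, h0.eq,
        Matrix.trace_mul_comm]
    have := (le_abs_self _).trans (abs_trace_mul_re_le (ξ 0) (ξ z + (ξ z)ᴴ))
    rw [Matrix.mul_add, trace_add, Complex.add_re, hadj] at this
    linarith
  rw [hmean, circleAverage_const_mul] at hle
  rcases (norm_nonneg (ξ 0)).eq_or_lt with h | h
  · rw [← h, mul_zero]
    exact Real.circleAverage_nonneg_of_nonneg fun z _ => norm_nonneg _
  · nlinarith

end MatrixCircle

section FunctionalCalculus

variable {ι κ : Type*} [Fintype ι] [DecidableEq ι]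

lemma cfc_eq_mul_diagonal_mul {Z : Matrix ι ι ℂ} (hZ : Z.IsHermitian) (f : ℝ → ℝ) :
    cfc f Z = hZ.eigenvectorUnitary * diagonal (fun i => (f (hZ.eigenvalues i) : ℂ)) *
      (hZ.eigenvectorUnitary : Matrix ι ι ℂ)ᴴ :=
  hZ.cfc_eq f

lemma trace_cfc_re {Z : Matrix ι ι ℂ} (hZ : Z.IsHermitian) (f : ℝ → ℝ) :
    (cfc f Z).trace.re = ∑ i, f (hZ.eigenvalues i) := by
  have hU := Unitary.coe_star_mul_self hZ.eigenvectorUnitary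
  rw [star_eq_conjTranspose] at hU
  rw [cfc_eq_mul_diagonal_mul hZ, Matrix.trace_mul_comm, ← Matrix.mul_assoc, hU, Matrix.one_mul,
    trace_diagonal]
  simp

lemma continuousOn_real_spectrum (Z : Matrix ι ι ℂ) (f : ℝ → ℝ) : ContinuousOn f (spectrum ℝ Z) :=
  Matrix.finite_real_spectrum.continuousOn f

lemma norm_cfc_le {Z : Matrix ι ι ℂ} (hZ : Z.IsHermitian) (f : ℝ → ℝ) :
    ‖cfc f Z‖ ≤ ∑ i, |f (hZ.eigenvalues i)| := by
  have hsq : ‖cfc f Z‖ ^ 2 = ∑ i, |f (hZ.eigenvalues i)| ^ 2 := by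
    have hself : (cfc f Z)ᴴ = cfc f Z := (cfc_predicate f Z : IsSelfAdjoint _).star_eq
    rw [← trace_conjTranspose_mul_self_re, hself, ← cfc_mul f f Z
      (continuousOn_real_spectrum Z f) (continuousOn_real_spectrum Z f), trace_cfc_re hZ]
    simp only [sq_abs, ← sq]
  refine le_of_sq_le_sq (hsq ▸ ?_) (by positivity)
  exact Finset.sum_sq_le_sq_sum_of_nonneg fun _ _ => abs_nonneg _

variable {g : Matrix ι ι ℂ}

/-- A measure of how far an invertible matrix is from being unitary, comparable with the distance
travelled in the symmetric space of positive definite matrices. -/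
noncomputable def logSize (g : Matrix ι ι ℂ) : ℝ := Real.log (‖g‖ ^ 2 + ‖g⁻¹‖ ^ 2)

lemma posDef_gram_of_isUnit (hg : IsUnit g) : (gᴴ * g).PosDef :=
  Matrix.PosDef.conjTranspose_mul_self _ (Matrix.mulVec_injective_of_isUnit hg)

lemma sum_eigenvalues_gram :
    ∑ i, (Matrix.isHermitian_conjTranspose_mul_self g).eigenvalues i = ‖g‖ ^ 2 := by
  rw [← trace_conjTranspose_mul_self_re,
    (Matrix.isHermitian_conjTranspose_mul_self g).trace_eq_sum_eigenvalues]
  simp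

lemma sum_inv_eigenvalues_gram (hg : IsUnit g) :
    ∑ i, ((Matrix.isHermitian_conjTranspose_mul_self g).eigenvalues i)⁻¹ = ‖g⁻¹‖ ^ 2 := by
  have hZ := Matrix.isHermitian_conjTranspose_mul_self g
  have hinv : (gᴴ * g)⁻¹ = cfc (fun x : ℝ => x⁻¹) (gᴴ * g) := by
    refine inv_eq_left_inv ?_
    nth_rewrite 2 [← cfc_id ℝ (gᴴ * g) hZ.isSelfAdjoint]
    rw [← cfc_mul _ _ _ (continuousOn_real_spectrum _ _) (continuousOn_real_spectrum _ _),
      ← cfc_one ℝ (gᴴ * g) hZ.isSelfAdjoint]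
    refine cfc_congr fun x hx => ?_
    rw [hZ.spectrum_real_eq_range_eigenvalues] at hx
    obtain ⟨i, rfl⟩ := hx
    exact inv_mul_cancel₀ ((posDef_gram_of_isUnit hg).eigenvalues_pos i).ne'
  rw [← trace_cfc_re hZ (·⁻¹), ← hinv, Matrix.mul_inv_rev, Matrix.trace_mul_comm,
    ← trace_conjTranspose_mul_self_re, conjTranspose_nonsing_inv]

lemma abs_log_eigenvalues_gram_le (hg : IsUnit g) (i : ι) :
    |Real.log ((Matrix.isHermitian_conjTranspose_mul_self g).eigenvalues i)| ≤ logSize g := by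
  have hpos := (posDef_gram_of_isUnit hg).eigenvalues_pos
  have hle := Finset.single_le_sum (fun j _ => (hpos j).le) (Finset.mem_univ i)
  have hle' := Finset.single_le_sum (fun j _ => (inv_pos.2 (hpos j)).le) (Finset.mem_univ i)
  rw [sum_eigenvalues_gram] at hle
  rw [sum_inv_eigenvalues_gram hg] at hle'
  refine abs_le'.2 ⟨Real.log_le_log (hpos i) (by nlinarith [sq_nonneg ‖g⁻¹‖]), ?_⟩
  rw [← Real.log_inv]
  exact Real.log_le_log (inv_pos.2 (hpos i)) (by nlinarith [sq_nonneg ‖g‖])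

lemma norm_cfc_log_gram_le (hg : IsUnit g) :
    ‖cfc Real.log (gᴴ * g)‖ ≤ Fintype.card ι * logSize g := by
  refine (norm_cfc_le (Matrix.isHermitian_conjTranspose_mul_self g) _).trans ?_
  refine (Finset.sum_le_sum fun i _ => abs_log_eigenvalues_gram_le hg i).trans ?_
  simp

lemma logSize_exp_mul_le (hg : IsUnit g) (η : Matrix ι ι ℂ) :
    logSize (NormedSpace.exp η * g) ≤ logSize g + 2 * ‖η‖ := by
  rcases isEmpty_or_nonempty ι with h | h
  · rw [Subsingleton.elim (NormedSpace.exp η * g) g]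
    linarith [norm_nonneg η]
  have hpos : 0 < ‖NormedSpace.exp η * g‖ :=
    norm_pos_iff.2 ((Matrix.isUnit_exp η).mul hg).ne_zero
  have hinv : ‖(NormedSpace.exp η * g)⁻¹‖ ≤ Real.exp ‖η‖ * ‖g⁻¹‖ := by
    rw [Matrix.mul_inv_rev, ← Matrix.exp_neg, ← frobenius_norm_conjTranspose, conjTranspose_mul,
      ← Matrix.exp_conjTranspose, ← frobenius_norm_conjTranspose g⁻¹]
    simpa using norm_exp_mul_le (-η)ᴴ (g⁻¹)ᴴ
  have hg0 : 0 < ‖g‖ := norm_pos_iff.2 hg.ne_zero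
  calc logSize (NormedSpace.exp η * g)
      ≤ Real.log (Real.exp (2 * ‖η‖) * (‖g‖ ^ 2 + ‖g⁻¹‖ ^ 2)) := by
        refine Real.log_le_log (by positivity) ?_
        rw [two_mul, Real.exp_add, mul_add, ← sq, ← mul_pow, ← mul_pow]
        gcongr
        exact norm_exp_mul_le η g
    _ = logSize g + 2 * ‖η‖ := by
        rw [Real.log_mul (by positivity) (by positivity), Real.log_exp, add_comm, logSize]

lemma logGram_mul (hg : IsUnit g) {h : Matrix ι ι ℂ} (hh : IsUnit h) :
    logGram (h * g) = logGram h + logGram g := by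
  have hsq : logGram g = 2 * Real.log ‖g.det‖ := by
    simpa [logGram] using
      logGram_mul_right (posDef_gram_of_isUnit (isUnit_one (M := Matrix ι ι ℂ))) hg
  rw [logGram_mul_right (posDef_gram_of_isUnit hh) hg, hsq]

lemma logGram_eq_trace_cfc_log (hg : IsUnit g) :
    logGram g = (cfc Real.log (gᴴ * g)).trace.re := by
  rw [trace_cfc_re (Matrix.isHermitian_conjTranspose_mul_self g), logGram,
    log_norm_det_eq_sum (posDef_gram_of_isUnit hg)]

lemma logGram_add_trace_cfc_log_le [Fintype κ] [DecidableEq κ] {A : Matrix ι κ ℂ}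
    (hA : (Aᴴ * A).PosDef) (hg : IsUnit g) :
    logGram A + (colProj A * cfc Real.log (gᴴ * g)).trace.re ≤ logGram (g * A) := by
  have hZ := Matrix.isHermitian_conjTranspose_mul_self g
  rw [cfc_eq_mul_diagonal_mul hZ]
  exact logGram_add_trace_le_logGram_mul hA (Unitary.coe_star_mul_self hZ.eigenvectorUnitary)
    (posDef_gram_of_isUnit hg).eigenvalues_pos hZ.spectral_theorem

lemma neg_logGram_exp_le (η : Matrix ι ι ℂ) :
    -logGram (NormedSpace.exp η) ≤ -(2 * η.trace.re) + 6 * Fintype.card ι * ‖η‖ ^ 2 := by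
  have hone : logGram (1 : Matrix ι ι ℂ) = 0 := logGram_of_isometry (by simp)
  have hinv := logGram_mul (Matrix.isUnit_exp (-η)) (Matrix.isUnit_exp η)
  rw [Matrix.exp_neg, Matrix.mul_nonsing_inv _
    ((Matrix.isUnit_iff_isUnit_det _).1 (Matrix.isUnit_exp η)), hone, ← Matrix.exp_neg] at hinv
  have hle := logGram_exp_mul_le (-η) (posDef_gram_of_isUnit (isUnit_one (M := Matrix ι ι ℂ)))
  rw [Matrix.mul_one, hone, colProj_of_isometry (by simp)] at hle
  simp only [conjTranspose_one, Matrix.mul_one, Matrix.one_mul, trace_neg, Complex.neg_re,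
    norm_neg] at hle
  linarith

end FunctionalCalculus

section Pinch

variable {ι : Type*} [Fintype ι] [DecidableEq ι] {S : Matrix ι ι ℂ}

/-- The pinching of a matrix by an involution `S`: the average over the group `{1, S}` acting by
conjugation. For a self-adjoint `S` it keeps the diagonal blocks with respect to the two eigenspaces
of `S`, so that the matrices commuting with `S` are the block diagonal ones. -/
noncomputable def pinch (S : Matrix ι ι ℂ) : Matrix ι ι ℂ →ₗ[ℂ] Matrix ι ι ℂ :=
  (1 / 2 : ℂ) • (LinearMap.id + LinearMap.mulLeftRight ℂ (S, S))

lemma pinch_apply (S X : Matrix ι ι ℂ) : pinch S X = (1 / 2 : ℂ) • (X + S * X * S) := rfl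

lemma commute_pinch (hS : S * S = 1) (X : Matrix ι ι ℂ) : Commute S (pinch S X) := by
  rw [pinch_apply]
  refine Commute.smul_right ?_ _
  rw [Commute, SemiconjBy, Matrix.mul_add, Matrix.add_mul, Matrix.mul_assoc (S * X), hS,
    Matrix.mul_assoc S X, ← Matrix.mul_assoc S S, hS, Matrix.mul_one, Matrix.one_mul, add_comm]

lemma pinch_of_commute (hS : S * S = 1) {X : Matrix ι ι ℂ} (hX : Commute S X) :
    pinch S X = X := by
  rw [pinch_apply, hX.eq, Matrix.mul_assoc, hS, Matrix.mul_one]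
  module

lemma conjTranspose_pinch (hS : S.IsHermitian) (X : Matrix ι ι ℂ) :
    (pinch S X)ᴴ = pinch S Xᴴ := by
  simp [pinch_apply, conjTranspose_mul, hS.eq, Matrix.mul_assoc]

lemma trace_pinch_mul (hS : S * S = 1) (X : Matrix ι ι ℂ) {Y : Matrix ι ι ℂ} (hY : Commute S Y) :
    (pinch S X * Y).trace = (X * Y).trace := by
  have hconj : (S * X * S * Y).trace = (X * Y).trace := by
    rw [Matrix.mul_assoc (S * X), hY.eq, ← Matrix.mul_assoc, Matrix.trace_mul_comm,
      ← Matrix.mul_assoc, ← Matrix.mul_assoc, hS, Matrix.one_mul]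
  rw [pinch_apply, Matrix.smul_mul, Matrix.add_mul, trace_smul, trace_add, hconj, smul_eq_mul]
  ring

lemma norm_pinch_le (hS : S.IsHermitian) (hS' : S * S = 1) (X : Matrix ι ι ℂ) :
    ‖pinch S X‖ ≤ ‖X‖ := by
  have hiso : ∀ Y : Matrix ι ι ℂ, ‖S * Y‖ = ‖Y‖ := norm_isometry_mul (by rw [hS.eq, hS'])
  have hconj : ‖S * X * S‖ = ‖X‖ := by
    rw [Matrix.mul_assoc, hiso, ← frobenius_norm_conjTranspose, conjTranspose_mul, hS.eq, hiso,
      frobenius_norm_conjTranspose]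
  rw [pinch_apply, norm_smul, show ‖(1 / 2 : ℂ)‖ = 1 / 2 by norm_num]
  linarith [norm_add_le X (S * X * S)]

lemma differentiable_pinch (S : Matrix ι ι ℂ) : Differentiable ℂ (pinch S) :=
  (LinearMap.toContinuousLinearMap (pinch S)).differentiable

end Pinch

/-- The data of a weighted family of subspaces of `ι → ℂ`, indexed by `I`: a self-adjoint involution
`sym` whose centralizer is the symmetry group, nonnegative weights, and a multiple `shift` of the
identity that is subtracted from the weighted sum of the orthogonal projections. The subspaces
themselves vary; they are given as the column spaces of matrices `A i`. -/
structure WeightedFamily (ι I : Type*) [Fintype ι] [DecidableEq ι] where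
  sym : Matrix ι ι ℂ
  isHermitian_sym : sym.IsHermitian
  sym_mul_sym : sym * sym = 1
  wt : I → ℝ
  wt_nonneg : ∀ i, 0 ≤ wt i
  shift : ℝ
  shift_nonneg : 0 ≤ shift

namespace WeightedFamily

variable {ι I : Type*} [Fintype ι] [DecidableEq ι] [Fintype I] (D : WeightedFamily ι I)
  {κ : I → Type*} [∀ i, Fintype (κ i)] [∀ i, DecidableEq (κ i)] {A : ∀ i, Matrix ι (κ i) ℂ}
  {g h η : Matrix ι ι ℂ}

/-- The moment map: the pinching of the weighted sum of the projections onto the column spaces,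
minus the shift. -/
noncomputable def moment (A : ∀ i, Matrix ι (κ i) ℂ) : Matrix ι ι ℂ :=
  pinch D.sym (∑ i, (D.wt i : ℂ) • colProj (A i)) - (D.shift : ℂ) • 1

/-- The Kempf–Ness functional on the group of invertible matrices commuting with `sym`: its
gradient at `g` is `moment` of the translated family `g * A i`. -/
noncomputable def kempfNess (A : ∀ i, Matrix ι (κ i) ℂ) (g : Matrix ι ι ℂ) : ℝ :=
  ∑ i, D.wt i * logGram (g * A i) - D.shift * logGram g

lemma commute_moment (A : ∀ i, Matrix ι (κ i) ℂ) : Commute D.sym (D.moment A) :=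
  (commute_pinch D.sym_mul_sym _).sub_right ((Commute.one_right _).smul_right _)

lemma isHermitian_moment (A : ∀ i, Matrix ι (κ i) ℂ) : (D.moment A).IsHermitian := by
  simp [Matrix.IsHermitian, moment, conjTranspose_pinch D.isHermitian_sym, conjTranspose_sum,
    (isHermitian_colProj _).eq]

lemma trace_moment_mul (A : ∀ i, Matrix ι (κ i) ℂ) (hη : Commute D.sym η) :
    (D.moment A * η).trace.re =
      ∑ i, D.wt i * (colProj (A i) * η).trace.re - D.shift * η.trace.re := by
  simp [moment, Matrix.sub_mul, trace_pinch_mul D.sym_mul_sym _ hη, Finset.sum_mul]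

/-- The constant in the second order upper bound of the Kempf–Ness functional. -/
noncomputable def curvature (κ : I → Type*) [∀ i, Fintype (κ i)] : ℝ :=
  6 * (∑ i, D.wt i * Fintype.card (κ i) + D.shift * Fintype.card ι)

omit [∀ i, DecidableEq (κ i)] in
lemma curvature_nonneg : 0 ≤ D.curvature κ :=
  mul_nonneg (by norm_num) (add_nonneg
    (Finset.sum_nonneg fun i _ => mul_nonneg (D.wt_nonneg i) (Nat.cast_nonneg _))
    (mul_nonneg D.shift_nonneg (Nat.cast_nonneg _)))

lemma kempfNess_exp_mul_le (hA : ∀ i, ((A i)ᴴ * A i).PosDef) (hg : IsUnit g)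
    (hη : Commute D.sym η) :
    D.kempfNess A (NormedSpace.exp η * g) ≤ D.kempfNess A g +
      2 * (D.moment (fun i => g * A i) * η).trace.re + D.curvature κ * ‖η‖ ^ 2 := by
  have hterm : ∀ i, D.wt i * logGram (NormedSpace.exp η * g * A i) ≤
      D.wt i * logGram (g * A i) + 2 * (D.wt i * (colProj (g * A i) * η).trace.re) +
        6 * (D.wt i * Fintype.card (κ i)) * ‖η‖ ^ 2 := fun i => by
    rw [Matrix.mul_assoc]
    have := mul_le_mul_of_nonneg_left (logGram_exp_mul_le η
      (posDef_gram_mul_left (Matrix.mulVec_injective_of_isUnit hg) (hA i))) (D.wt_nonneg i)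
    linarith
  have hsum := Finset.sum_le_sum fun i (_ : i ∈ Finset.univ) => hterm i
  rw [Finset.sum_add_distrib, Finset.sum_add_distrib, ← Finset.mul_sum, ← Finset.sum_mul,
    ← Finset.mul_sum] at hsum
  have hshift := mul_le_mul_of_nonneg_left (neg_logGram_exp_le η) D.shift_nonneg
  rw [kempfNess, kempfNess, logGram_mul hg (Matrix.isUnit_exp η), D.trace_moment_mul _ hη,
    curvature]
  linarith

/-- Convexity along geodesics bounds the Kempf–Ness functional from below by its gradient. -/
lemma kempfNess_sub_le (hA : ∀ i, ((A i)ᴴ * A i).PosDef) (hg : IsUnit g) (hh : IsUnit h)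
    (hSh : Commute D.sym h) :
    D.kempfNess A g - Fintype.card ι * ‖D.moment fun i => g * A i‖ * logSize h ≤
      D.kempfNess A (h * g) := by
  set Y := cfc Real.log (hᴴ * h)
  have hSY : Commute D.sym Y := by
    have hSh' : Commute D.sym hᴴ := by
      simpa [Commute, SemiconjBy, D.isHermitian_sym.eq] using
        (congrArg conjTranspose hSh.eq).symm
    exact (Commute.cfc_real (hSh'.mul_right hSh).symm Real.log).symm
  have hterm : ∀ i, D.wt i * logGram (g * A i) + D.wt i * (colProj (g * A i) * Y).trace.re ≤
      D.wt i * logGram (h * g * A i) := fun i => by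
    rw [Matrix.mul_assoc, ← mul_add]
    exact mul_le_mul_of_nonneg_left (logGram_add_trace_cfc_log_le
      (posDef_gram_mul_left (Matrix.mulVec_injective_of_isUnit hg) (hA i)) hh) (D.wt_nonneg i)
  have hsum := Finset.sum_le_sum fun i (_ : i ∈ Finset.univ) => hterm i
  rw [Finset.sum_add_distrib] at hsum
  have htrace := (abs_le.1 (abs_trace_mul_re_le (D.moment fun i => g * A i) Y)).1
  have hY := mul_le_mul_of_nonneg_left (norm_cfc_log_gram_le hh)
    (norm_nonneg (D.moment fun i => g * A i))
  rw [D.trace_moment_mul _ hSY] at htrace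
  rw [kempfNess, kempfNess, logGram_mul hg hh, logGram_eq_trace_cfc_log hh]
  linarith

lemma continuousOn_moment {X : Type*} [TopologicalSpace X] {s : Set X}
    {Y : X → ∀ i, Matrix ι (κ i) ℂ} (hY : ∀ i, ContinuousOn (fun x => Y x i) s)
    (hs : ∀ x ∈ s, ∀ i, ((Y x i)ᴴ * Y x i).PosDef) :
    ContinuousOn (fun x => D.moment (Y x)) s := by
  have hsum : ContinuousOn (fun x => ∑ i, (D.wt i : ℂ) • colProj (Y x i)) s :=
    continuousOn_finsetSum _ fun i _ =>
      (continuousOn_colProj (hY i) fun x hx => hs x hx i).const_smul (D.wt i : ℂ)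
  exact ((differentiable_pinch D.sym).continuous.comp_continuousOn hsum).sub continuousOn_const

lemma continuousOn_kempfNess {X : Type*} [TopologicalSpace X] {s : Set X}
    {Y : X → ∀ i, Matrix ι (κ i) ℂ} (hY : ∀ i, ContinuousOn (fun x => Y x i) s)
    (hs : ∀ x ∈ s, ∀ i, ((Y x i)ᴴ * Y x i).PosDef) {H : X → Matrix ι ι ℂ}
    (hH : ContinuousOn H s) (hHs : ∀ x ∈ s, IsUnit (H x)) :
    ContinuousOn (fun x => D.kempfNess (Y x) (H x)) s := by
  have hmul : ∀ i, ContinuousOn (fun x => H x * Y x i) s := fun i =>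
    (show Continuous fun M : Matrix ι ι ℂ × Matrix ι (κ i) ℂ => M.1 * M.2 by
      fun_prop).comp_continuousOn (hH.prodMk (hY i))
  refine (continuousOn_finsetSum _ fun i _ => ((continuousOn_logGram (hmul i) fun x hx =>
    posDef_gram_mul_left (Matrix.mulVec_injective_of_isUnit (hHs x hx)) (hs x hx i)).const_smul
      (D.wt i))).sub ((continuousOn_logGram hH fun x hx =>
        posDef_gram_of_isUnit (hHs x hx)).const_smul D.shift)

end WeightedFamily

lemma exists_forall_sub_lt {α : Type*} {φ : α → ℝ} {s : Set α} (hs : s.Nonempty)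
    (hφ : BddBelow (φ '' s)) {c : ℝ} (hc : 0 < c) : ∃ x ∈ s, ∀ y ∈ s, φ x - c < φ y := by
  obtain ⟨_, ⟨x, hx, rfl⟩, hlt⟩ :=
    exists_lt_of_csInf_lt (hs.image φ) (lt_add_of_pos_right (sInf (φ '' s)) hc)
  exact ⟨x, hx, fun y hy => by linarith [csInf_le hφ ⟨y, hy, rfl⟩]⟩

lemma commute_nonsing_inv {ι : Type*} [Fintype ι] [DecidableEq ι] {S g : Matrix ι ι ℂ}
    (hg : IsUnit g) (h : Commute S g) : Commute S g⁻¹ := by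
  obtain ⟨u, rfl⟩ := hg
  simpa using h.units_inv_right

namespace WeightedFamily

variable {ι I : Type*} [Fintype ι] [DecidableEq ι] [Fintype I] (D : WeightedFamily ι I)
  {κ : I → Type*} [∀ i, Fintype (κ i)] [∀ i, DecidableEq (κ i)] {A : ∀ i, Matrix ι (κ i) ℂ}
  {g : Matrix ι ι ℂ}

lemma kempfNess_exp_smul_moment_mul_le (hA : ∀ i, ((A i)ᴴ * A i).PosDef) (hg : IsUnit g)
    {ε : ℝ} (hε : 0 ≤ ε) (hCε : D.curvature κ * ε ≤ 1) :
    D.kempfNess A (NormedSpace.exp ((-ε : ℂ) • D.moment fun i => g * A i) * g) ≤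
      D.kempfNess A g - ε * ‖D.moment fun i => g * A i‖ ^ 2 := by
  set m := D.moment fun i => g * A i
  have hstep := D.kempfNess_exp_mul_le hA hg
    (η := (-ε : ℂ) • m) ((D.commute_moment _).smul_right _)
  have htrace : (m * ((-ε : ℂ) • m)).trace.re = -ε * ‖m‖ ^ 2 := by
    have hm : mᴴ = m := D.isHermitian_moment _
    rw [Matrix.mul_smul, trace_smul, ← trace_conjTranspose_mul_self_re, hm]
    simp
  have hnorm : ‖(-ε : ℂ) • m‖ ^ 2 = ε ^ 2 * ‖m‖ ^ 2 := by
    rw [norm_smul, mul_pow, norm_neg, Complex.norm_real, Real.norm_eq_abs, sq_abs]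
  rw [show (D.moment fun i => g * A i) = m from rfl, htrace, hnorm] at hstep
  have := mul_le_mul_of_nonneg_right hCε (mul_nonneg hε (sq_nonneg ‖m‖))
  linarith

/-- If the moment map were much smaller at some translate `g * A i` than along the gradient flow,
then the Kempf–Ness functional of `A` would descend at unit speed along the flow, whereas convexity
allows it to descend from its value at `g` only with speed `‖moment (g * A)‖`. -/
lemma le_norm_moment_mul_of_flow_mem {T : Set (∀ i, Matrix ι (κ i) ℂ)}
    (hT : ∀ A ∈ T, ∀ i, ((A i)ᴴ * A i).PosDef)
    (hflow : ∀ A ∈ T, ∀ ε : ℝ, (fun i => NormedSpace.exp ((-ε : ℂ) • D.moment A) * A i) ∈ T)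
    {δ : ℝ} (hδ : 0 < δ) (hbound : ∀ A ∈ T, δ ≤ ‖D.moment A‖) (hA : A ∈ T) (hg : IsUnit g)
    (hSg : Commute D.sym g) :
    δ ≤ 4 * Fintype.card ι * ‖D.moment fun i => g * A i‖ := by
  by_contra! hsmall
  set k := Fintype.card ι * ‖D.moment fun i => g * A i‖
  have hk0 : 0 ≤ k := by positivity
  set ε : ℝ := 1 / (D.curvature κ + 1) with hεdef
  have hC := D.curvature_nonneg (κ := κ)
  have hε : 0 < ε := by positivity
  have hCε : D.curvature κ * ε ≤ 1 := by
    rw [hεdef, mul_one_div]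
    exact div_le_one_of_le₀ (by linarith) (by linarith)
  have hginv : IsUnit g⁻¹ := Matrix.isUnit_nonsing_inv_iff.2 hg
  have hcancel : ∀ x : Matrix ι ι ℂ, x * g⁻¹ * g = x := fun x =>
    Matrix.nonsing_inv_mul_cancel_right _ _ ((Matrix.isUnit_iff_isUnit_det _).1 hg)
  obtain ⟨x, ⟨hx, hSx, hxT⟩, hmin⟩ := exists_forall_sub_lt
    (s := {x | IsUnit x ∧ Commute D.sym x ∧ (fun i => x * A i) ∈ T})
    (φ := fun x => D.kempfNess A x + k * logSize (x * g⁻¹)) (c := ε * (δ ^ 2 / 2))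
    ⟨1, isUnit_one, Commute.one_right _, by simpa using hA⟩
    ⟨D.kempfNess A g, by
      rintro _ ⟨x, ⟨hx, hSx, -⟩, rfl⟩
      have := D.kempfNess_sub_le (hT A hA) hg (hx.mul hginv)
        (hSx.mul_right (commute_nonsing_inv hg hSg))
      rw [hcancel] at this
      change _ ≤ _ + _
      linarith⟩ (by positivity)
  set m := D.moment fun i => x * A i
  have hψ := D.kempfNess_exp_smul_moment_mul_le (hT A hA) hx hε.le hCε
  have hsize := mul_le_mul_of_nonneg_left
    (logSize_exp_mul_le (hx.mul hginv) ((-ε : ℂ) • m)) hk0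
  rw [norm_smul, norm_neg, Complex.norm_real, Real.norm_of_nonneg hε.le,
    ← Matrix.mul_assoc] at hsize
  have hgain : ε * (δ ^ 2 / 2) ≤ ε * (‖m‖ ^ 2 - 2 * k * ‖m‖) := by
    have := hbound _ hxT
    gcongr
    nlinarith
  have hflow' := hmin (NormedSpace.exp ((-ε : ℂ) • m) * x) ⟨(Matrix.isUnit_exp _).mul hx,
    ((D.commute_moment _).smul_right (-ε : ℂ)).exp_right.mul_right hSx, by
      simpa only [Matrix.mul_assoc] using hflow _ hxT ε⟩
  linarith

end WeightedFamily

lemma logGram_inv {ι : Type*} [Fintype ι] [DecidableEq ι] {g : Matrix ι ι ℂ} (hg : IsUnit g) :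
    logGram g⁻¹ = -logGram g := by
  have h := logGram_mul hg (Matrix.isUnit_nonsing_inv_iff.2 hg)
  rw [Matrix.nonsing_inv_mul _ ((Matrix.isUnit_iff_isUnit_det _).1 hg)] at h
  have h1 : logGram (1 : Matrix ι ι ℂ) = 0 := by simp [logGram]
  linarith

section HermitianPart

variable {ι : Type*} [Fintype ι] {ξ m : ℂ → Matrix ι ι ℂ}

lemma norm_add_conjTranspose_le {X Y : Matrix ι ι ℂ} (h : ‖X + Xᴴ + Y‖ ≤ ‖Y‖ / 2) :
    ‖X + Xᴴ‖ ≤ 3 / 2 * ‖Y‖ := by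
  have := norm_sub_le (X + Xᴴ + Y) Y
  rw [add_sub_cancel_right] at this
  linarith

lemma circleAverage_norm_sq_le_of_norm_add_le (hξ : Differentiable ℂ ξ) (h0 : (ξ 0).IsHermitian)
    (hm : ContinuousOn m (sphere 0 1))
    (h : ∀ z ∈ sphere (0 : ℂ) 1, ‖ξ z + (ξ z)ᴴ + m z‖ ≤ ‖m z‖ / 2) :
    Real.circleAverage (fun z => ‖ξ z‖ ^ 2) 0 1 ≤
      9 / 8 * Real.circleAverage (fun z => ‖m z‖ ^ 2) 0 1 := by
  have hle : Real.circleAverage (fun z => ‖ξ z + (ξ z)ᴴ‖ ^ 2) 0 1 ≤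
      Real.circleAverage (fun z => 9 / 4 * ‖m z‖ ^ 2) 0 1 := by
    refine circleAverage_unit_mono ?_ ?_ fun z hz => ?_
    · exact (((hξ.continuous.add hξ.continuous.matrix_conjTranspose).norm).pow 2).continuousOn
    · exact continuousOn_const.mul (hm.norm.pow 2)
    · have := pow_le_pow_left₀ (norm_nonneg _) (norm_add_conjTranspose_le (h z hz)) 2
      linarith
  rw [circleAverage_const_mul] at hle
  linarith [circleAverage_norm_sq_le hξ h0]

lemma two_mul_norm_zero_le_of_norm_add_le (hξ : Differentiable ℂ ξ) (h0 : (ξ 0).IsHermitian)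
    (hm : ContinuousOn m (sphere 0 1))
    (h : ∀ z ∈ sphere (0 : ℂ) 1, ‖ξ z + (ξ z)ᴴ + m z‖ ≤ ‖m z‖ / 2) :
    2 * ‖ξ 0‖ ≤ 3 / 2 * Real.circleAverage (fun z => ‖m z‖) 0 1 := by
  rw [← circleAverage_const_mul]
  exact (two_mul_norm_zero_le_circleAverage hξ h0).trans (circleAverage_unit_mono
    (hξ.continuous.add hξ.continuous.matrix_conjTranspose).norm.continuousOn
    (continuousOn_const.mul hm.norm) fun z hz => norm_add_conjTranspose_le (h z hz))

lemma le_circleAverage_norm {δ : ℝ} (hm : ContinuousOn m (sphere 0 1))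
    (h : ∀ z ∈ sphere (0 : ℂ) 1, δ ≤ ‖m z‖) :
    δ ≤ Real.circleAverage (fun z => ‖m z‖) 0 1 := by
  rw [← Real.circleAverage_const δ 0 1]
  exact circleAverage_unit_mono continuousOn_const hm.norm h

lemma mul_circleAverage_norm_le {δ : ℝ} (hm : ContinuousOn m (sphere 0 1))
    (h : ∀ z ∈ sphere (0 : ℂ) 1, δ ≤ ‖m z‖) :
    δ * Real.circleAverage (fun z => ‖m z‖) 0 1 ≤
      Real.circleAverage (fun z => ‖m z‖ ^ 2) 0 1 := by
  rw [← circleAverage_const_mul]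
  exact circleAverage_unit_mono (continuousOn_const.mul hm.norm) (hm.norm.pow 2) fun z hz => by
    rw [sq]
    exact mul_le_mul_of_nonneg_right (h z hz) (norm_nonneg _)

lemma exists_entire_commute_approx [DecidableEq ι] {S : Matrix ι ι ℂ} (hS : S.IsHermitian)
    (hS' : S * S = 1) (hm : ContinuousOn m (sphere 0 1))
    (hmh : ∀ z ∈ sphere (0 : ℂ) 1, (m z).IsHermitian)
    (hmS : ∀ z ∈ sphere (0 : ℂ) 1, Commute S (m z)) {ε : ℝ} (hε : 0 < ε) :
    ∃ ξ : ℂ → Matrix ι ι ℂ, Differentiable ℂ ξ ∧ (ξ 0).IsHermitian ∧ (∀ z, Commute S (ξ z)) ∧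
      ∀ z ∈ sphere (0 : ℂ) 1, ‖ξ z + (ξ z)ᴴ + m z‖ ≤ ε := by
  obtain ⟨ξ, hξ, h0, hclose⟩ := exists_entire_add_conjTranspose_approx hm.neg
    (fun z hz => (hmh z hz).neg) hε
  refine ⟨fun z => pinch S (ξ z), (differentiable_pinch S).comp hξ, ?_,
    fun z => commute_pinch hS' _, fun z hz => le_trans (le_of_eq_of_le ?_ (norm_pinch_le hS hS' _))
      (hclose z hz)⟩
  · rw [Matrix.IsHermitian, conjTranspose_pinch hS, h0.eq]
  · rw [conjTranspose_pinch hS, Pi.neg_apply, sub_neg_eq_add, map_add, map_add,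
      pinch_of_commute hS' (hmS z hz)]

end HermitianPart

lemma differentiable_nonsing_inv {ι : Type*} [Fintype ι] [DecidableEq ι] {H : ℂ → Matrix ι ι ℂ}
    (hH : Differentiable ℂ H) (hHu : ∀ z, IsUnit (H z)) : Differentiable ℂ fun z => (H z)⁻¹ := by
  simp only [Matrix.nonsing_inv_eq_ringInverse]
  exact fun z => (differentiableAt_inverse (hHu z)).comp z (hH z)

lemma le_descent_gain {C ε k δ M₁ M₂ x y : ℝ} (hC : 0 ≤ C) (hε : 0 < ε) (hCε : 9 * C * ε ≤ 1)
    (hk : 0 ≤ k) (hδ : 0 < δ) (hkδ : 12 * k ≤ δ) (hM₁ : δ ≤ M₁) (hM₂ : δ * M₁ ≤ M₂)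
    (hx : x ≤ 9 / 8 * M₂) (hy : y ≤ 3 / 2 * M₁) :
    ε * δ ^ 2 / 4 ≤ ε / 2 * M₂ - C * ε ^ 2 * x - k * (ε * y) := by
  have hδM : δ ^ 2 ≤ M₂ := by nlinarith
  have hquad : C * ε ^ 2 * x ≤ ε * M₂ / 8 := by
    calc C * ε ^ 2 * x ≤ C * ε ^ 2 * (9 / 8 * M₂) := by gcongr
      _ = 9 * C * ε * (ε * M₂ / 8) := by ring
      _ ≤ 1 * (ε * M₂ / 8) := by
        have : 0 ≤ M₂ := (sq_nonneg δ).trans hδM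
        gcongr
      _ = ε * M₂ / 8 := one_mul _
  have hlin : k * (ε * y) ≤ ε * M₂ / 8 := by
    calc k * (ε * y) ≤ k * (ε * (3 / 2 * M₁)) := by gcongr
      _ = 12 * k * M₁ * (ε / 8) := by ring
      _ ≤ δ * M₁ * (ε / 8) := by
        have : 0 ≤ M₁ := hδ.le.trans hM₁
        gcongr
      _ ≤ M₂ * (ε / 8) := by gcongr
      _ = ε * M₂ / 8 := by ring
  linarith [mul_le_mul_of_nonneg_left hδM hε.le]

namespace WeightedFamily

variable {ι I : Type*} [Fintype ι] [DecidableEq ι] [Fintype I] (D : WeightedFamily ι I)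
  {κ : I → Type*} [∀ i, Fintype (κ i)] [∀ i, DecidableEq (κ i)]
  {Y : ℂ → ∀ i, Matrix ι (κ i) ℂ} {H : ℂ → Matrix ι ι ℂ}

lemma continuousOn_moment_mul {s : Set ℂ} (hY : ∀ i, ContinuousOn (fun z => Y z i) s)
    (hs : ∀ z ∈ s, ∀ i, ((Y z i)ᴴ * Y z i).PosDef) (hH : ContinuousOn H s)
    (hHs : ∀ z ∈ s, IsUnit (H z)) : ContinuousOn (fun z => D.moment fun i => H z * Y z i) s :=
  D.continuousOn_moment
    (fun i => (differentiable_matrix_mul (ι := ι) (κ := ι) (κ' := κ i)).continuous.comp_continuousOn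
      (hH.prodMk (hY i)))
    fun z hz i => posDef_gram_mul_left (Matrix.mulVec_injective_of_isUnit (hHs z hz)) (hs z hz i)

lemma kempfNess_le_circleAverage (hY : ∀ i, DiffContOnCl ℂ (fun z => Y z i) (ball 0 1))
    (h0 : ∀ i, ((Y 0 i)ᴴ * Y 0 i).PosDef)
    (hs : ∀ z ∈ sphere (0 : ℂ) 1, ∀ i, ((Y z i)ᴴ * Y z i).PosDef)
    (hH : Differentiable ℂ H) (hHu : ∀ z, IsUnit (H z)) :
    D.kempfNess (Y 0) (H 0) ≤ Real.circleAverage (fun z => D.kempfNess (Y z) (H z)) 0 1 := by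
  have hpos : ∀ z i, ((Y z i)ᴴ * Y z i).PosDef → ((H z * Y z i)ᴴ * (H z * Y z i)).PosDef :=
    fun z i h => posDef_gram_mul_left (Matrix.mulVec_injective_of_isUnit (hHu z)) h
  have hmul : ∀ i, DiffContOnCl ℂ (fun z => H z * Y z i) (ball 0 1) := fun i =>
    diffContOnCl_matrix_mul hH.diffContOnCl (hY i)
  have hcont : ∀ i, ContinuousOn (fun z => D.wt i * logGram (H z * Y z i)) (sphere 0 1) :=
    fun i => (continuousOn_logGram
      ((hmul i).continuousOn_ball.mono Metric.sphere_subset_closedBall)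
      fun z hz => hpos z i (hs z hz i)).const_smul (D.wt i)
  have hcontinv : ContinuousOn (fun z => D.shift * logGram (H z)⁻¹) (sphere 0 1) :=
    (continuousOn_logGram (differentiable_nonsing_inv hH hHu).continuous.continuousOn fun z _ =>
      posDef_gram_of_isUnit (Matrix.isUnit_nonsing_inv_iff.2 (hHu z))).const_smul D.shift
  have hle : ∀ i, logGram (H 0 * Y 0 i) ≤
      Real.circleAverage (fun z => logGram (H z * Y z i)) 0 1 := fun i =>
    logGram_le_circleAverage (G := fun z => H z * Y z i) (hmul i) (hpos 0 i (h0 i)) fun z hz =>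
      hpos z i (hs z hz i)
  have hleinv : logGram (H 0)⁻¹ ≤ Real.circleAverage (fun z => logGram (H z)⁻¹) 0 1 :=
    logGram_le_circleAverage (G := fun z => (H z)⁻¹)
      (differentiable_nonsing_inv hH hHu).diffContOnCl
      (posDef_gram_of_isUnit (Matrix.isUnit_nonsing_inv_iff.2 (hHu 0)))
      fun z _ => posDef_gram_of_isUnit (Matrix.isUnit_nonsing_inv_iff.2 (hHu z))
  have hsplit : ∀ z, D.kempfNess (Y z) (H z) =
      (∑ i, D.wt i * logGram (H z * Y z i)) + D.shift * logGram (H z)⁻¹ := fun z => by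
    rw [kempfNess, logGram_inv (hHu z), mul_neg, sub_eq_add_neg]
  simp only [hsplit]
  rw [circleAverage_unit_add (continuousOn_finsetSum _ fun i _ => hcont i) hcontinv,
    Real.circleAverage_fun_sum fun i _ => (hcont i).circleIntegrable zero_le_one]
  simp only [circleAverage_const_mul]
  exact add_le_add
    (Finset.sum_le_sum fun i _ => mul_le_mul_of_nonneg_left (hle i) (D.wt_nonneg i))
    (mul_le_mul_of_nonneg_left hleinv D.shift_nonneg)

lemma kempfNess_exp_smul_mul_le {A : ∀ i, Matrix ι (κ i) ℂ} {g ξ : Matrix ι ι ℂ}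
    (hA : ∀ i, ((A i)ᴴ * A i).PosDef) (hg : IsUnit g) (hξ : Commute D.sym ξ)
    (hξm : ‖ξ + ξᴴ + D.moment fun i => g * A i‖ ≤ ‖D.moment fun i => g * A i‖ / 2)
    {ε : ℝ} (hε : 0 ≤ ε) :
    D.kempfNess A (NormedSpace.exp ((ε : ℂ) • ξ) * g) ≤ D.kempfNess A g -
      ε / 2 * ‖D.moment fun i => g * A i‖ ^ 2 + D.curvature κ * ε ^ 2 * ‖ξ‖ ^ 2 := by
  have hstep := D.kempfNess_exp_mul_le hA hg (hξ.smul_right (ε : ℂ))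
  have hm := D.isHermitian_moment fun i => g * A i
  set m := D.moment fun i => g * A i
  have hadj : (m * ξᴴ).trace.re = (m * ξ).trace.re := by
    rw [← trace_conjTranspose_re, conjTranspose_mul, conjTranspose_conjTranspose, hm.eq,
      Matrix.trace_mul_comm]
  have hsq : (m * m).trace.re = ‖m‖ ^ 2 := by
    rw [← trace_conjTranspose_mul_self_re, hm.eq]
  have herr : (m * (ξ + ξᴴ + m)).trace.re ≤ ‖m‖ * (‖m‖ / 2) :=
    (le_abs_self _).trans ((abs_trace_mul_re_le _ _).trans (by gcongr))
  rw [Matrix.mul_add, Matrix.mul_add, trace_add, trace_add, Complex.add_re, Complex.add_re, hadj,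
    hsq] at herr
  rw [Matrix.mul_smul, trace_smul, smul_eq_mul, Complex.re_ofReal_mul, norm_smul,
    Complex.norm_real, Real.norm_of_nonneg hε] at hstep
  nlinarith

lemma circleAverage_kempfNess_exp_smul_mul_le
    (hY : ∀ i, ContinuousOn (fun z => Y z i) (sphere 0 1))
    (hs : ∀ z ∈ sphere (0 : ℂ) 1, ∀ i, ((Y z i)ᴴ * Y z i).PosDef)
    (hH : Continuous H) (hHu : ∀ z, IsUnit (H z)) {ξ : ℂ → Matrix ι ι ℂ} (hξ : Continuous ξ)
    (hξS : ∀ z, Commute D.sym (ξ z))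
    (hξm : ∀ z ∈ sphere (0 : ℂ) 1, ‖ξ z + (ξ z)ᴴ + D.moment fun i => H z * Y z i‖ ≤
      ‖D.moment fun i => H z * Y z i‖ / 2) {ε : ℝ} (hε : 0 ≤ ε) :
    Real.circleAverage (fun z => D.kempfNess (Y z) (NormedSpace.exp ((ε : ℂ) • ξ z) * H z)) 0 1 ≤
      Real.circleAverage (fun z => D.kempfNess (Y z) (H z)) 0 1 -
        ε / 2 * Real.circleAverage (fun z => ‖D.moment fun i => H z * Y z i‖ ^ 2) 0 1 +
        D.curvature κ * ε ^ 2 * Real.circleAverage (fun z => ‖ξ z‖ ^ 2) 0 1 := by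
  have hH' : Continuous fun z => NormedSpace.exp ((ε : ℂ) • ξ z) * H z :=
    ((NormedSpace.exp_continuous (𝔸 := Matrix ι ι ℂ)).comp (hξ.const_smul (ε : ℂ))).mul hH
  have hm : ContinuousOn (fun z => ‖D.moment fun i => H z * Y z i‖ ^ 2) (sphere 0 1) :=
    (D.continuousOn_moment_mul hY hs hH.continuousOn fun z _ => hHu z).norm.pow 2
  have hψ := D.continuousOn_kempfNess hY hs hH.continuousOn fun z _ => hHu z
  rw [← circleAverage_const_mul, ← circleAverage_const_mul, sub_eq_add_neg, ← neg_one_mul,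
    ← circleAverage_const_mul, ← circleAverage_unit_add, ← circleAverage_unit_add]
  · refine circleAverage_unit_mono (D.continuousOn_kempfNess hY hs hH'.continuousOn fun z _ =>
      (Matrix.isUnit_exp _).mul (hHu z)) ?_ fun z hz =>
        (D.kempfNess_exp_smul_mul_le (hs z hz) (hHu z) (hξS z) (hξm z hz) hε).trans_eq (by ring)
    fun_prop
  all_goals fun_prop

/-- One descent step: along the disc, `H` is multiplied by `exp (ε ξ)` for an entire function `ξ`
whose Hermitian part is close to `-moment / 2` on the unit circle. -/
lemma exists_entire_descent (hY : ∀ i, ContinuousOn (fun z => Y z i) (sphere 0 1))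
    (hs : ∀ z ∈ sphere (0 : ℂ) 1, ∀ i, ((Y z i)ᴴ * Y z i).PosDef)
    (hH : Differentiable ℂ H) (hHu : ∀ z, IsUnit (H z)) (hHS : ∀ z, Commute D.sym (H z))
    {δ : ℝ} (hδ : 0 < δ)
    (hbound : ∀ z ∈ sphere (0 : ℂ) 1, δ ≤ ‖D.moment fun i => H z * Y z i‖)
    {ε : ℝ} (hε : 0 < ε) (hCε : 9 * D.curvature κ * ε ≤ 1) {k : ℝ} (hk : 0 ≤ k)
    (hkδ : 12 * k ≤ δ) :
    ∃ H' : ℂ → Matrix ι ι ℂ, (Differentiable ℂ H' ∧ (∀ z, IsUnit (H' z)) ∧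
      ∀ z, Commute D.sym (H' z)) ∧
      Real.circleAverage (fun z => D.kempfNess (Y z) (H' z)) 0 1 + k * logSize (H' 0) ≤
        Real.circleAverage (fun z => D.kempfNess (Y z) (H z)) 0 1 + k * logSize (H 0) -
          ε * δ ^ 2 / 4 := by
  set m := fun z => D.moment fun i => H z * Y z i
  have hmc : ContinuousOn m (sphere 0 1) :=
    D.continuousOn_moment_mul hY hs hH.continuous.continuousOn fun z _ => hHu z
  obtain ⟨ξ, hξ, hξ0, hξS, hξm⟩ := exists_entire_commute_approx D.isHermitian_sym
    D.sym_mul_sym hmc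
    (fun z _ => D.isHermitian_moment _) (fun z _ => D.commute_moment _) (half_pos hδ)
  have hξm' : ∀ z ∈ sphere (0 : ℂ) 1, ‖ξ z + (ξ z)ᴴ + m z‖ ≤ ‖m z‖ / 2 := fun z hz =>
    (hξm z hz).trans (by linarith [hbound z hz])
  refine ⟨fun z => NormedSpace.exp ((ε : ℂ) • ξ z) * H z,
    ⟨(differentiable_exp_comp (hξ.const_smul (ε : ℂ))).mul hH,
      fun z => (Matrix.isUnit_exp _).mul (hHu z),
      fun z => ((hξS z).smul_right (ε : ℂ)).exp_right.mul_right (hHS z)⟩, ?_⟩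
  have hsize : logSize (NormedSpace.exp ((ε : ℂ) • ξ 0) * H 0) ≤
      logSize (H 0) + ε * (2 * ‖ξ 0‖) := by
    have := logSize_exp_mul_le (hHu 0) ((ε : ℂ) • ξ 0)
    rw [norm_smul, Complex.norm_real, Real.norm_of_nonneg hε.le] at this
    linarith
  have hψ := D.circleAverage_kempfNess_exp_smul_mul_le hY hs hH.continuous hHu hξ.continuous hξS
    hξm' hε.le
  have hgain := le_descent_gain D.curvature_nonneg hε hCε hk hδ hkδ
    (le_circleAverage_norm hmc hbound) (mul_circleAverage_norm_le hmc hbound)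
    (circleAverage_norm_sq_le_of_norm_add_le hξ hξ0 hmc hξm')
    (two_mul_norm_zero_le_of_norm_add_le hξ hξ0 hmc hξm')
  linarith [mul_le_mul_of_nonneg_left hsize hk]

/-- If the moment map is bounded below on all translates of the boundary values of a holomorphic
family, then `∫ kempfNess (Y z) (H z)` can be decreased forever along the entire curves `H`; by the
sub-mean value property this is impossible when the moment map is small at the centre. -/
lemma le_norm_moment_zero (hY : ∀ i, DiffContOnCl ℂ (fun z => Y z i) (ball 0 1))
    (h0 : ∀ i, ((Y 0 i)ᴴ * Y 0 i).PosDef)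
    (hs : ∀ z ∈ sphere (0 : ℂ) 1, ∀ i, ((Y z i)ᴴ * Y z i).PosDef) {δ : ℝ} (hδ : 0 < δ)
    (hbound : ∀ z ∈ sphere (0 : ℂ) 1, ∀ g : Matrix ι ι ℂ, IsUnit g → Commute D.sym g →
      δ ≤ ‖D.moment fun i => g * Y z i‖) :
    δ ≤ 12 * Fintype.card ι * ‖D.moment (Y 0)‖ := by
  by_contra! hsmall
  set k := Fintype.card ι * ‖D.moment (Y 0)‖
  have hC := D.curvature_nonneg (κ := κ)
  set ε : ℝ := 1 / (9 * D.curvature κ + 1) with hεdef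
  have hε : 0 < ε := by positivity
  have hCε : 9 * D.curvature κ * ε ≤ 1 := by
    rw [hεdef, mul_one_div]
    exact div_le_one_of_le₀ (by linarith) (by linarith)
  have hYc : ∀ i, ContinuousOn (fun z => Y z i) (sphere 0 1) := fun i =>
    (hY i).continuousOn_ball.mono Metric.sphere_subset_closedBall
  obtain ⟨H, ⟨hH, hHu, hHS⟩, hmin⟩ := exists_forall_sub_lt
    (s := {H : ℂ → Matrix ι ι ℂ | Differentiable ℂ H ∧ (∀ z, IsUnit (H z)) ∧
      ∀ z, Commute D.sym (H z)})
    (φ := fun H => Real.circleAverage (fun z => D.kempfNess (Y z) (H z)) 0 1 + k * logSize (H 0))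
    (c := ε * δ ^ 2 / 4)
    ⟨fun _ => 1, differentiable_const _, fun _ => isUnit_one, fun _ => Commute.one_right _⟩
    ⟨D.kempfNess (Y 0) 1, by
      rintro _ ⟨H, ⟨hH, hHu, hHS⟩, rfl⟩
      have hconvex := D.kempfNess_sub_le h0 isUnit_one (hHu 0) (hHS 0)
      simp only [Matrix.one_mul, Matrix.mul_one] at hconvex
      have := D.kempfNess_le_circleAverage hY h0 hs hH hHu
      change _ ≤ _ + _
      linarith⟩ (by positivity)
  obtain ⟨H', hH', hle⟩ := D.exists_entire_descent hYc hs hH hHu hHS hδ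
    (fun z hz => hbound z hz _ (hHu z) (hHS z)) hε hCε (by positivity : 0 ≤ k) (by linarith)
  exact absurd hle (not_le.2 (hmin H' hH'))

end WeightedFamily

section Flags

variable {ι : Type*} {m : ℕ}

/-- The first `i + 1` columns of a matrix: a frame of the `i`-th subspace of the flag spanned by
the columns. -/
def firstCols (c : Matrix ι (Fin m) ℂ) (i : Fin m) : Matrix ι (Fin (i + 1)) ℂ :=
  c.submatrix id (Fin.castLE i.2)

lemma gram_firstCols [Fintype ι] (c : Matrix ι (Fin m) ℂ) (i : Fin m) :
    (firstCols c i)ᴴ * firstCols c i = (cᴴ * c).submatrix (Fin.castLE i.2) (Fin.castLE i.2) :=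
  rfl

lemma posDef_gram_firstCols [Fintype ι] {c : Matrix ι (Fin m) ℂ} (hc : (cᴴ * c).PosDef)
    (i : Fin m) : ((firstCols c i)ᴴ * firstCols c i).PosDef :=
  gram_firstCols c i ▸ hc.submatrix (Fin.castLE_injective i.2)

lemma mem_range_castLE {i k : Fin m} : k ∈ Set.range (Fin.castLE i.2) ↔ k ≤ i := by
  refine ⟨?_, fun h => ⟨⟨k, Nat.lt_succ_of_le h⟩, rfl⟩⟩
  rintro ⟨l, rfl⟩
  exact Nat.le_of_lt_succ l.2

lemma firstCols_mul (c : Matrix ι (Fin m) ℂ) {R : Matrix (Fin m) (Fin m) ℂ}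
    (hR : R.IsUpperTriangular) (i : Fin m) :
    firstCols (c * R) i = firstCols c i * R.submatrix (Fin.castLE i.2) (Fin.castLE i.2) := by
  ext a b
  refine (Fintype.sum_of_injective _ (Fin.castLE_injective i.2) _ _ (fun k hk => ?_)
    fun k => rfl).symm
  rw [mem_range_castLE, not_le] at hk
  have hzero : R k (Fin.castLE i.2 b) = 0 := hR ((mem_range_castLE.1 ⟨b, rfl⟩).trans_lt hk)
  exact (congrArg _ hzero).trans (mul_zero _)

lemma isUnit_submatrix_castLE {R : Matrix (Fin m) (Fin m) ℂ} (hR : R.IsUpperTriangular)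
    (hRu : IsUnit R) (i : Fin m) :
    IsUnit (R.submatrix (Fin.castLE i.2) (Fin.castLE i.2)) := by
  have hR' : (R.submatrix (Fin.castLE i.2) (Fin.castLE i.2)).IsUpperTriangular :=
    fun a b hab => hR hab
  rw [Matrix.isUnit_iff_isUnit_det, det_of_isUpperTriangular hR, isUnit_iff_ne_zero,
    Finset.prod_ne_zero_iff] at hRu
  rw [Matrix.isUnit_iff_isUnit_det, det_of_isUpperTriangular hR', isUnit_iff_ne_zero]
  exact Finset.prod_ne_zero_iff.2 fun a _ => hRu _ (Finset.mem_univ _)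

lemma colProj_firstCols_mul [Fintype ι] (c : Matrix ι (Fin m) ℂ) {R : Matrix (Fin m) (Fin m) ℂ}
    (hR : R.IsUpperTriangular) (hRu : IsUnit R) (i : Fin m) :
    colProj (firstCols (c * R) i) = colProj (firstCols c i) := by
  rw [firstCols_mul c hR, colProj_mul_right _ (isUnit_submatrix_castLE hR hRu i)]

lemma colProj_firstCols_of_isometry [Fintype ι] {Q : Matrix ι (Fin m) ℂ} (hQ : Qᴴ * Q = 1)
    (i : Fin m) : colProj (firstCols Q i) =
      Q * diagonal (fun k => ((if k ≤ i then 1 else 0 : ℝ) : ℂ)) * Qᴴ := by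
  have hiso : (firstCols Q i)ᴴ * firstCols Q i = 1 := by
    rw [gram_firstCols, hQ, submatrix_one _ (Fin.castLE_injective _)]
  rw [colProj_of_isometry hiso]
  ext a b
  rw [Matrix.mul_apply, Matrix.mul_apply]
  simp only [firstCols, mul_diagonal, conjTranspose_apply, submatrix_apply, id]
  refine Fintype.sum_of_injective _ (Fin.castLE_injective i.2) _ _ (fun k hk => ?_) fun k => ?_
  · rw [if_neg (mt mem_range_castLE.2 hk)]
    simp
  · rw [if_pos (mem_range_castLE.1 ⟨k, rfl⟩)]
    simp

lemma exists_isUpperTriangular_gram_mul_eq_one [Fintype ι] {c : Matrix ι (Fin m) ℂ}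
    (hc : (cᴴ * c).PosDef) :
    ∃ R : Matrix (Fin m) (Fin m) ℂ, R.IsUpperTriangular ∧ IsUnit R ∧
      (c * R)ᴴ * (c * R) = 1 := by
  have hD := LDL.diag_eq_lowerInv_conj hc
  have htri : ∀ i j, i < j → LDL.lowerInv hc i j = 0 := fun i j => LDL.lowerInv_triangular hc
  have hL : IsUnit (LDL.lowerInv hc) := isUnit_of_invertible _
  generalize LDL.lowerInv hc = L at hD htri hL
  have hpos : (diagonal (LDL.diagEntries hc)).PosDef :=
    (show diagonal _ = _ from hD) ▸
      hc.mul_mul_conjTranspose_same (Matrix.vecMul_injective_of_isUnit hL)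
  obtain ⟨f, hf⟩ := exists_diagonal_mul_mul_diagonal_eq_one (posDef_diagonal_iff.1 hpos)
  have hgram : (c * (Lᴴ * diagonal f))ᴴ * (c * (Lᴴ * diagonal f)) = 1 := by
    calc (c * (Lᴴ * diagonal f))ᴴ * (c * (Lᴴ * diagonal f))
        = (diagonal f)ᴴ * (L * (cᴴ * c) * Lᴴ) * diagonal f := by
          simp only [conjTranspose_mul, conjTranspose_conjTranspose, Matrix.mul_assoc]
      _ = 1 := by rw [← hD]; exact hf
  refine ⟨Lᴴ * diagonal f, fun i j hij => ?_, ?_, hgram⟩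
  · rw [mul_diagonal, conjTranspose_apply, htri j i hij, star_zero, zero_mul]
  · rw [gram_mul_right] at hgram
    exact IsUnit.of_mul_eq_one_right _ hgram

/-- The vector `w` shifted by `C` and extended by zero. -/
noncomputable def shiftedExt (C : ℝ) (w : Fin m → ℝ) (j : ℕ) : ℝ :=
  if h : j < m then w ⟨j, h⟩ + C else 0

/-- The weight of the `i`-th subspace of a flag which makes the weighted sum of the projections onto
the subspaces have eigenvalues `w i + C`. -/
noncomputable def flagWt (C : ℝ) (w : Fin m → ℝ) (i : Fin m) : ℝ :=
  shiftedExt C w i - shiftedExt C w (i + 1)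

lemma flagWt_nonneg {C : ℝ} {w : Fin m → ℝ} (hw : Antitone w) (hC : ∀ i, -C ≤ w i) (i : Fin m) :
    0 ≤ flagWt C w i := by
  rw [flagWt, shiftedExt, shiftedExt, dif_pos i.2]
  split_ifs with h
  · have : w ⟨i + 1, h⟩ ≤ w ⟨i, i.2⟩ := hw (Nat.le_succ _)
    linarith
  · linarith [hC i]

lemma sum_flagWt (C : ℝ) (w : Fin m → ℝ) (j : Fin m) :
    ∑ i : Fin m, flagWt C w i * (if j ≤ i then 1 else 0) = w j + C := by
  have hrange : ∑ i : Fin m, flagWt C w i * (if j ≤ i then 1 else 0) =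
      ∑ i ∈ Finset.range m, if (j : ℕ) ≤ i then shiftedExt C w i - shiftedExt C w (i + 1) else 0 :=
    (Finset.sum_congr rfl fun i _ => mul_boole _ _).trans <| Fin.sum_univ_eq_sum_range
      (fun i => if (j : ℕ) ≤ i then shiftedExt C w i - shiftedExt C w (i + 1) else 0) m
  have hfilter : (Finset.range m).filter (fun i => (j : ℕ) ≤ i) = Finset.Ico (j : ℕ) m := by
    ext i; simp [and_comm]
  rw [hrange, ← Finset.sum_filter, hfilter,
    ← neg_inj, ← Finset.sum_neg_distrib]
  simp only [neg_sub]
  rw [Finset.sum_Ico_sub _ j.2.le]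
  simp [shiftedExt]

/-- For an isometry `Q`, the self-adjoint matrix with eigenvectors the columns of `Q` and
eigenvalues `w`; it vanishes on the orthogonal complement of the columns. -/
noncomputable def spec (w : Fin m → ℝ) (Q : Matrix ι (Fin m) ℂ) : Matrix ι ι ℂ :=
  Q * diagonal (fun i => (w i : ℂ)) * Qᴴ

lemma spec_mul_left {ι' : Type*} [Fintype ι] (w : Fin m → ℝ) (B : Matrix ι' ι ℂ)
    (Q : Matrix ι (Fin m) ℂ) : spec w (B * Q) = B * spec w Q * Bᴴ := by
  simp only [spec, conjTranspose_mul, Matrix.mul_assoc]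

lemma sum_flagWt_smul_colProj [Fintype ι] (C : ℝ) (w : Fin m → ℝ) {Q : Matrix ι (Fin m) ℂ}
    (hQ : Qᴴ * Q = 1) :
    ∑ i, (flagWt C w i : ℂ) • colProj (firstCols Q i) = spec w Q + (C : ℂ) • (Q * Qᴴ) := by
  have hdiag : ∑ i, (flagWt C w i : ℂ) • diagonal (fun k => ((if k ≤ i then 1 else 0 : ℝ) : ℂ)) =
      diagonal (fun k => (w k : ℂ)) + (C : ℂ) • (1 : Matrix (Fin m) (Fin m) ℂ) := by
    rw [smul_one_eq_diagonal, diagonal_add]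
    simp only [← diagonal_smul]
    refine (map_sum (diagonalAddMonoidHom (Fin m) ℂ) _ _).symm.trans
      (congrArg diagonal (funext fun k => ?_))
    rw [← Complex.ofReal_add, ← sum_flagWt C w k, Finset.sum_apply]
    simp only [Pi.smul_apply, smul_eq_mul, Complex.ofReal_sum, Complex.ofReal_mul]
  calc ∑ i, (flagWt C w i : ℂ) • colProj (firstCols Q i)
      = Q * (∑ i, (flagWt C w i : ℂ) •
          diagonal (fun k => ((if k ≤ i then 1 else 0 : ℝ) : ℂ))) * Qᴴ := by
        simp only [colProj_firstCols_of_isometry hQ, Matrix.mul_sum, Matrix.sum_mul,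
          Matrix.mul_smul, Matrix.smul_mul]
    _ = spec w Q + (C : ℂ) • (Q * Qᴴ) := by
        rw [hdiag, Matrix.mul_add, Matrix.add_mul, Matrix.mul_smul, Matrix.smul_mul,
          Matrix.mul_one, spec]

end Flags

section Isotropic

variable {ι : Type*} [Fintype ι] {J : Matrix ι ι ℂ} {m : ℕ} {c : Matrix ι (Fin m) ℂ}

/-- The columns of `c` are linearly independent and span an isotropic flag for the Hermitian form
`J`: the orthogonal for `J` of the span of the first `i` columns contains the span of the first
`m - i` columns. -/
structure IsIsotropic (J : Matrix ι ι ℂ) (c : Matrix ι (Fin m) ℂ) : Prop where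
  posDef_gram : (cᴴ * c).PosDef
  apply_eq_zero : ∀ i j : Fin m, i < j.rev → (cᴴ * J * c) i j = 0

lemma IsIsotropic.mul_left [DecidableEq ι] (hc : IsIsotropic J c) {g : Matrix ι ι ℂ}
    (hg : IsUnit g) (hgJ : gᴴ * J * g = J) : IsIsotropic J (g * c) := by
  refine ⟨posDef_gram_mul_left (Matrix.mulVec_injective_of_isUnit hg) hc.posDef_gram,
    fun i j hij => ?_⟩
  have hform : (g * c)ᴴ * J * (g * c) = cᴴ * J * c := by
    conv_rhs => rw [← hgJ]
    simp only [conjTranspose_mul, Matrix.mul_assoc]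
  rw [hform, hc.apply_eq_zero i j hij]

lemma IsIsotropic.mul_right (hc : IsIsotropic J c) {R : Matrix (Fin m) (Fin m) ℂ}
    (hR : R.IsUpperTriangular) (hRu : IsUnit R) : IsIsotropic J (c * R) := by
  refine ⟨posDef_gram_mul_right hc.posDef_gram hRu, fun i j hij => ?_⟩
  have hform : (c * R)ᴴ * J * (c * R) = Rᴴ * (cᴴ * J * c) * R := by
    simp only [conjTranspose_mul, Matrix.mul_assoc]
  rw [hform, Matrix.mul_apply]
  refine Finset.sum_eq_zero fun l _ => ?_
  obtain hl | hl := lt_or_ge j l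
  · rw [hR hl, mul_zero]
  rw [Matrix.mul_apply, Finset.sum_eq_zero, zero_mul]
  intro k _
  obtain hk | hk := lt_or_ge i k
  · rw [conjTranspose_apply, hR hk, star_zero, zero_mul]
  · rw [hc.apply_eq_zero k l ((hk.trans_lt hij).trans_le (Fin.rev_le_rev.2 hl)), mul_zero]

lemma apply_eq_zero_of_isUpperTriangular_of_isometry {U : Matrix (Fin m) (Fin m) ℂ}
    (hU : U.IsUpperTriangular) (hUU : Uᴴ * U = 1) {i j : Fin m} (hij : i ≠ j) : U i j = 0 := by
  obtain hij | hij := lt_or_gt_of_ne hij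
  · let _ : Invertible U := invertibleOfLeftInverse U Uᴴ hUU
    have hinv := blockTriangular_inv_of_blockTriangular hU
    rw [Matrix.inv_eq_left_inv hUU] at hinv
    exact star_eq_zero.1 (hinv hij)
  · exact hU hij

lemma apply_eq_zero_of_antitriangular_of_isometry {T : Matrix (Fin m) (Fin m) ℂ}
    (hT : ∀ i j : Fin m, i < j.rev → T i j = 0) (hTT : Tᴴ * T = 1) {i j : Fin m}
    (hij : j ≠ i.rev) : T i j = 0 := by
  have hU : (T.submatrix Fin.rev id).IsUpperTriangular :=
    fun a b hab => hT a.rev b (Fin.rev_lt_rev.2 hab)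
  have hUU : (T.submatrix Fin.rev id)ᴴ * T.submatrix Fin.rev id = 1 :=
    (submatrix_mul_equiv Tᴴ T id Fin.revPerm id).trans (by rw [hTT, submatrix_id_id])
  have h := apply_eq_zero_of_isUpperTriangular_of_isometry hU hUU hij.symm
  rwa [submatrix_apply, Fin.rev_rev, id] at h

/-- The Gram matrix of the form with respect to an orthonormal isotropic frame is both
antitriangular and unitary, hence antidiagonal. -/
lemma IsIsotropic.spec_mul [DecidableEq ι] (hJ : J.IsHermitian) (hJ2 : J * J = 1)
    (hc : IsIsotropic J c) (hcc : cᴴ * c = 1) (hcc' : c * cᴴ = 1) {w : Fin m → ℝ}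
    (hw : ∀ i, w i.rev = -w i) : spec w c * J = -(J * spec w c) := by
  set T := cᴴ * J * c with hT
  have hcT : c * T = J * c := by
    rw [hT, ← Matrix.mul_assoc, ← Matrix.mul_assoc, hcc', Matrix.one_mul]
  have hTc : T * cᴴ = cᴴ * J := by
    rw [hT, Matrix.mul_assoc, hcc', Matrix.mul_one]
  have hTT : Tᴴ * T = 1 := by
    rw [hT, conjTranspose_mul, conjTranspose_mul, conjTranspose_conjTranspose, hJ.eq,
      Matrix.mul_assoc, Matrix.mul_assoc, hcT, ← Matrix.mul_assoc J, hJ2, Matrix.one_mul, hcc]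
  have hanti : diagonal (fun i => (w i : ℂ)) * T = -(T * diagonal (fun i => (w i : ℂ))) := by
    ext i j
    rw [diagonal_mul, neg_apply, mul_diagonal]
    by_cases hij : j = i.rev
    · rw [hij, hw]; push_cast; ring
    · have hzero : T i j = 0 :=
        apply_eq_zero_of_antitriangular_of_isometry hc.apply_eq_zero hTT hij
      rw [hzero]; simp
  calc spec w c * J = c * (diagonal (fun i => (w i : ℂ)) * T) * cᴴ := by
        rw [spec, Matrix.mul_assoc, ← hTc]; simp only [Matrix.mul_assoc]
    _ = -(J * spec w c) := by
        rw [hanti, Matrix.mul_neg, Matrix.neg_mul, ← Matrix.mul_assoc c, hcT, spec]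
        simp only [Matrix.mul_assoc]

end Isotropic

section UnitaryDisc

variable {ι : Type*} [Fintype ι] [DecidableEq ι]

/-- The singular value decomposition of an invertible matrix, up to the phases of the diagonal
entries. -/
lemma exists_eq_unitary_mul_diagonal_mul {g : Matrix ι ι ℂ} (hg : IsUnit g) :
    ∃ (U V : Matrix ι ι ℂ) (d : ι → ℂ), Uᴴ * U = 1 ∧ Vᴴ * V = 1 ∧ g = U * diagonal d * Vᴴ := by
  have hpos := posDef_gram_of_isUnit hg
  obtain ⟨V, hV, hgV⟩ := exists_unitary_diagonal hpos.1
  have hV' : V * Vᴴ = 1 := mul_eq_one_comm.1 hV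
  obtain ⟨f, hf⟩ := exists_diagonal_mul_mul_diagonal_eq_one
    (d := fun i => (hpos.1.eigenvalues i : ℂ)) fun i => by exact_mod_cast hpos.eigenvalues_pos i
  set D : Matrix ι ι ℂ := diagonal fun i => (hpos.1.eigenvalues i : ℂ) with hD
  refine ⟨g * V * diagonal f, V, star f * fun i => (hpos.1.eigenvalues i : ℂ), ?_, hV, ?_⟩
  · calc (g * V * diagonal f)ᴴ * (g * V * diagonal f)
        = (diagonal f)ᴴ * (Vᴴ * (gᴴ * g) * V) * diagonal f := by
          simp only [conjTranspose_mul, Matrix.mul_assoc]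
      _ = (diagonal f)ᴴ * ((Vᴴ * V) * D * (Vᴴ * V)) * diagonal f := by
          conv_lhs => rw [hgV]
          simp only [Matrix.mul_assoc]
      _ = 1 := by rw [hV, Matrix.one_mul, Matrix.mul_one, hf]
  · have hfD : diagonal f * diagonal (star f * fun i => (hpos.1.eigenvalues i : ℂ)) = 1 := by
      rw [← hf, hD, diagonal_conjTranspose, diagonal_mul_diagonal, diagonal_mul_diagonal,
        diagonal_mul_diagonal]
      exact congrArg diagonal (funext fun i => mul_comm _ _)
    rw [Matrix.mul_assoc (g * V), hfD, Matrix.mul_one, Matrix.mul_assoc, hV', Matrix.mul_one]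

lemma one_add_conj_mul_ne_zero {a z : ℂ} (ha : ‖a‖ < 1) (hz : ‖z‖ ≤ 1) : 1 + star a * z ≠ 0 := by
  intro h
  have hnorm : ‖star a * z‖ = 1 := by rw [eq_neg_of_add_eq_zero_right h, norm_neg, norm_one]
  rw [norm_mul, norm_star] at hnorm
  nlinarith [norm_nonneg a, norm_nonneg z]

lemma norm_moebius {a z : ℂ} (ha : ‖a‖ < 1) (hz : ‖z‖ = 1) :
    ‖(z + a) / (1 + star a * z)‖ = 1 := by
  have hzz : star z * z = 1 := by
    rw [Complex.star_def, ← Complex.normSq_eq_conj_mul_self, Complex.normSq_eq_norm_sq, hz]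
    simp
  have hden : 1 + star a * z = star (z + a) * z := by rw [star_add, add_mul, hzz]
  rw [norm_div, div_eq_one_iff_eq (norm_ne_zero_iff.2 (one_add_conj_mul_ne_zero ha hz.le)), hden,
    norm_mul, norm_star, hz, mul_one]

/-- Replace the singular values `d i` of `g` by the Möbius transformations
`z ↦ (z + d i) / (1 + conj (d i) * z)`, which preserve the unit circle. -/
lemma exists_diffContOnCl_unitary {g : Matrix ι ι ℂ} (hg : IsUnit g) (hg1 : ‖g‖ < 1) :
    ∃ Φ : ℂ → Matrix ι ι ℂ, DiffContOnCl ℂ Φ (ball 0 1) ∧ Φ 0 = g ∧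
      ∀ z ∈ sphere (0 : ℂ) 1, (Φ z)ᴴ * Φ z = 1 := by
  obtain ⟨U, V, d, hU, hV, rfl⟩ := exists_eq_unitary_mul_diagonal_mul hg
  have hV' : V * Vᴴ = 1 := mul_eq_one_comm.1 hV
  have hnorm : ‖diagonal d‖ = ‖U * diagonal d * Vᴴ‖ := by
    rw [Matrix.mul_assoc, norm_isometry_mul hU, ← frobenius_norm_conjTranspose (_ * _),
      conjTranspose_mul, conjTranspose_conjTranspose, norm_isometry_mul hV,
      frobenius_norm_conjTranspose]
  have hd : ∀ i, ‖d i‖ < 1 := fun i => by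
    have hle := norm_apply_le_frobenius_norm (diagonal d) i i
    rw [diagonal_apply_eq, hnorm] at hle
    exact hle.trans_lt hg1
  refine ⟨fun z => U * diagonal (fun i => (z + d i) / (1 + star (d i) * z)) * Vᴴ, ?_, by simp, ?_⟩
  · refine DifferentiableOn.diffContOnCl_ball (U := Metric.closedBall 0 1) ?_ subset_rfl
    have hf : DifferentiableOn ℂ (fun (z : ℂ) i => (z + d i) / (1 + star (d i) * z))
        (Metric.closedBall 0 1) := by
      refine differentiableOn_pi.2 fun i => DifferentiableOn.fun_div (by fun_prop) (by fun_prop) ?_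
      exact fun z hz => one_add_conj_mul_ne_zero (hd i) (by simpa using hz)
    have hdiag := (LinearMap.toContinuousLinearMap
      (Matrix.diagonalLinearMap ι ℂ ℂ)).differentiable.comp_differentiableOn hf
    exact (hdiag.const_mul U).mul_const Vᴴ
  · intro z hz
    set f : ι → ℂ := fun i => (z + d i) / (1 + star (d i) * z)
    have hff : (diagonal f)ᴴ * diagonal f = 1 := by
      rw [diagonal_conjTranspose, diagonal_mul_diagonal, ← diagonal_one]
      refine congrArg diagonal (funext fun i => ?_)
      rw [Pi.star_apply, Complex.star_def, ← Complex.normSq_eq_conj_mul_self,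
        Complex.normSq_eq_norm_sq, norm_moebius (hd i) (by simpa using hz)]
      simp
    calc (U * diagonal f * Vᴴ)ᴴ * (U * diagonal f * Vᴴ)
        = V * ((diagonal f)ᴴ * (Uᴴ * U) * diagonal f) * Vᴴ := by
          simp only [conjTranspose_mul, conjTranspose_conjTranspose, Matrix.mul_assoc]
      _ = 1 := by rw [hU, Matrix.mul_one, hff, Matrix.mul_one, hV']

end UnitaryDisc

section Density

/-- Invertible matrices which become invertible lower triangular after multiplication by an
invertible upper triangular matrix. -/
def ulSet (m : ℕ) : Set (Matrix (Fin m) (Fin m) ℂ) :=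
  {X | ∃ A : Matrix (Fin m) (Fin m) ℂ, A.IsUpperTriangular ∧ (A * X)ᵀ.IsUpperTriangular ∧
    IsUnit A ∧ IsUnit X}

lemma isUpperTriangular_reindex_fromBlocks {m n : ℕ} {A : Matrix (Fin m) (Fin m) ℂ}
    {D : Matrix (Fin n) (Fin n) ℂ} (hA : A.IsUpperTriangular) (B : Matrix (Fin m) (Fin n) ℂ)
    (hD : D.IsUpperTriangular) :
    (reindex finSumFinEquiv finSumFinEquiv (fromBlocks A B 0 D)).IsUpperTriangular := by
  intro i j hij
  obtain ⟨i, rfl⟩ := finSumFinEquiv.surjective i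
  obtain ⟨j, rfl⟩ := finSumFinEquiv.surjective j
  rw [reindex_apply, submatrix_apply, Equiv.symm_apply_apply, Equiv.symm_apply_apply]
  rcases i with i | i <;> rcases j with j | j <;>
    simp only [id, Fin.lt_def, finSumFinEquiv_apply_left, finSumFinEquiv_apply_right,
      Fin.val_castAdd, Fin.val_natAdd] at hij
  · exact hA hij
  · omega
  · rfl
  · exact hD (Nat.lt_of_add_lt_add_left hij)

/-- The upper triangular factor clears the first row against the lower right block; what remains
in the corner is the Schur complement. -/
lemma reindex_fromBlocks_mem_ulSet {m : ℕ} {X : Matrix (Fin m) (Fin m) ℂ} (hX : X ∈ ulSet m)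
    (b : Matrix (Fin 1) (Fin m) ℂ) (c : Matrix (Fin m) (Fin 1) ℂ) {d : Matrix (Fin 1) (Fin 1) ℂ}
    (hd : (d - b * X⁻¹ * c) 0 0 ≠ 0) :
    reindex finSumFinEquiv finSumFinEquiv (fromBlocks d b c X) ∈ ulSet (1 + m) := by
  obtain ⟨A, hA, hAX, hAu, hXu⟩ := hX
  have hXX : X⁻¹ * X = 1 := Matrix.nonsing_inv_mul X ((Matrix.isUnit_iff_isUnit_det X).1 hXu)
  have hone (E : Matrix (Fin 1) (Fin 1) ℂ) : E.IsUpperTriangular := fun i j hij =>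
    absurd hij (by simp [Subsingleton.elim i j])
  refine ⟨reindex finSumFinEquiv finSumFinEquiv (fromBlocks 1 (-(b * X⁻¹)) 0 A),
    isUpperTriangular_reindex_fromBlocks (hone 1) _ hA, ?_, ?_, ?_⟩
  · have hmul : fromBlocks 1 (-(b * X⁻¹)) 0 A * fromBlocks d b c X =
        fromBlocks (d - b * X⁻¹ * c) 0 (A * c) (A * X) := by
      rw [fromBlocks_multiply, Matrix.neg_mul, Matrix.neg_mul, Matrix.mul_assoc b X⁻¹ X, hXX]
      simp [sub_eq_add_neg]
    rw [reindex_apply, reindex_apply, submatrix_mul_equiv, hmul, transpose_submatrix,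
      fromBlocks_transpose, transpose_zero]
    exact isUpperTriangular_reindex_fromBlocks (hone _) _ hAX
  · exact (isUnit_submatrix_equiv _ _).2 (isUnit_fromBlocks_zero₂₁.2 ⟨isUnit_one, hAu⟩)
  · let _ : Invertible X := hXu.invertible
    rw [reindex_apply, isUnit_submatrix_equiv, isUnit_iff_isUnit_det, det_fromBlocks₂₂,
      invOf_eq_nonsing_inv, det_fin_one]
    exact ((isUnit_iff_isUnit_det X).1 hXu).mul hd.isUnit

lemma dense_ulSet (m : ℕ) : Dense (ulSet m) := by
  induction m with
  | zero =>
    refine fun X => subset_closure ⟨1, fun i => i.elim0, fun i => i.elim0, isUnit_one, ?_⟩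
    rw [Subsingleton.elim X 1]
    exact isUnit_one
  | succ m ih =>
    rw [add_comm]
    intro X
    obtain ⟨Y, rfl⟩ := (reindex (α := ℂ) (finSumFinEquiv (m := 1) (n := m))
      finSumFinEquiv).surjective X
    obtain ⟨a, b, c, D, rfl⟩ : ∃ a b c D, Y = fromBlocks a b c D :=
      ⟨_, _, _, _, (fromBlocks_toBlocks Y).symm⟩
    let f (d : Matrix (Fin 1) (Fin 1) ℂ) (X : Matrix (Fin m) (Fin m) ℂ) :
        Matrix (Fin (1 + m)) (Fin (1 + m)) ℂ :=
      reindex finSumFinEquiv finSumFinEquiv (fromBlocks d b c X)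
    have hf : Continuous fun x : Matrix (Fin 1) (Fin 1) ℂ × _ => f x.1 x.2 :=
      (continuous_fst.matrix_fromBlocks continuous_const continuous_const
        continuous_snd).matrix_submatrix _ _
    have hcorner (X) (hX : X ∈ ulSet m) (d) : f d X ∈ closure (ulSet (1 + m)) := by
      set e := b * X⁻¹ * c
      have hg : Continuous fun z : ℂ => f (e + z • 1) X :=
        hf.comp₂ (by fun_prop) continuous_const
      have hz : (d - e) 0 0 ∈ closure ({0}ᶜ : Set ℂ) := dense_compl_singleton 0 _
      have hde : d = e + (d - e) 0 0 • 1 := by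
        ext i j
        rw [Subsingleton.elim i 0, Subsingleton.elim j 0]
        simp
      rw [hde]
      refine map_mem_closure (f := fun z : ℂ => f (e + z • 1) X) hg hz fun z hz => ?_
      exact reindex_fromBlocks_mem_ulSet hX b c (by simpa [e] using hz)
    have hY := map_mem_closure (hf.comp₂ continuous_const continuous_id) (ih D)
      fun X hX => hcorner X hX a
    rwa [closure_closure] at hY

lemma dense_isUnit (m : ℕ) : Dense {X : Matrix (Fin m) (Fin m) ℂ | IsUnit X} :=
  (dense_ulSet m).mono (by rintro _ ⟨_, _, _, _, hX⟩; exact hX)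

end Density

section StdForm

/-- The Hermitian form of signature `(ν, ν)`. -/
def stdForm (ν : Type*) [DecidableEq ν] : Matrix (ν ⊕ ν) (ν ⊕ ν) ℂ := fromBlocks 1 0 0 (-1)

section

variable {ν : Type*} [DecidableEq ν]

lemma isHermitian_stdForm : (stdForm ν).IsHermitian := by
  simp [Matrix.IsHermitian, stdForm, fromBlocks_conjTranspose]

variable [Fintype ν]

lemma stdForm_mul_stdForm : stdForm ν * stdForm ν = 1 := by
  simp [stdForm, fromBlocks_multiply]

lemma fromBlocks_mul_stdForm_mul_fromBlocks {K L : Matrix ν ν ℂ} (hK : Kᴴ * K = 1)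
    (hL : Lᴴ * L = 1) :
    (fromBlocks K 0 0 L)ᴴ * stdForm ν * fromBlocks K 0 0 L = stdForm ν := by
  simp [stdForm, fromBlocks_conjTranspose, fromBlocks_multiply, hK, hL]

end

variable {k : ℕ}

/-- The order `e₁ < … < e_k < f_k < … < f₁` on two copies of a `k`-element basis, for which
reversal exchanges the copies. -/
def hatEquiv (k : ℕ) : Fin k ⊕ Fin k ≃ Fin (k + k) :=
  ((Equiv.refl _).sumCongr Fin.revPerm).trans finSumFinEquiv

@[simp] lemma hatEquiv_inl (i : Fin k) : hatEquiv k (Sum.inl i) = Fin.castAdd k i := rfl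

@[simp] lemma hatEquiv_inr (i : Fin k) : hatEquiv k (Sum.inr i) = Fin.natAdd k i.rev := rfl

lemma rev_hatEquiv (x : Fin k ⊕ Fin k) : (hatEquiv k x).rev = hatEquiv k x.swap := by
  rcases x with i | i <;> ext <;> simp [Fin.val_rev] <;> omega

/-- The frame with first halves of the columns `x`, `x'` and second halves `y`, `y'`, in reversed
order, relative to the decomposition of the space into its positive and negative parts. -/
def blockFrame (x y x' y' : Matrix (Fin k) (Fin k) ℂ) :
    Matrix (Fin k ⊕ Fin k) (Fin (k + k)) ℂ :=
  (fromBlocks x y x' y').submatrix id (hatEquiv k).symm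

lemma isIsotropic_blockFrame_one :
    IsIsotropic (stdForm (Fin k)) (blockFrame 1 1 1 (-1)) := by
  constructor
  · have hgram : (fromBlocks 1 1 1 (-1))ᴴ * fromBlocks 1 1 1 (-1) =
        (2 : ℂ) • (1 : Matrix (Fin k ⊕ Fin k) (Fin k ⊕ Fin k) ℂ) := by
      rw [← fromBlocks_one, fromBlocks_smul]
      simp [fromBlocks_conjTranspose, fromBlocks_multiply, two_smul]
    have hpos := (Matrix.PosDef.one (n := Fin k ⊕ Fin k) (R := ℂ)).smul (two_pos : (0 : ℂ) < 2)
    rw [← hgram] at hpos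
    exact hpos.submatrix (hatEquiv k).symm.injective
  · intro i j hij
    have hform : (fromBlocks 1 1 1 (-1))ᴴ * stdForm (Fin k) * fromBlocks 1 1 1 (-1) =
        fromBlocks 0 ((2 : ℂ) • 1) ((2 : ℂ) • 1) 0 := by
      simp [stdForm, fromBlocks_conjTranspose, fromBlocks_multiply, two_smul]
    refine (congrFun₂ hform ((hatEquiv k).symm i) ((hatEquiv k).symm j)).trans ?_
    obtain ⟨x, rfl⟩ := (hatEquiv k).surjective i
    obtain ⟨y, rfl⟩ := (hatEquiv k).surjective j
    rw [Equiv.symm_apply_apply, Equiv.symm_apply_apply]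
    have hxy : x ≠ y.swap := by
      rintro rfl
      exact lt_irrefl _ (rev_hatEquiv y ▸ hij)
    rcases x with x | x <;> rcases y with y | y <;> simp_all

lemma isUpperTriangular_reindex_hatEquiv {A N B : Matrix (Fin k) (Fin k) ℂ}
    (hA : A.IsUpperTriangular) (hB : Bᵀ.IsUpperTriangular) :
    (reindex (hatEquiv k) (hatEquiv k) (fromBlocks A N 0 B)).IsUpperTriangular := by
  have h := isUpperTriangular_reindex_fromBlocks hA (N.submatrix id Fin.rev)
    (D := B.submatrix Fin.rev Fin.rev) fun i j hij => hB (Fin.rev_lt_rev.2 hij)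
  convert h using 1
  ext i j
  obtain ⟨i, rfl⟩ := finSumFinEquiv.surjective i
  obtain ⟨j, rfl⟩ := finSumFinEquiv.surjective j
  rcases i with i | i <;> rcases j with j | j <;>
    simp [hatEquiv, -finSumFinEquiv_apply_left, -finSumFinEquiv_apply_right]

/-- Frames obtained from isotropic ones by acting on the positive and negative parts of the space
separately. -/
def isotropicTranslates (k : ℕ) : Set (Matrix (Fin k ⊕ Fin k) (Fin (k + k)) ℂ) :=
  {c | ∃ K L b, IsUnit K ∧ IsUnit L ∧ IsIsotropic (stdForm (Fin k)) b ∧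
    c = fromBlocks K 0 0 L * b}

lemma posDef_gram_of_mem_isotropicTranslates {c : Matrix (Fin k ⊕ Fin k) (Fin (k + k)) ℂ}
    (hc : c ∈ isotropicTranslates k) : (cᴴ * c).PosDef := by
  obtain ⟨K, L, b, hK, hL, hb, rfl⟩ := hc
  exact posDef_gram_mul_left (mulVec_injective_of_isUnit (isUnit_fromBlocks_zero₂₁.2 ⟨hK, hL⟩))
    hb.posDef_gram

/-- Write `A * D = B` with `A` upper and `B` lower triangular. The frame is the image of the
standard one `blockFrame 1 1 1 (-1)` under `fromBlocks A (N + B) 0 B` on the right and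
`fromBlocks (K * A⁻¹) 0 0 (L * A⁻¹)` on the left, where `N = A * V`. -/
lemma blockFrame_mem_isotropicTranslates {K L D : Matrix (Fin k) (Fin k) ℂ} (hK : IsUnit K)
    (hL : IsUnit L) (hD : D ∈ ulSet k) (V : Matrix (Fin k) (Fin k) ℂ) :
    blockFrame K (K * (V + D)) L (L * (V - D)) ∈ isotropicTranslates k := by
  obtain ⟨A, hA, hAD, hAu, hDu⟩ := hD
  have hAA : A⁻¹ * A = 1 := Matrix.nonsing_inv_mul A ((Matrix.isUnit_iff_isUnit_det A).1 hAu)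
  have hAi : IsUnit A⁻¹ := isUnit_nonsing_inv_iff.2 hAu
  refine ⟨K * A⁻¹, L * A⁻¹, _, hK.mul hAi, hL.mul hAi, isIsotropic_blockFrame_one.mul_right
    (isUpperTriangular_reindex_hatEquiv (N := A * V) hA hAD)
    ((isUnit_submatrix_equiv _ _).2 (isUnit_fromBlocks_zero₂₁.2 ⟨hAu, hAu.mul hDu⟩)), ?_⟩
  have hmul : fromBlocks (K * A⁻¹) 0 0 (L * A⁻¹) *
      (fromBlocks 1 1 1 (-1) * fromBlocks A (A * V) 0 (A * D)) =
      fromBlocks K (K * (V + D)) L (L * (V - D)) := by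
    simp only [fromBlocks_multiply, Matrix.one_mul, Matrix.mul_zero, Matrix.zero_mul, add_zero,
      zero_add, Matrix.neg_mul, ← Matrix.mul_add, ← sub_eq_add_neg, ← Matrix.mul_sub]
    simp only [Matrix.mul_assoc, ← Matrix.mul_assoc A⁻¹ A, hAA, Matrix.one_mul, Matrix.mul_one]
  rw [blockFrame, ← hmul, blockFrame, reindex_apply, submatrix_mul_equiv,
    submatrix_mul _ _ id id _ Function.bijective_id, submatrix_id_id]
  rfl

@[fun_prop]
lemma continuous_blockFrame {α : Type*} [TopologicalSpace α]
    {x y x' y' : α → Matrix (Fin k) (Fin k) ℂ} (hx : Continuous x) (hy : Continuous y)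
    (hx' : Continuous x') (hy' : Continuous y') :
    Continuous fun a => blockFrame (x a) (y a) (x' a) (y' a) :=
  (hx.matrix_fromBlocks hy hx' hy').matrix_submatrix _ _

lemma dense_isotropicTranslates (k : ℕ) : Dense (isotropicTranslates k) := by
  have hunit {x x' : Matrix (Fin k) (Fin k) ℂ} (hx : IsUnit x) (hx' : IsUnit x')
      (y y' : Matrix (Fin k) (Fin k) ℂ) :
      blockFrame x y x' y' ∈ closure (isotropicTranslates k) := by
    have hxx : x * x⁻¹ = 1 := Matrix.mul_nonsing_inv x ((Matrix.isUnit_iff_isUnit_det x).1 hx)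
    have hxx' : x' * x'⁻¹ = 1 :=
      Matrix.mul_nonsing_inv x' ((Matrix.isUnit_iff_isUnit_det x').1 hx')
    obtain ⟨V, D, hy, hy'⟩ : ∃ V D, y = x * (V + D) ∧ y' = x' * (V - D) := by
      refine ⟨(2 : ℂ)⁻¹ • (x⁻¹ * y + x'⁻¹ * y'), (2 : ℂ)⁻¹ • (x⁻¹ * y - x'⁻¹ * y'), ?_, ?_⟩
      · rw [← smul_add, add_add_sub_cancel, ← two_smul ℂ, smul_smul, inv_mul_cancel₀ two_ne_zero,
          one_smul, ← Matrix.mul_assoc, hxx, Matrix.one_mul]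
      · rw [← smul_sub, add_sub_sub_cancel, ← two_smul ℂ, smul_smul, inv_mul_cancel₀ two_ne_zero,
          one_smul, ← Matrix.mul_assoc, hxx', Matrix.one_mul]
    rw [hy, hy']
    exact map_mem_closure (f := fun D => blockFrame x (x * (V + D)) x' (x' * (V - D)))
      (by fun_prop) (dense_ulSet k D)
      fun D hD => blockFrame_mem_isotropicTranslates hx hx' hD V
  intro c
  obtain ⟨x, y, x', y', rfl⟩ : ∃ x y x' y', c = blockFrame x y x' y' :=
    ⟨_, _, _, _, by rw [blockFrame, fromBlocks_toBlocks (c.submatrix id (hatEquiv k))]; simp⟩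
  have hclosure := map_mem_closure (t := closure (isotropicTranslates k))
    (f := fun z : Matrix (Fin k) (Fin k) ℂ × Matrix (Fin k) (Fin k) ℂ => blockFrame z.1 y z.2 y')
    (by fun_prop) ((dense_isUnit k).prod (dense_isUnit k) (x, x'))
    fun z hz => hunit hz.1 hz.2 y y'
  rwa [closure_closure] at hclosure

end StdForm

section TranslatesDisc

lemma diffContOnCl_fromBlocks_diagonal {ν : Type*} [Fintype ν] {M N : ℂ → Matrix ν ν ℂ} {s : Set ℂ}
    (hM : DiffContOnCl ℂ M s) (hN : DiffContOnCl ℂ N s) :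
    DiffContOnCl ℂ (fun z => fromBlocks (M z) 0 0 (N z)) s := by
  let blockDiag : Matrix ν ν ℂ × Matrix ν ν ℂ →ₗ[ℂ] Matrix (ν ⊕ ν) (ν ⊕ ν) ℂ :=
    { toFun := fun X => fromBlocks X.1 0 0 X.2
      map_add' := fun X Y => by simp [fromBlocks_add]
      map_smul' := fun a X => by simp [fromBlocks_smul] }
  exact blockDiag.toContinuousLinearMap.differentiable.comp_diffContOnCl (g := fun z => (M z, N z))
    ⟨hM.differentiableOn.prodMk hN.differentiableOn, hM.continuousOn.prodMk hN.continuousOn⟩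

/-- Write `c` as a translate of an isotropic frame by the blocks `K` and `L`. After rescaling, both
blocks are the centers of analytic discs of matrices with unitary boundary values, and the unitary
block matrices preserve the form. -/
lemma exists_diffContOnCl_isIsotropic {k : ℕ} {c : Matrix (Fin k ⊕ Fin k) (Fin (k + k)) ℂ}
    (hc : c ∈ isotropicTranslates k) :
    ∃ Y : ℂ → Matrix (Fin k ⊕ Fin k) (Fin (k + k)) ℂ, DiffContOnCl ℂ Y (ball 0 1) ∧ Y 0 = c ∧
      ∀ z ∈ sphere (0 : ℂ) 1, IsIsotropic (stdForm (Fin k)) (Y z) := by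
  obtain ⟨K, L, b, hK, hL, hb, rfl⟩ := hc
  obtain ⟨r, hr, hrK, hrL⟩ : ∃ r : ℝ, 0 < r ∧ r * ‖K‖ < 1 ∧ r * ‖L‖ < 1 := by
    refine ⟨(‖K‖ + ‖L‖ + 1)⁻¹, by positivity, ?_, ?_⟩ <;>
      · rw [inv_mul_lt_iff₀ (by positivity)]
        linarith [norm_nonneg K, norm_nonneg L]
  have hr' : (r : ℂ) ≠ 0 := Complex.ofReal_ne_zero.2 hr.ne'
  have hdisc {M : Matrix (Fin k) (Fin k) ℂ} (hM : IsUnit M) (hrM : r * ‖M‖ < 1) :=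
    exists_diffContOnCl_unitary (hM.smul (Units.mk0 (r : ℂ) hr'))
      (by rwa [Units.smul_mk0, norm_smul, Complex.norm_real, Real.norm_of_nonneg hr.le])
  obtain ⟨Φ, hΦ, hΦ0, hΦu⟩ := hdisc hK hrK
  obtain ⟨Ψ, hΨ, hΨ0, hΨu⟩ := hdisc hL hrL
  set R : Matrix (Fin (k + k)) (Fin (k + k)) ℂ := diagonal fun _ => (r : ℂ)⁻¹ with hR
  have hRu : IsUnit R := isUnit_diagonal.2 (Pi.isUnit_iff.2 fun _ => (inv_ne_zero hr').isUnit)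
  refine ⟨fun z => fromBlocks (Φ z) 0 0 (Ψ z) * (b * R), ?_, ?_, fun z hz => ?_⟩
  · exact diffContOnCl_matrix_mul (diffContOnCl_fromBlocks_diagonal hΦ hΨ) diffContOnCl_const
  · have hblocks : fromBlocks (Φ 0) 0 0 (Ψ 0) = (r : ℂ) • fromBlocks K 0 0 L := by
      simp [hΦ0, hΨ0, fromBlocks_smul, Units.smul_def]
    simp only [hblocks, hR, ← smul_one_eq_diagonal, Matrix.mul_smul, Matrix.mul_one,
      Matrix.smul_mul, smul_smul, inv_mul_cancel₀ hr', one_smul]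
    rfl
  · exact (hb.mul_right (blockTriangular_diagonal _) hRu).mul_left
      (isUnit_fromBlocks_zero₂₁.2 ⟨IsUnit.of_mul_eq_one_right _ (hΦu z hz),
        IsUnit.of_mul_eq_one_right _ (hΨu z hz)⟩)
      (fromBlocks_mul_stdForm_mul_fromBlocks (hΦu z hz) (hΨu z hz))

end TranslatesDisc

/-- Weighted flags in subspaces of the Hermitian space `(ι → ℂ, form)`. The flag `τ` lives in the
range of an isometry `emb τ` that identifies the restriction of the form with the standard form of
signature `(size τ, size τ)`; its weights are symmetric about zero. The involution `sym` preserves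
the ranges, and the projections onto them add up to `mult` times the identity. -/
structure FlagSystem (ι T : Type*) [Fintype ι] [DecidableEq ι] [Fintype T] where
  sym : Matrix ι ι ℂ
  isHermitian_sym : sym.IsHermitian
  sym_mul_sym : sym * sym = 1
  form : Matrix ι ι ℂ
  isHermitian_form : form.IsHermitian
  commute_sym_form : Commute sym form
  size : T → ℕ
  emb : ∀ τ, Matrix ι (Fin (size τ) ⊕ Fin (size τ)) ℂ
  isometry_emb : ∀ τ, (emb τ)ᴴ * emb τ = 1
  form_mul_emb : ∀ τ, form * emb τ = emb τ * stdForm (Fin (size τ))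
  commute_range : ∀ τ g, Commute sym g → Commute (emb τ * (emb τ)ᴴ) g
  mult : ℕ
  sum_range : ∑ τ, emb τ * (emb τ)ᴴ = (mult : ℂ) • 1
  wt : ∀ τ, Fin (size τ + size τ) → ℝ
  antitone_wt : ∀ τ, Antitone (wt τ)
  wt_rev : ∀ τ i, wt τ i.rev = -wt τ i

namespace FlagSystem

variable {ι T : Type*} [Fintype ι] [DecidableEq ι] [Fintype T] (F : FlagSystem ι T)

/-- Families of frames, one for each flag of the system. -/
abbrev Frames : Type _ :=
  ∀ τ, Matrix (Fin (F.size τ) ⊕ Fin (F.size τ)) (Fin (F.size τ + F.size τ)) ℂ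

/-- A bound for the absolute values of the weights, by which they are shifted to be nonnegative. -/
noncomputable def wtBound : ℝ := ∑ τ, ∑ i, |F.wt τ i|

lemma wtBound_nonneg : 0 ≤ F.wtBound :=
  Finset.sum_nonneg fun _ _ => Finset.sum_nonneg fun _ _ => abs_nonneg _

lemma neg_wtBound_le_wt (τ : T) (i : Fin (F.size τ + F.size τ)) : -F.wtBound ≤ F.wt τ i := by
  refine (neg_le_neg ?_).trans (neg_abs_le _)
  exact (Finset.single_le_sum (f := fun i => |F.wt τ i|) (fun _ _ => abs_nonneg _)
    (Finset.mem_univ i)).trans (Finset.single_le_sum (f := fun τ => ∑ i, |F.wt τ i|)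
      (fun _ _ => Finset.sum_nonneg fun _ _ => abs_nonneg _) (Finset.mem_univ τ))

/-- The weights of all the subspaces occurring in the flags of the system. -/
noncomputable def toWeightedFamily : WeightedFamily ι (Σ τ, Fin (F.size τ + F.size τ)) where
  sym := F.sym
  isHermitian_sym := F.isHermitian_sym
  sym_mul_sym := F.sym_mul_sym
  wt x := flagWt F.wtBound (F.wt x.1) x.2
  wt_nonneg x := flagWt_nonneg (F.antitone_wt x.1) (F.neg_wtBound_le_wt x.1) x.2
  shift := F.wtBound * F.mult
  shift_nonneg := mul_nonneg F.wtBound_nonneg (Nat.cast_nonneg _)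

variable {F}

/-- The family of all the subspaces in the flags given by a family of frames. -/
def subspaces (c : F.Frames) (x : Σ τ, Fin (F.size τ + F.size τ)) : Matrix ι (Fin (x.2 + 1)) ℂ :=
  firstCols (F.emb x.1 * c x.1) x.2

/-- The moment map on families of frames. -/
noncomputable def moment (c : F.Frames) : Matrix ι ι ℂ := F.toWeightedFamily.moment (subspaces c)

/-- The matrix with eigenvectors the columns of an orthonormal frame and eigenvalues `F.wt τ`,
extended by zero. -/
noncomputable def flagSpec (Q : F.Frames) (τ : T) : Matrix ι ι ℂ :=
  F.emb τ * spec (F.wt τ) (Q τ) * (F.emb τ)ᴴ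

lemma posDef_gram_emb_mul {τ : T}
    {c : Matrix (Fin (F.size τ) ⊕ Fin (F.size τ)) (Fin (F.size τ + F.size τ)) ℂ}
    (hc : (cᴴ * c).PosDef) : ((F.emb τ * c)ᴴ * (F.emb τ * c)).PosDef := by
  rwa [conjTranspose_mul, Matrix.mul_assoc, ← Matrix.mul_assoc (F.emb τ)ᴴ, F.isometry_emb,
    Matrix.one_mul]

lemma posDef_gram_subspaces {c : F.Frames} (hc : ∀ τ, ((c τ)ᴴ * c τ).PosDef)
    (x : Σ τ, Fin (F.size τ + F.size τ)) : ((subspaces c x)ᴴ * subspaces c x).PosDef :=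
  posDef_gram_firstCols (posDef_gram_emb_mul (hc x.1)) x.2

lemma mul_conjTranspose_eq_one {k : ℕ} {Q : Matrix (Fin k ⊕ Fin k) (Fin (k + k)) ℂ}
    (hQ : Qᴴ * Q = 1) : Q * Qᴴ = 1 :=
  (mul_eq_one_comm_of_card_eq _ _ _ (by simp)).1 hQ

lemma moment_of_isometry {Q : F.Frames} (hQ : ∀ τ, (Q τ)ᴴ * Q τ = 1) :
    moment Q = pinch F.sym (∑ τ, flagSpec Q τ) := by
  have hflag (τ : T) :
      ∑ i, (flagWt F.wtBound (F.wt τ) i : ℂ) • colProj (firstCols (F.emb τ * Q τ) i) =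
        flagSpec Q τ + (F.wtBound : ℂ) • (F.emb τ * (F.emb τ)ᴴ) := by
    rw [flagSpec, sum_flagWt_smul_colProj, spec_mul_left, conjTranspose_mul,
      Matrix.mul_assoc _ (Q τ), ← Matrix.mul_assoc (Q τ), mul_conjTranspose_eq_one (hQ τ),
      Matrix.one_mul]
    rw [conjTranspose_mul, Matrix.mul_assoc, ← Matrix.mul_assoc (F.emb τ)ᴴ, F.isometry_emb,
      Matrix.one_mul, hQ]
  have hsum : ∑ x, (F.toWeightedFamily.wt x : ℂ) • colProj (subspaces Q x) =
      ∑ τ, flagSpec Q τ + (F.toWeightedFamily.shift : ℂ) • 1 := by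
    rw [Fintype.sum_sigma]
    refine (Finset.sum_congr rfl fun τ _ => hflag τ).trans ?_
    rw [Finset.sum_add_distrib, ← Finset.smul_sum, F.sum_range, smul_smul, toWeightedFamily]
    push_cast
    rfl
  rw [moment, WeightedFamily.moment, hsum, map_add,
    pinch_of_commute F.toWeightedFamily.sym_mul_sym ((Commute.one_right _).smul_right _),
    add_sub_cancel_right]
  rfl

lemma moment_mul_right (c : F.Frames)
    {R : ∀ τ, Matrix (Fin (F.size τ + F.size τ)) (Fin (F.size τ + F.size τ)) ℂ}
    (hR : ∀ τ, (R τ).IsUpperTriangular) (hRu : ∀ τ, IsUnit (R τ)) :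
    moment (fun τ => c τ * R τ : F.Frames) = moment c := by
  have hproj (x : Σ τ, Fin (F.size τ + F.size τ)) :
      colProj (subspaces (fun τ => c τ * R τ : F.Frames) x) = colProj (subspaces c x) := by
    rw [subspaces, ← Matrix.mul_assoc, colProj_firstCols_mul _ (hR x.1) (hRu x.1), subspaces]
  simp only [moment, WeightedFamily.moment, hproj]

/-- Every flag of the family is isotropic. -/
def Isotropic (c : F.Frames) : Prop := ∀ τ, IsIsotropic (stdForm (Fin (F.size τ))) (c τ)

lemma Isotropic.exists_isometry {c : F.Frames} (hc : Isotropic c) :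
    ∃ Q : F.Frames, Isotropic Q ∧ (∀ τ, (Q τ)ᴴ * Q τ = 1) ∧ moment Q = moment c := by
  choose R hR hRu hQ using fun τ =>
    exists_isUpperTriangular_gram_mul_eq_one (hc τ).posDef_gram
  exact ⟨fun τ => c τ * R τ, fun τ => (hc τ).mul_right (hR τ) (hRu τ), hQ,
    moment_mul_right c hR hRu⟩

lemma continuousOn_moment {s : Set F.Frames} (hs : ∀ c ∈ s, ∀ τ, ((c τ)ᴴ * c τ).PosDef) :
    ContinuousOn (fun c : F.Frames => moment c) s := by
  refine F.toWeightedFamily.continuousOn_moment (fun x => Continuous.continuousOn ?_)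
    fun c hc => posDef_gram_subspaces (hs c hc)
  exact (continuous_const.matrix_mul (continuous_apply x.1)).matrix_submatrix _ _

lemma isCompact_isometry_isotropic :
    IsCompact {Q : F.Frames | Isotropic Q ∧ ∀ τ, (Q τ)ᴴ * Q τ = 1} := by
  refine Metric.isCompact_of_isClosed_isBounded ?_ ?_
  · have hset : {Q : F.Frames | Isotropic Q ∧ ∀ τ, (Q τ)ᴴ * Q τ = 1} =
        {Q : F.Frames | ∀ τ i j, i < Fin.rev j →
          ((Q τ)ᴴ * stdForm (Fin (F.size τ)) * Q τ) i j = 0} ∩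
          {Q : F.Frames | ∀ τ, (Q τ)ᴴ * Q τ = 1} := by
      ext Q
      refine and_congr_left fun hQ => ⟨fun h τ => (h τ).apply_eq_zero, fun h τ => ⟨?_, h τ⟩⟩
      rw [hQ τ]
      exact Matrix.PosDef.one
    rw [hset]
    simp only [Set.ofPred_forall]
    refine .inter (isClosed_iInter fun τ => isClosed_iInter fun i => isClosed_iInter fun j =>
      isClosed_iInter fun _ => isClosed_eq (Continuous.matrix_elem ?_ i j) continuous_const)
      (isClosed_iInter fun τ => isClosed_eq ?_ continuous_const) <;> fun_prop
  · refine Bornology.forall_isBounded_image_eval_iff.1 fun τ => ?_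
    refine isBounded_iff_forall_norm_le.2 ⟨√(F.size τ + F.size τ : ℕ), ?_⟩
    rintro _ ⟨Q, hQ, rfl⟩
    refine Real.le_sqrt_of_sq_le ?_
    rw [← trace_conjTranspose_mul_self_re, Function.eval, hQ.2 τ, trace_one]
    simp

lemma exists_pos_le_norm_moment_of_isotropic
    (h : ∀ Q : F.Frames, Isotropic Q → (∀ τ, (Q τ)ᴴ * Q τ = 1) → moment Q ≠ 0) :
    ∃ δ > 0, ∀ c : F.Frames, Isotropic c → δ ≤ ‖moment c‖ := by
  obtain hempty | hne := Set.eq_empty_or_nonempty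
    {Q : F.Frames | Isotropic Q ∧ ∀ τ, (Q τ)ᴴ * Q τ = 1}
  · refine ⟨1, one_pos, fun c hc => ?_⟩
    obtain ⟨Q, hQ, hQ1, -⟩ := hc.exists_isometry
    exact (hempty.subset ⟨hQ, hQ1⟩ : Q ∈ (∅ : Set F.Frames)).elim
  · obtain ⟨Q₀, hQ₀, hmin⟩ := isCompact_isometry_isotropic.exists_isMinOn hne
      (continuousOn_moment fun c hc τ => (hc.1 τ).posDef_gram).norm
    refine ⟨_, norm_pos_iff.2 (h Q₀ hQ₀.1 hQ₀.2), fun c hc => ?_⟩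
    obtain ⟨Q, hQ, hQ1, hQc⟩ := hc.exists_isometry
    exact (hmin ⟨hQ, hQ1⟩).trans_eq (congrArg norm hQc)

end FlagSystem

lemma semiconjBy_pinch {ι : Type*} [Fintype ι] [DecidableEq ι] {J S X Y : Matrix ι ι ℂ}
    (hS : Commute J S) (h : SemiconjBy J X Y) : SemiconjBy J (pinch S X) (pinch S Y) :=
  SemiconjBy.smul_right (h.add_right ((SemiconjBy.mul_right hS h).mul_right hS)) (1 / 2 : ℂ)

lemma conjTranspose_exp_mul_mul_exp {ι : Type*} [Fintype ι] [DecidableEq ι] {J X : Matrix ι ι ℂ}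
    (hX : X.IsHermitian) (h : SemiconjBy J X (-X)) :
    (NormedSpace.exp X)ᴴ * J * NormedSpace.exp X = J := by
  have hexp : J * NormedSpace.exp X = NormedSpace.exp (-X) * J := h.exp_right
  rw [hX.exp.eq, Matrix.mul_assoc, hexp, ← Matrix.mul_assoc, Matrix.exp_neg,
    Matrix.mul_nonsing_inv _ ((Matrix.isUnit_iff_isUnit_det _).1 (Matrix.isUnit_exp X)),
    Matrix.one_mul]

lemma diffContOnCl_firstCols {ι : Type*} [Fintype ι] {m : ℕ} {c : ℂ → Matrix ι (Fin m) ℂ}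
    {s : Set ℂ} (hc : DiffContOnCl ℂ c s) (i : Fin m) :
    DiffContOnCl ℂ (fun z => firstCols (c z) i) s := by
  let firstColsₗ : Matrix ι (Fin m) ℂ →ₗ[ℂ] Matrix ι (Fin (i + 1)) ℂ :=
    { toFun := fun M => firstCols M i
      map_add' := fun _ _ => rfl
      map_smul' := fun _ _ => rfl }
  exact firstColsₗ.toContinuousLinearMap.differentiable.comp_diffContOnCl hc

namespace FlagSystem

variable {ι T : Type*} [Fintype ι] [DecidableEq ι] [Fintype T] {F : FlagSystem ι T}
  {c Q : F.Frames} {g h : Matrix ι ι ℂ}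

lemma conjTranspose_emb_mul_form (F : FlagSystem ι T) (τ : T) :
    (F.emb τ)ᴴ * F.form = stdForm (Fin (F.size τ)) * (F.emb τ)ᴴ := by
  simpa [conjTranspose_mul, F.isHermitian_form.eq, isHermitian_stdForm.eq] using
    congrArg conjTranspose (F.form_mul_emb τ)

lemma Isotropic.semiconjBy_form_flagSpec (hQ : Isotropic Q) (hQ1 : ∀ τ, (Q τ)ᴴ * Q τ = 1) (τ : T) :
    SemiconjBy F.form (flagSpec Q τ) (-flagSpec Q τ) := by
  have hanti := (hQ τ).spec_mul isHermitian_stdForm stdForm_mul_stdForm (hQ1 τ)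
    (mul_conjTranspose_eq_one (hQ1 τ)) (F.wt_rev τ)
  calc F.form * (F.emb τ * spec (F.wt τ) (Q τ) * (F.emb τ)ᴴ)
      = F.emb τ * (stdForm _ * spec (F.wt τ) (Q τ)) * (F.emb τ)ᴴ := by
        simp only [← Matrix.mul_assoc, F.form_mul_emb]
    _ = F.emb τ * (-spec (F.wt τ) (Q τ) * stdForm _) * (F.emb τ)ᴴ := by
        rw [Matrix.neg_mul, hanti, neg_neg]
    _ = -flagSpec Q τ * F.form := by
        simp only [flagSpec, Matrix.mul_assoc, Matrix.neg_mul, Matrix.mul_neg,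
          F.conjTranspose_emb_mul_form]

lemma Isotropic.semiconjBy_form_moment (hc : Isotropic c) :
    SemiconjBy F.form (moment c) (-moment c) := by
  obtain ⟨Q, hQ, hQ1, hQc⟩ := hc.exists_isometry
  have hsum : SemiconjBy F.form (∑ τ, flagSpec Q τ) (-∑ τ, flagSpec Q τ) := by
    rw [SemiconjBy, Finset.mul_sum, ← Finset.sum_neg_distrib, Finset.sum_mul]
    exact Finset.sum_congr rfl fun τ _ => hQ.semiconjBy_form_flagSpec hQ1 τ
  rw [← hQc, moment_of_isometry hQ1, ← map_neg]
  exact semiconjBy_pinch F.commute_sym_form.symm hsum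

/-- The compression of a matrix to the subspace carrying the flag `τ`. -/
noncomputable def compress (F : FlagSystem ι T) (g : Matrix ι ι ℂ) (τ : T) :
    Matrix (Fin (F.size τ) ⊕ Fin (F.size τ)) (Fin (F.size τ) ⊕ Fin (F.size τ)) ℂ :=
  (F.emb τ)ᴴ * g * F.emb τ

lemma mul_emb (hg : Commute F.sym g) (τ : T) : g * F.emb τ = F.emb τ * F.compress g τ := by
  rw [compress, ← Matrix.mul_assoc, ← Matrix.mul_assoc, (F.commute_range τ g hg).eq,
    Matrix.mul_assoc, Matrix.mul_assoc, F.isometry_emb, Matrix.mul_one]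

lemma compress_mul (g : Matrix ι ι ℂ) (hh : Commute F.sym h) (τ : T) :
    F.compress (g * h) τ = F.compress g τ * F.compress h τ := by
  rw [compress, Matrix.mul_assoc, Matrix.mul_assoc, mul_emb hh, ← Matrix.mul_assoc,
    ← Matrix.mul_assoc, ← compress]

lemma isUnit_compress (hg : IsUnit g) (hSg : Commute F.sym g) (τ : T) :
    IsUnit (F.compress g τ) := by
  refine IsUnit.of_mul_eq_one_right (F.compress g⁻¹ τ) ?_
  rw [← compress_mul _ hSg, Matrix.nonsing_inv_mul _ ((Matrix.isUnit_iff_isUnit_det _).1 hg),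
    compress, Matrix.mul_one, F.isometry_emb]

lemma conjTranspose_compress_mul_mul_compress (hSg : Commute F.sym g)
    (hg : gᴴ * F.form * g = F.form) (τ : T) :
    (F.compress g τ)ᴴ * stdForm (Fin (F.size τ)) * F.compress g τ = stdForm (Fin (F.size τ)) := by
  have hform : F.compress F.form τ = stdForm (Fin (F.size τ)) := by
    rw [compress, Matrix.mul_assoc, F.form_mul_emb, ← Matrix.mul_assoc, F.isometry_emb,
      Matrix.one_mul]
  have hstar : (F.compress g τ)ᴴ = F.compress gᴴ τ := by
    simp [compress, conjTranspose_mul, Matrix.mul_assoc]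
  rw [hstar, ← hform, ← compress_mul _ F.commute_sym_form, ← compress_mul _ hSg, hg]

lemma mul_subspaces (hg : Commute F.sym g) (c : F.Frames) :
    (fun x => g * subspaces c x) = subspaces fun τ => F.compress g τ * c τ := by
  funext x
  have hmul : g * (F.emb x.1 * c x.1) = F.emb x.1 * (F.compress g x.1 * c x.1) := by
    rw [← Matrix.mul_assoc, mul_emb hg, Matrix.mul_assoc]
  exact congrArg (firstCols · x.2) hmul

lemma Isotropic.compress_mul (hc : Isotropic c) (hg : IsUnit g) (hSg : Commute F.sym g)
    (hgJ : gᴴ * F.form * g = F.form) : Isotropic fun τ => F.compress g τ * c τ :=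
  fun τ => (hc τ).mul_left (isUnit_compress hg hSg τ)
    (conjTranspose_compress_mul_mul_compress hSg hgJ τ)

/-- The descent flow of the moment map stays in the group preserving the form, because the moment of
an isotropic family anticommutes with the form. -/
lemma exists_pos_le_norm_moment_mul_of_isotropic
    (h : ∀ Q : F.Frames, Isotropic Q → (∀ τ, (Q τ)ᴴ * Q τ = 1) → moment Q ≠ 0) :
    ∃ δ > 0, ∀ c : F.Frames, Isotropic c → ∀ g, IsUnit g → Commute F.sym g →
      δ ≤ ‖F.toWeightedFamily.moment fun x => g * subspaces c x‖ := by
  obtain ⟨δ, hδ, hbound⟩ := exists_pos_le_norm_moment_of_isotropic h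
  refine ⟨δ / (4 * Fintype.card ι + 1), by positivity, fun c hc g hg hSg => ?_⟩
  have hflow (c : F.Frames) (hc : Isotropic c) (ε : ℝ) :
      ∃ c' : F.Frames, Isotropic c' ∧ subspaces c' =
        fun x => NormedSpace.exp ((-ε : ℂ) • F.toWeightedFamily.moment (subspaces c)) *
          subspaces c x := by
    have hS := ((F.toWeightedFamily.commute_moment (subspaces c)).smul_right (-ε : ℂ)).exp_right
    have hX : ((-ε : ℂ) • moment c).IsHermitian :=
      (F.toWeightedFamily.isHermitian_moment _).smul (by simp [IsSelfAdjoint])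
    refine ⟨_, hc.compress_mul (Matrix.isUnit_exp _) hS (conjTranspose_exp_mul_mul_exp hX ?_),
      (mul_subspaces hS c).symm⟩
    rw [← smul_neg]
    exact hc.semiconjBy_form_moment.smul_right _
  have hle := F.toWeightedFamily.le_norm_moment_mul_of_flow_mem
    (T := subspaces '' {c : F.Frames | Isotropic c}) (A := subspaces c) (g := g)
    (by rintro _ ⟨c, hc, rfl⟩; exact posDef_gram_subspaces fun τ => (hc τ).posDef_gram)
    (by rintro _ ⟨c, hc, rfl⟩ ε; exact hflow c hc ε) hδ
    (by rintro _ ⟨c, hc, rfl⟩; exact hbound c hc) ⟨c, hc, rfl⟩ hg hSg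
  rw [div_le_iff₀' (by positivity)]
  linarith [norm_nonneg (F.toWeightedFamily.moment fun x => g * subspaces c x)]

lemma exists_pos_le_norm_moment_of_translates
    (h : ∀ Q : F.Frames, Isotropic Q → (∀ τ, (Q τ)ᴴ * Q τ = 1) → moment Q ≠ 0) :
    ∃ δ > 0, ∀ c : F.Frames, (∀ τ, c τ ∈ isotropicTranslates (F.size τ)) → δ ≤ ‖moment c‖ := by
  obtain ⟨δ, hδ, hbound⟩ := exists_pos_le_norm_moment_mul_of_isotropic h
  refine ⟨δ / (12 * Fintype.card ι + 1), by positivity, fun c hc => ?_⟩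
  choose Y hY hY0 hYiso using fun τ => exists_diffContOnCl_isIsotropic (hc τ)
  have hiso (z : ℂ) (hz : z ∈ sphere (0 : ℂ) 1) : Isotropic (F := F) fun τ => Y τ z :=
    fun τ => hYiso τ z hz
  have hcenter : (fun τ => Y τ 0 : F.Frames) = c := funext hY0
  have hanalytic (x : Σ τ, Fin (F.size τ + F.size τ)) :
      DiffContOnCl ℂ (fun z => subspaces (F := F) (fun τ => Y τ z) x) (ball 0 1) :=
    diffContOnCl_firstCols (diffContOnCl_matrix_mul diffContOnCl_const (hY x.1)) x.2
  have hle := F.toWeightedFamily.le_norm_moment_zero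
    (Y := fun z => subspaces (F := F) fun τ => Y τ z) hanalytic
    (posDef_gram_subspaces fun τ => hY0 τ ▸ posDef_gram_of_mem_isotropicTranslates (hc τ))
    (fun z hz => posDef_gram_subspaces fun τ => (hYiso τ z hz).posDef_gram) hδ
    fun z hz => hbound _ (hiso z hz)
  rw [hcenter] at hle
  change δ ≤ _ * ‖moment c‖ at hle
  rw [div_le_iff₀' (by positivity)]
  linarith [norm_nonneg (moment c)]

/-- If the norm of the moment map is bounded below on isotropic families, then also on the dense set
of their blockwise translates, hence on all families of frames. -/
theorem exists_isotropic_of_moment_eq_zero (hQ : ∀ τ, (Q τ)ᴴ * Q τ = 1) (h0 : moment Q = 0) :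
    ∃ Q' : F.Frames, Isotropic Q' ∧ (∀ τ, (Q' τ)ᴴ * Q' τ = 1) ∧ moment Q' = 0 := by
  by_contra! hcon
  obtain ⟨δ, hδ, hbound⟩ := exists_pos_le_norm_moment_of_translates hcon
  set Z : Set F.Frames := Set.univ.pi fun τ => isotropicTranslates (F.size τ) with hZ
  have hQZ : Q ∈ closure Z := by
    rw [hZ, closure_pi_set]
    exact fun τ _ => dense_isotropicTranslates _ (Q τ)
  have hcont : ContinuousOn (fun c : F.Frames => ‖moment c‖) {c | ∀ τ, ((c τ)ᴴ * c τ).PosDef} :=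
    (continuousOn_moment fun c hc => hc).norm
  have hZpos : Z ⊆ {c | ∀ τ, ((c τ)ᴴ * c τ).PosDef} :=
    fun c hc τ => posDef_gram_of_mem_isotropicTranslates (hc τ (Set.mem_univ τ))
  have := mem_closure_iff_nhdsWithin_neBot.1 hQZ
  have hQpos : ∀ τ, ((Q τ)ᴴ * Q τ).PosDef := fun τ => (hQ τ).symm ▸ Matrix.PosDef.one
  have hle : δ ≤ ‖moment Q‖ := ge_of_tendsto ((hcont Q hQpos).mono hZpos)
    (eventually_nhdsWithin_of_forall fun c hc => hbound c fun τ => hc τ (Set.mem_univ τ))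
  rw [h0, norm_zero] at hle
  exact hδ.not_ge hle

end FlagSystem

section Spectra

open Polynomial

variable {m : ℕ} {w : Fin m → ℝ}

/-- The monic polynomial with roots `w`; a Hermitian matrix has eigenvalues `w` if and only if this
is its characteristic polynomial. -/
noncomputable def charOf (w : Fin m → ℝ) : ℂ[X] := ∏ i, (X - C (w i : ℂ))

lemma roots_charOf (w : Fin m → ℝ) :
    (charOf w).roots = (List.ofFn w : Multiset ℝ).map Complex.ofReal := by
  rw [← Fin.univ_val_map, Multiset.map_map]
  refine (congrArg roots ?_).trans (roots_multiset_prod_X_sub_C _)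
  rw [Multiset.map_map]
  rfl

lemma charOf_injOn_antitone : {w : Fin m → ℝ | Antitone w}.InjOn charOf := by
  intro v hv w hw h
  have hroots := congrArg roots h
  rw [roots_charOf, roots_charOf] at hroots
  have hperm := Multiset.coe_eq_coe.1 (Multiset.map_injective Complex.ofReal_injective hroots)
  exact List.ofFn_injective (hperm.eq_of_pairwise' (r := (· ≥ ·))
    (Antitone.sortedGE_ofFn hv).pairwise (Antitone.sortedGE_ofFn hw).pairwise)

lemma charOf_comp_perm (σ : Equiv.Perm (Fin m)) (w : Fin m → ℝ) : charOf (w ∘ σ) = charOf w :=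
  Equiv.prod_comp σ fun i => X - C (w i : ℂ)

lemma charOf_comp_cast {n : ℕ} (h : n = m) (w : Fin m → ℝ) :
    charOf (w ∘ Fin.cast h) = charOf w := by
  subst h
  rfl

lemma charOf_neg (hw : ∀ i, w i.rev = -w i) : charOf (-w) = charOf w := by
  rw [← charOf_comp_perm Fin.revPerm w]
  exact congrArg charOf (funext fun i => (hw i).symm)

section EigVec

variable {M : Matrix (Fin m) (Fin m) ℂ} (hM : M.IsHermitian)

lemma antitone_eigVec : Antitone (eigVec M hM) := fun _ _ hij =>
  Tuple.monotone_sort hM.eigenvalues (Fin.rev_le_rev.2 hij)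

lemma eigVec_eq_comp_perm : eigVec M hM =
    hM.eigenvalues ∘ (Fin.revPerm.trans (Tuple.sort hM.eigenvalues) : Equiv.Perm (Fin m)) := rfl

lemma charOf_eigVec : charOf (eigVec M hM) = M.charpoly := by
  rw [eigVec_eq_comp_perm, charOf_comp_perm, hM.charpoly_eq]
  rfl

lemma eq_eigVec_iff (hw : Antitone w) : w = eigVec M hM ↔ M.charpoly = charOf w := by
  rw [← charOf_eigVec hM, eq_comm]
  exact (charOf_injOn_antitone.eq_iff (antitone_eigVec hM) hw).symm

end EigVec

section Spec

variable {κ : Type*}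

lemma isHermitian_spec (w : Fin m → ℝ) (U : Matrix κ (Fin m) ℂ) : (spec w U).IsHermitian := by
  refine isHermitian_mul_mul_conjTranspose U (isHermitian_diagonal_of_self_adjoint _ ?_)
  exact funext fun i => Complex.conj_ofReal (w i)

lemma neg_spec (w : Fin m → ℝ) (U : Matrix κ (Fin m) ℂ) : -spec w U = spec (-w) U := by
  have hdiag : diagonal (fun i => ((-w) i : ℂ)) = -diagonal (fun i => (w i : ℂ)) := by
    rw [diagonal_neg]
    simp
  rw [spec, spec, hdiag, Matrix.mul_neg, Matrix.neg_mul]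

variable [Fintype κ] [DecidableEq κ]

lemma charpoly_spec {U : Matrix κ (Fin m) ℂ} (hU : Uᴴ * U = 1) (hκ : Fintype.card κ = m)
    (w : Fin m → ℝ) : (spec w U).charpoly = charOf w := by
  have h := charpoly_mul_comm' (U * diagonal (fun i => (w i : ℂ))) Uᴴ
  rw [hκ, Fintype.card_fin, ← Matrix.mul_assoc, hU, Matrix.one_mul, charpoly_diagonal] at h
  exact mul_left_cancel₀ (pow_ne_zero _ X_ne_zero) h

lemma exists_eq_spec (e : κ ≃ Fin m) {M : Matrix κ κ ℂ} (hM : M.IsHermitian) (hw : Antitone w)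
    (h : M.charpoly = charOf w) : ∃ U : Matrix κ (Fin m) ℂ, Uᴴ * U = 1 ∧ M = spec w U := by
  have hM' : (reindex e e M).IsHermitian := hM.submatrix e.symm
  rw [← charpoly_reindex e, ← eq_eigVec_iff hM' hw, eigVec_eq_comp_perm] at h
  generalize (Fin.revPerm.trans _ : Equiv.Perm (Fin m)) = σ at h
  subst h
  obtain ⟨V, hV, hMV⟩ := exists_unitary_diagonal hM'
  refine ⟨V.submatrix e σ, ?_, ?_⟩
  · rw [conjTranspose_submatrix, submatrix_mul_equiv, hV, submatrix_one_equiv]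
  · have hdiag : (diagonal fun i => ((hM'.eigenvalues ∘ σ) i : ℂ)) =
        (diagonal fun i => (hM'.eigenvalues i : ℂ)).submatrix σ σ :=
      (submatrix_diagonal_equiv (fun i => (hM'.eigenvalues i : ℂ)) σ).symm
    rw [spec, hdiag, conjTranspose_submatrix, submatrix_mul_equiv, submatrix_mul_equiv, ← hMV]
    simp

lemma charpoly_neg_eq_charOf (e : κ ≃ Fin m) {M : Matrix κ κ ℂ} (hM : M.IsHermitian)
    (hw : Antitone w) (hw' : ∀ i, w i.rev = -w i) (h : M.charpoly = charOf w) :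
    (-M).charpoly = charOf w := by
  obtain ⟨U, hU, rfl⟩ := exists_eq_spec e hM hw h
  rw [neg_spec, charpoly_spec hU (by simpa using Fintype.card_congr e), charOf_neg hw']

end Spec

lemma charpoly_fromBlocks_zero_zero {ν : Type*} [Fintype ν] [DecidableEq ν] {R : Type*}
    [CommRing R] (A B : Matrix ν ν R) :
    (fromBlocks 0 A B 0).charpoly = expand R 2 (A * B).charpoly := by
  have hmul : fromBlocks ((X : R[X]) • (1 : Matrix ν ν R[X])) (A.map C) 0 1 *
      (fromBlocks 0 A B 0).charmatrix =
      fromBlocks ((X ^ 2 : R[X]) • (1 : Matrix ν ν R[X]) - (A * B).map C) 0 (-B.map C)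
        ((X : R[X]) • (1 : Matrix ν ν R[X])) := by
    rw [charmatrix_fromBlocks, charmatrix_zero, fromBlocks_multiply, Matrix.map_mul,
      scalar_apply, ← smul_one_eq_diagonal]
    congr 1 <;> simp [pow_two, smul_smul, sub_eq_add_neg]
  have hexpand : ((X ^ 2 : R[X]) • (1 : Matrix ν ν R[X]) - (A * B).map C).det =
      expand R 2 (A * B).charpoly := by
    rw [charpoly, AlgHom.map_det]
    congr 1
    ext i j : 2
    obtain rfl | hij := eq_or_ne i j
    · simp [-Matrix.map_mul]
    · simp [-Matrix.map_mul, hij]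
  have hdet := congrArg det hmul
  rw [det_mul, det_fromBlocks_zero₂₁, det_fromBlocks_zero₁₂, hexpand, det_one, mul_one, det_smul,
    det_one, mul_one, mul_comm] at hdet
  exact (monic_X_pow (Fintype.card ν)).isRegular.right hdet

section Hat

variable {n : ℕ} {γ : Fin n → ℝ}

lemma hatPQ_castAdd (γ : Fin n → ℝ) (i : Fin n) : hatPQ n n γ (Fin.castAdd n i) = γ i := by
  simp [hatPQ]

lemma hatPQ_natAdd_rev (γ : Fin n → ℝ) (i : Fin n) :
    hatPQ n n γ (Fin.natAdd n i.rev) = -γ i := by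
  have h : n + n - 1 - (n + (i.rev : ℕ)) = i := by rw [Fin.val_rev]; omega
  simp only [hatPQ, Fin.val_natAdd, h]
  rw [dif_neg (by omega), dif_neg (by omega)]

lemma hatPQ_rev (γ : Fin n → ℝ) (i : Fin (n + n)) : hatPQ n n γ i.rev = -hatPQ n n γ i := by
  obtain ⟨x, rfl⟩ := (hatEquiv n).surjective i
  rw [rev_hatEquiv]
  rcases x with i | i <;>
    simp only [Sum.swap_inl, Sum.swap_inr, hatEquiv_inl, hatEquiv_inr, hatPQ_castAdd,
      hatPQ_natAdd_rev, neg_neg]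

lemma antitone_hatPQ (hγ : Antitone γ) (h0 : ∀ i, 0 ≤ γ i) : Antitone (hatPQ n n γ) := by
  intro i j hij
  obtain ⟨x, rfl⟩ := (hatEquiv n).surjective i
  obtain ⟨y, rfl⟩ := (hatEquiv n).surjective j
  rcases x with i | i <;> rcases y with j | j <;>
    simp only [hatEquiv_inl, hatEquiv_inr, hatPQ_castAdd, hatPQ_natAdd_rev] at hij ⊢
  · exact hγ hij
  · linarith [h0 i, h0 j]
  · rw [Fin.le_def, Fin.val_natAdd, Fin.val_castAdd] at hij
    omega
  · exact neg_le_neg (hγ (Fin.rev_le_rev.1 (by simpa using hij)))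

lemma charOf_hatPQ (γ : Fin n → ℝ) :
    charOf (hatPQ n n γ) = expand ℂ 2 (charOf fun i => γ i ^ 2) := by
  rw [charOf, ← (hatEquiv n).prod_comp, Fintype.prod_sum_type, charOf, map_prod,
    ← Finset.prod_mul_distrib]
  refine Finset.prod_congr rfl fun i _ => ?_
  rw [hatEquiv_inl, hatEquiv_inr, hatPQ_castAdd, hatPQ_natAdd_rev, map_sub, expand_X, expand_C]
  push_cast
  rw [C_neg, C_pow]
  ring

lemma eq_sval_iff (hγ : Antitone γ) (h0 : ∀ i, 0 ≤ γ i) (M : Matrix (Fin n) (Fin n) ℂ) :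
    (∀ i : Fin n, γ i = sval M i) ↔ (fromBlocks 0 M Mᴴ 0).charpoly = charOf (hatPQ n n γ) := by
  rw [charpoly_fromBlocks_zero_zero, charOf_hatPQ, expand_inj two_pos,
    ← eq_eigVec_iff (isHermitian_mul_conjTranspose_self M)
      fun i j hij => pow_le_pow_left₀ (h0 j) (hγ hij) 2, funext_iff]
  refine forall_congr' fun i => ?_
  have hnonneg : 0 ≤ eigVec (M * Mᴴ) (isHermitian_mul_conjTranspose_self M) i :=
    (posSemidef_self_mul_conjTranspose M).eigenvalues_nonneg _
  rw [sval, dif_pos i.isLt, eq_comm, Real.sqrt_eq_iff_eq_sq hnonneg (h0 i), eq_comm]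

end Hat

end Spectra

section CoordIncl

variable {μ ν : Type*} [DecidableEq ν]

/-- The matrix of the inclusion of coordinates along `f`. -/
def coordIncl (f : μ → ν) : Matrix ν μ ℂ := (1 : Matrix ν ν ℂ).submatrix id f

lemma conjTranspose_coordIncl_mul_mul [Fintype ν] (f : μ → ν) (X : Matrix ν ν ℂ) :
    (coordIncl f)ᴴ * X * coordIncl f = X.submatrix f f := by
  ext i j
  simp [coordIncl, Matrix.mul_apply, one_apply]

lemma gram_coordIncl [Fintype ν] [DecidableEq μ] {f : μ → ν} (hf : Function.Injective f) :
    (coordIncl f)ᴴ * coordIncl f = 1 := by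
  rw [← submatrix_one f hf, ← conjTranspose_coordIncl_mul_mul, Matrix.mul_one]

lemma diagonal_mul_coordIncl [Fintype ν] [Fintype μ] [DecidableEq μ] (d : ν → ℂ) (f : μ → ν) :
    diagonal d * coordIncl f = coordIncl f * diagonal (d ∘ f) := by
  ext i j
  by_cases h : i = f j <;> simp [coordIncl, h, one_apply]

lemma coordIncl_mul_conjTranspose [Fintype μ] {f : μ → ν} (hf : Function.Injective f) :
    coordIncl f * (coordIncl f)ᴴ = diagonal ((Set.range f).indicator 1) := by
  classical
  ext i j
  rw [Matrix.mul_apply]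
  by_cases hi : i ∈ Set.range f
  · obtain ⟨k, rfl⟩ := hi
    rw [Finset.sum_eq_single k]
    · simp [coordIncl, one_apply, diagonal_apply, eq_comm]
    · intro x _ hx
      simp [coordIncl, hf.ne hx.symm]
    · simp
  · have hne (k : μ) : i ≠ f k := fun h => hi ⟨k, h.symm⟩
    simp [coordIncl, hne, hi, diagonal_apply]

lemma submatrix_coordIncl_mul_mul [Fintype μ] {f : μ → ν} (hf : Function.Injective f)
    (Y : Matrix μ μ ℂ) :
    (coordIncl f * Y * (coordIncl f)ᴴ).submatrix f f = Y := by
  classical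
  ext i j
  simp [coordIncl, Matrix.mul_apply, one_apply, hf.eq_iff]

lemma submatrix_coordIncl_mul_mul_eq_zero {κ : Type*} [Fintype κ] {f : μ → ν} {g : κ → ν}
    (hfg : ∀ i j, f i ≠ g j) (Y : Matrix κ κ ℂ) :
    (coordIncl g * Y * (coordIncl g)ᴴ).submatrix f f = 0 := by
  ext i j
  simp [coordIncl, Matrix.mul_apply, one_apply, hfg]

lemma stdForm_eq_diagonal : stdForm ν = diagonal (Sum.elim 1 (-1)) := by
  rw [stdForm, ← diagonal_one, diagonal_neg, fromBlocks_diagonal]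
  rfl

lemma stdForm_mul_coordIncl_sumMap [Fintype μ] [Fintype ν] [DecidableEq μ] (f : μ → ν) :
    stdForm ν * coordIncl (Sum.map f f) = coordIncl (Sum.map f f) * stdForm μ := by
  rw [stdForm_eq_diagonal, stdForm_eq_diagonal, diagonal_mul_coordIncl, Sum.elim_comp_map]
  rfl

lemma pinch_diagonal_apply [Fintype ν] (d : ν → ℂ) (X : Matrix ν ν ℂ) (i j : ν) :
    pinch (diagonal d) X i j = 1 / 2 * (1 + d i * d j) * X i j := by
  simp only [pinch_apply, Matrix.smul_apply, Matrix.add_apply, diagonal_mul, mul_diagonal,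
    smul_eq_mul]
  ring

end CoordIncl

section Corners

variable (p q : ℕ)

/-- The sizes of a `(p + q) × (p + q)` matrix and of its two diagonal blocks. -/
def cornerSize : Fin 3 → ℕ
  | 0 => p + q
  | 1 => p
  | 2 => q

/-- The positions of the rows of a `(p + q) × (p + q)` matrix and of its two diagonal blocks. -/
def cornerIncl : ∀ τ, Fin (cornerSize p q τ) → Fin (p + q)
  | 0 => id
  | 1 => Fin.castAdd q
  | 2 => Fin.natAdd p

/-- The positions of the rows of the corners in a matrix consisting of four blocks of size
`p + q`. -/
def doubleIncl (τ : Fin 3) :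
    Fin (cornerSize p q τ) ⊕ Fin (cornerSize p q τ) → Fin (p + q) ⊕ Fin (p + q) :=
  Sum.map (cornerIncl p q τ) (cornerIncl p q τ)

/-- The entries of the diagonal involution which is `1` on the rows of the first corner and `-1` on
those of the second one. -/
def cornerSign : Fin (p + q) ⊕ Fin (p + q) → ℂ :=
  Sum.elim (Fin.append 1 (-1)) (Fin.append 1 (-1))

lemma cornerIncl_injective : ∀ τ, Function.Injective (cornerIncl p q τ)
  | 0 => Function.injective_id
  | 1 => Fin.castAdd_injective p q
  | 2 => Fin.natAdd_injective q p

lemma doubleIncl_injective (τ : Fin 3) : Function.Injective (doubleIncl p q τ) :=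
  (cornerIncl_injective p q τ).sumMap (cornerIncl_injective p q τ)

lemma doubleIncl_zero : doubleIncl p q 0 = id := Sum.map_id_id

@[simp] lemma cornerSign_doubleIncl_one (x : Fin (cornerSize p q 1) ⊕ Fin (cornerSize p q 1)) :
    cornerSign p q (doubleIncl p q 1 x) = 1 := by
  rcases x with i | i <;> exact Fin.append_left _ _ i

@[simp] lemma cornerSign_doubleIncl_two (x : Fin (cornerSize p q 2) ⊕ Fin (cornerSize p q 2)) :
    cornerSign p q (doubleIncl p q 2 x) = -1 := by
  rcases x with i | i <;> exact Fin.append_right _ _ i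

lemma doubleIncl_one_ne_two (x : Fin (cornerSize p q 1) ⊕ Fin (cornerSize p q 1))
    (y : Fin (cornerSize p q 2) ⊕ Fin (cornerSize p q 2)) :
    doubleIncl p q 1 x ≠ doubleIncl p q 2 y := by
  intro h
  have hsign := congrArg (cornerSign p q) h
  rw [cornerSign_doubleIncl_one, cornerSign_doubleIncl_two] at hsign
  norm_num at hsign

@[elab_as_elim]
lemma doubleIncl_cases {P : Fin (p + q) ⊕ Fin (p + q) → Prop} (x : Fin (p + q) ⊕ Fin (p + q))
    (one : ∀ y, P (doubleIncl p q 1 y))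
    (two : ∀ y, P (doubleIncl p q 2 y)) : P x := by
  rcases x with i | i <;> induction i using Fin.addCases
  exacts [one (.inl _), two (.inl _), one (.inr _), two (.inr _)]

lemma indicator_range_doubleIncl_one :
    (Set.range (doubleIncl p q 1)).indicator 1 = fun x => (1 / 2 : ℂ) * (1 + cornerSign p q x) := by
  ext x
  induction x using doubleIncl_cases with
  | one y =>
    rw [Set.indicator_of_mem (Set.mem_range_self y)]
    norm_num
  | two y =>
    rw [Set.indicator_of_notMem]
    · simp
    · rintro ⟨z, hz⟩
      exact doubleIncl_one_ne_two p q z y hz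

lemma indicator_range_doubleIncl_two :
    (Set.range (doubleIncl p q 2)).indicator 1 = fun x => (1 / 2 : ℂ) * (1 - cornerSign p q x) := by
  ext x
  induction x using doubleIncl_cases with
  | one y =>
    rw [Set.indicator_of_notMem]
    · simp
    · rintro ⟨z, hz⟩
      exact doubleIncl_one_ne_two p q y z hz.symm
  | two y =>
    rw [Set.indicator_of_mem (Set.mem_range_self y)]
    norm_num

lemma coordIncl_doubleIncl_zero_mul_conjTranspose :
    coordIncl (doubleIncl p q 0) * (coordIncl (doubleIncl p q 0))ᴴ =
      (1 : Matrix (Fin (p + q) ⊕ Fin (p + q)) (Fin (p + q) ⊕ Fin (p + q)) ℂ) := by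
  have hrange : Set.range (doubleIncl p q 0) = Set.univ :=
    Set.range_eq_univ.2 fun x => ⟨x, congrFun (doubleIncl_zero p q) x⟩
  rw [coordIncl_mul_conjTranspose (doubleIncl_injective p q 0), hrange, Set.indicator_univ]
  exact diagonal_one

lemma coordIncl_doubleIncl_one_mul_conjTranspose :
    coordIncl (doubleIncl p q 1) * (coordIncl (doubleIncl p q 1))ᴴ =
      (1 / 2 : ℂ) • (1 + diagonal (cornerSign p q)) := by
  rw [coordIncl_mul_conjTranspose (doubleIncl_injective p q 1), indicator_range_doubleIncl_one,
    ← diagonal_one, diagonal_add, ← diagonal_smul]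
  rfl

lemma coordIncl_doubleIncl_two_mul_conjTranspose :
    coordIncl (doubleIncl p q 2) * (coordIncl (doubleIncl p q 2))ᴴ =
      (1 / 2 : ℂ) • (1 - diagonal (cornerSign p q)) := by
  rw [coordIncl_mul_conjTranspose (doubleIncl_injective p q 2), indicator_range_doubleIncl_two,
    ← diagonal_one, diagonal_sub, ← diagonal_smul]
  rfl

end Corners

section CornerSystem

variable {p q : ℕ}

lemma pinch_cornerSign_eq_zero_iff
    {X : Matrix (Fin (p + q) ⊕ Fin (p + q)) (Fin (p + q) ⊕ Fin (p + q)) ℂ} :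
    pinch (diagonal (cornerSign p q)) X = 0 ↔
      X.submatrix (doubleIncl p q 1) (doubleIncl p q 1) = 0 ∧
        X.submatrix (doubleIncl p q 2) (doubleIncl p q 2) = 0 := by
  simp only [← Matrix.ext_iff, pinch_diagonal_apply, Matrix.zero_apply, submatrix_apply]
  constructor
  · intro h
    refine ⟨fun i j => ?_, fun i j => ?_⟩
    · have := h (doubleIncl p q 1 i) (doubleIncl p q 1 j)
      rw [cornerSign_doubleIncl_one, cornerSign_doubleIncl_one] at this
      linear_combination this
    · have := h (doubleIncl p q 2 i) (doubleIncl p q 2 j)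
      rw [cornerSign_doubleIncl_two, cornerSign_doubleIncl_two] at this
      linear_combination this
  · rintro ⟨h₁, h₂⟩ x y
    induction x using doubleIncl_cases with
    | one i =>
      induction y using doubleIncl_cases with
      | one j => rw [h₁, mul_zero]
      | two j => rw [cornerSign_doubleIncl_one, cornerSign_doubleIncl_two]; ring
    | two i =>
      induction y using doubleIncl_cases with
      | one j => rw [cornerSign_doubleIncl_one, cornerSign_doubleIncl_two]; ring
      | two j => rw [h₂, mul_zero]

variable {u : ∀ τ, Fin (cornerSize p q τ) → ℝ}

lemma isHermitian_diagonal_cornerSign : (diagonal (cornerSign p q)).IsHermitian := by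
  refine isHermitian_diagonal_of_self_adjoint _ (funext fun x => ?_)
  induction x using doubleIncl_cases <;> simp

lemma diagonal_cornerSign_mul_self :
    diagonal (cornerSign p q) * diagonal (cornerSign p q) = 1 := by
  rw [diagonal_mul_diagonal, ← diagonal_one]
  congr 1
  ext x
  induction x using doubleIncl_cases <;> simp

/-- The flag system of a matrix of size `2(p + q)` and its corners of sizes `2p` and `2q`, in which
the eigenvalues `± u τ` are prescribed. -/
noncomputable def cornerSystem (u : ∀ τ, Fin (cornerSize p q τ) → ℝ) (hu : ∀ τ, Antitone (u τ))
    (hu0 : ∀ τ i, 0 ≤ u τ i) : FlagSystem (Fin (p + q) ⊕ Fin (p + q)) (Fin 3) where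
  sym := diagonal (cornerSign p q)
  isHermitian_sym := isHermitian_diagonal_cornerSign
  sym_mul_sym := diagonal_cornerSign_mul_self
  form := stdForm (Fin (p + q))
  isHermitian_form := isHermitian_stdForm
  commute_sym_form := by
    rw [stdForm_eq_diagonal]
    exact commute_diagonal _ _
  size := cornerSize p q
  emb τ := coordIncl (doubleIncl p q τ)
  isometry_emb τ := gram_coordIncl (doubleIncl_injective p q τ)
  form_mul_emb τ := stdForm_mul_coordIncl_sumMap (cornerIncl p q τ)
  commute_range
    | 0, g, _ => by
      rw [coordIncl_doubleIncl_zero_mul_conjTranspose]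
      exact Commute.one_left g
    | 1, g, hg => by
      rw [coordIncl_doubleIncl_one_mul_conjTranspose]
      exact ((Commute.one_left g).add_left hg).smul_left _
    | 2, g, hg => by
      rw [coordIncl_doubleIncl_two_mul_conjTranspose]
      exact ((Commute.one_left g).sub_left hg).smul_left _
  mult := 2
  sum_range := by
    rw [Fin.sum_univ_three, coordIncl_doubleIncl_zero_mul_conjTranspose,
      coordIncl_doubleIncl_one_mul_conjTranspose, coordIncl_doubleIncl_two_mul_conjTranspose]
    module
  wt τ := hatPQ _ _ (u τ)
  antitone_wt τ := antitone_hatPQ (hu τ) (hu0 τ)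
  wt_rev τ := hatPQ_rev (u τ)

variable {hu : ∀ τ, Antitone (u τ)} {hu0 : ∀ τ i, 0 ≤ u τ i}
  {Q : (cornerSystem u hu hu0).Frames}

open FlagSystem

lemma submatrix_flagSpec_self (Q : (cornerSystem u hu hu0).Frames) (τ : Fin 3) :
    (flagSpec Q τ).submatrix (doubleIncl p q τ) (doubleIncl p q τ) =
      spec ((cornerSystem u hu hu0).wt τ) (Q τ) :=
  submatrix_coordIncl_mul_mul (doubleIncl_injective p q τ) _

lemma moment_cornerSystem_eq_zero_iff (hQ : ∀ τ, (Q τ)ᴴ * Q τ = 1) :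
    moment Q = 0 ↔
      (flagSpec Q 0).submatrix (doubleIncl p q 1) (doubleIncl p q 1) =
          -spec ((cornerSystem u hu hu0).wt 1) (Q 1) ∧
        (flagSpec Q 0).submatrix (doubleIncl p q 2) (doubleIncl p q 2) =
          -spec ((cornerSystem u hu hu0).wt 2) (Q 2) := by
  have h₁₂ : (flagSpec Q 1).submatrix (doubleIncl p q 2) (doubleIncl p q 2) = 0 :=
    submatrix_coordIncl_mul_mul_eq_zero (fun x y => (doubleIncl_one_ne_two p q y x).symm) _
  have h₂₁ : (flagSpec Q 2).submatrix (doubleIncl p q 1) (doubleIncl p q 1) = 0 :=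
    submatrix_coordIncl_mul_mul_eq_zero (doubleIncl_one_ne_two p q) _
  rw [moment_of_isometry hQ, Fin.sum_univ_three]
  refine pinch_cornerSign_eq_zero_iff.trans ?_
  simp only [submatrix_add, Pi.add_apply]
  rw [h₁₂, h₂₁, submatrix_flagSpec_self, submatrix_flagSpec_self, add_zero, add_zero]
  exact and_congr add_eq_zero_iff_eq_neg add_eq_zero_iff_eq_neg

/-- The matrix `N` has eigenvalues `± v 0`, and its corners of sizes `2p` and `2q` have eigenvalues
`± v 1` and `± v 2`. -/
def BlockSpectra (v : ∀ τ, Fin (cornerSize p q τ) → ℝ)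
    (N : Matrix (Fin (p + q) ⊕ Fin (p + q)) (Fin (p + q) ⊕ Fin (p + q)) ℂ) : Prop :=
  ∀ τ, (N.submatrix (doubleIncl p q τ) (doubleIncl p q τ)).charpoly =
    charOf (hatPQ (cornerSize p q τ) (cornerSize p q τ) (v τ))

lemma exists_moment_eq_zero_of_blockSpectra (hu : ∀ τ, Antitone (u τ)) (hu0 : ∀ τ i, 0 ≤ u τ i)
    {N : Matrix (Fin (p + q) ⊕ Fin (p + q)) (Fin (p + q) ⊕ Fin (p + q)) ℂ} (hN : N.IsHermitian)
    (h : BlockSpectra u N) :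
    ∃ Q : (cornerSystem u hu hu0).Frames, (∀ τ, (Q τ)ᴴ * Q τ = 1) ∧ moment Q = 0 := by
  have hherm (τ : Fin 3) : (N.submatrix (doubleIncl p q τ) (doubleIncl p q τ)).IsHermitian :=
    hN.submatrix _
  have hw (τ : Fin 3) := (cornerSystem u hu hu0).antitone_wt τ
  have hrev (τ : Fin 3) := (cornerSystem u hu hu0).wt_rev τ
  have hex (τ : Fin 3) : ∃ U : Matrix (Fin ((cornerSystem u hu hu0).size τ) ⊕
      Fin ((cornerSystem u hu hu0).size τ))
      (Fin ((cornerSystem u hu hu0).size τ + (cornerSystem u hu hu0).size τ)) ℂ,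
      Uᴴ * U = 1 ∧ (if τ = 0 then N.submatrix (doubleIncl p q τ) (doubleIncl p q τ) else
        -N.submatrix (doubleIncl p q τ) (doubleIncl p q τ)) =
          spec ((cornerSystem u hu hu0).wt τ) U := by
    split_ifs
    · exact exists_eq_spec finSumFinEquiv (hherm τ) (hw τ) (h τ)
    · exact exists_eq_spec finSumFinEquiv (hherm τ).neg (hw τ)
        (charpoly_neg_eq_charOf finSumFinEquiv (hherm τ) (hw τ) (hrev τ) (h τ))
  choose Q hQ hspec using hex
  have hone := coordIncl_doubleIncl_zero_mul_conjTranspose p q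
  have hQ0 : flagSpec Q 0 = N :=
    calc flagSpec Q 0 = coordIncl (doubleIncl p q 0) *
          N.submatrix (doubleIncl p q 0) (doubleIncl p q 0) * (coordIncl (doubleIncl p q 0))ᴴ :=
          congrArg (fun Y : Matrix (Fin (cornerSize p q 0) ⊕ Fin (cornerSize p q 0))
            (Fin (cornerSize p q 0) ⊕ Fin (cornerSize p q 0)) ℂ =>
              coordIncl (doubleIncl p q 0) * Y * (coordIncl (doubleIncl p q 0))ᴴ)
            (hspec 0).symm
      _ = N := by
        rw [← conjTranspose_coordIncl_mul_mul]
        simp only [← Matrix.mul_assoc, hone, Matrix.one_mul]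
        rw [Matrix.mul_assoc, hone, Matrix.mul_one]
  refine ⟨Q, hQ, (moment_cornerSystem_eq_zero_iff hQ).2 ?_⟩
  rw [hQ0]
  exact ⟨neg_eq_iff_eq_neg.1 (hspec 1), neg_eq_iff_eq_neg.1 (hspec 2)⟩

lemma blockSpectra_of_moment_eq_zero (hQ : ∀ τ, (Q τ)ᴴ * Q τ = 1) (h0 : moment Q = 0) :
    BlockSpectra u (flagSpec Q 0) := by
  have hpos (τ : Fin 3) : (spec ((cornerSystem u hu hu0).wt τ) (Q τ)).charpoly =
      charOf (hatPQ (cornerSize p q τ) (cornerSize p q τ) (u τ)) := charpoly_spec (hQ τ) (by simp) _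
  have hneg (τ : Fin 3) : (-spec ((cornerSystem u hu hu0).wt τ) (Q τ)).charpoly =
      charOf (hatPQ (cornerSize p q τ) (cornerSize p q τ) (u τ)) :=
    charpoly_neg_eq_charOf finSumFinEquiv (isHermitian_spec _ _)
      ((cornerSystem u hu hu0).antitone_wt τ) ((cornerSystem u hu hu0).wt_rev τ) (hpos τ)
  obtain ⟨h₁, h₂⟩ := (moment_cornerSystem_eq_zero_iff hQ).1 h0
  intro τ
  match τ with
  | 0 => exact (congrArg charpoly (submatrix_flagSpec_self Q 0)).trans (hpos 0)
  | 1 => exact (congrArg charpoly h₁).trans (hneg 1)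
  | 2 => exact (congrArg charpoly h₂).trans (hneg 2)

lemma eq_fromBlocks_of_semiconjBy_stdForm {ν : Type*} [Fintype ν] [DecidableEq ν]
    {N : Matrix (ν ⊕ ν) (ν ⊕ ν) ℂ} (hN : N.IsHermitian) (h : SemiconjBy (stdForm ν) N (-N)) :
    N = fromBlocks 0 N.toBlocks₁₂ N.toBlocks₁₂ᴴ 0 := by
  have hzero {A : Matrix ν ν ℂ} (hA : A = -A) : A = 0 :=
    Matrix.ext fun i j => self_eq_neg.1 (congrFun₂ hA i j)
  rw [← fromBlocks_toBlocks N] at h hN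
  rw [isHermitian_fromBlocks_iff] at hN
  rw [SemiconjBy, stdForm, fromBlocks_neg, fromBlocks_multiply, fromBlocks_multiply,
    fromBlocks_inj] at h
  simp only [Matrix.one_mul, Matrix.mul_one, Matrix.zero_mul, Matrix.mul_zero, add_zero, zero_add,
    Matrix.neg_mul, Matrix.mul_neg, neg_neg] at h
  nth_rewrite 1 [← fromBlocks_toBlocks N]
  rw [hzero h.1, hzero h.2.2.2.symm, hN.2.1]

theorem exists_blockSpectra_fromBlocks (hu : ∀ τ, Antitone (u τ)) (hu0 : ∀ τ i, 0 ≤ u τ i)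
    {N : Matrix (Fin (p + q) ⊕ Fin (p + q)) (Fin (p + q) ⊕ Fin (p + q)) ℂ} (hN : N.IsHermitian)
    (h : BlockSpectra u N) :
    ∃ M : Matrix (Fin (p + q)) (Fin (p + q)) ℂ, BlockSpectra u (fromBlocks 0 M Mᴴ 0) := by
  obtain ⟨Q, hQ, hQ0⟩ := exists_moment_eq_zero_of_blockSpectra hu hu0 hN h
  obtain ⟨Q', hiso, hQ', hQ0'⟩ := exists_isotropic_of_moment_eq_zero hQ hQ0
  have hherm : (flagSpec Q' 0).IsHermitian := isHermitian_mul_mul_conjTranspose _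
    (isHermitian_spec _ _)
  refine ⟨(flagSpec Q' 0).toBlocks₁₂, ?_⟩
  rw [← eq_fromBlocks_of_semiconjBy_stdForm hherm (hiso.semiconjBy_form_flagSpec hQ' 0)]
  exact blockSpectra_of_moment_eq_zero hQ' hQ0'

end CornerSystem

section Cones

lemma fromBlocks_submatrix_sumMap {μ ν R : Type*} (A B C D : Matrix ν ν R) (f : μ → ν) :
    (fromBlocks A B C D).submatrix (Sum.map f f) (Sum.map f f) =
      fromBlocks (A.submatrix f f) (B.submatrix f f) (C.submatrix f f) (D.submatrix f f) := by
  ext (i | i) (j | j) <;> rfl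

variable {p q : ℕ} {g : Fin (p + q) → ℝ} {s : Fin p → ℝ} {t : Fin q → ℝ}

/-- The members of a triple as a family indexed like the corners. -/
def tripleVec (g : Fin (p + q) → ℝ) (s : Fin p → ℝ) (t : Fin q → ℝ) :
    ∀ τ, Fin (cornerSize p q τ) → ℝ
  | 0 => g
  | 1 => s
  | 2 => t

lemma blockSpectra_fromBlocks_iff {u : ∀ τ, Fin (cornerSize p q τ) → ℝ}
    (hu : ∀ τ, Antitone (u τ)) (hu0 : ∀ τ i, 0 ≤ u τ i) (M : Matrix (Fin (p + q)) (Fin (p + q)) ℂ) :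
    BlockSpectra u (fromBlocks 0 M Mᴴ 0) ↔
      ∀ τ i, u τ i = sval (M.submatrix (cornerIncl p q τ) (cornerIncl p q τ)) i := by
  refine forall_congr' fun τ => ?_
  rw [eq_sval_iff (hu τ) (hu0 τ), doubleIncl, fromBlocks_submatrix_sumMap, submatrix_zero,
    conjTranspose_submatrix]
  rfl

lemma mem_coneT_iff (hu : ∀ τ, Antitone (tripleVec g s t τ))
    (hu0 : ∀ τ i, 0 ≤ tripleVec g s t τ i) :
    (g, s, t) ∈ coneT p q ↔ ∃ M, BlockSpectra (tripleVec g s t) (fromBlocks 0 M Mᴴ 0) := by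
  refine exists_congr fun M => ?_
  rw [blockSpectra_fromBlocks_iff hu hu0]
  exact ⟨fun h τ => match τ with | 0 => h.1 | 1 => h.2.1 | 2 => h.2.2, fun h => ⟨h 0, h 1, h 2⟩⟩

variable (p q) in
/-- The regrouping of two diagonal blocks of sizes `2p` and `2q` into two halves of size `p + q`. -/
def regroup : Fin (p + p + (q + q)) ≃ Fin (p + q) ⊕ Fin (p + q) :=
  finSumFinEquiv.symm.trans ((finSumFinEquiv.symm.sumCongr finSumFinEquiv.symm).trans
    ((Equiv.sumSumSumComm _ _ _ _).trans (finSumFinEquiv.sumCongr finSumFinEquiv)))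

lemma regroup_comp_castAdd : regroup p q ∘ Fin.castAdd (q + q) =
    Sum.map (Fin.castAdd q) (Fin.castAdd q) ∘ finSumFinEquiv.symm := by
  rw [Equiv.eq_comp_symm]
  funext x
  rw [Function.comp_apply, Function.comp_apply, ← finSumFinEquiv_apply_left, regroup,
    Equiv.trans_apply, Equiv.symm_apply_apply, Equiv.trans_apply, Equiv.sumCongr_apply,
    Sum.map_inl, Equiv.symm_apply_apply]
  rcases x with x | x <;> rfl

lemma regroup_comp_natAdd : regroup p q ∘ Fin.natAdd (p + p) =
    Sum.map (Fin.natAdd p) (Fin.natAdd p) ∘ finSumFinEquiv.symm := by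
  rw [Equiv.eq_comp_symm]
  funext x
  rw [Function.comp_apply, Function.comp_apply, ← finSumFinEquiv_apply_right, regroup,
    Equiv.trans_apply, Equiv.symm_apply_apply, Equiv.trans_apply, Equiv.sumCongr_apply,
    Sum.map_inr, Equiv.symm_apply_apply]
  rcases x with x | x <;> rfl

lemma blockSpectra_iff_eq_eigVec (hu : ∀ τ, Antitone (tripleVec g s t τ))
    (hu0 : ∀ τ i, 0 ≤ tripleVec g s t τ i) (hc : p + p + (q + q) = p + q + (p + q))
    (N : Matrix (Fin (p + q) ⊕ Fin (p + q)) (Fin (p + q) ⊕ Fin (p + q)) ℂ)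
    (hM : (N.submatrix (regroup p q) (regroup p q)).IsHermitian) :
    BlockSpectra (tripleVec g s t) N ↔
      hatPQ (p + q) (p + q) g ∘ Fin.cast hc = eigVec _ hM ∧
        hatPQ p p s = eigVec _ (hM.submatrix (Fin.castAdd (q + q))) ∧
        hatPQ q q t = eigVec _ (hM.submatrix (Fin.natAdd (p + p))) := by
  have hw (τ) := antitone_hatPQ (hu τ) (hu0 τ)
  have h₀ : (N.submatrix (regroup p q) (regroup p q)).charpoly =
      (N.submatrix (doubleIncl p q 0) (doubleIncl p q 0)).charpoly := by
    rw [doubleIncl_zero]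
    exact charpoly_reindex (regroup p q).symm N
  have h₁ : ((N.submatrix (regroup p q) (regroup p q)).submatrix (Fin.castAdd (q + q))
      (Fin.castAdd (q + q))).charpoly =
        (N.submatrix (doubleIncl p q 1) (doubleIncl p q 1)).charpoly := by
    rw [submatrix_submatrix, regroup_comp_castAdd]
    exact charpoly_reindex finSumFinEquiv (N.submatrix (doubleIncl p q 1) (doubleIncl p q 1))
  have h₂ : ((N.submatrix (regroup p q) (regroup p q)).submatrix (Fin.natAdd (p + p))
      (Fin.natAdd (p + p))).charpoly =
        (N.submatrix (doubleIncl p q 2) (doubleIncl p q 2)).charpoly := by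
    rw [submatrix_submatrix, regroup_comp_natAdd]
    exact charpoly_reindex finSumFinEquiv (N.submatrix (doubleIncl p q 2) (doubleIncl p q 2))
  have hg : Antitone (hatPQ (p + q) (p + q) g ∘ Fin.cast hc) := fun _ _ hij => hw 0 hij
  have hs : Antitone (hatPQ p p s) := hw 1
  have ht : Antitone (hatPQ q q t) := hw 2
  rw [eq_eigVec_iff _ hg, eq_eigVec_iff _ hs, eq_eigVec_iff _ ht, charOf_comp_cast, h₀, h₁, h₂]
  exact ⟨fun h => ⟨h 0, h 1, h 2⟩, fun h τ => match τ with | 0 => h.1 | 1 => h.2.1 | 2 => h.2.2⟩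

lemma mem_LRcone_iff (hu : ∀ τ, Antitone (tripleVec g s t τ))
    (hu0 : ∀ τ i, 0 ≤ tripleVec g s t τ i) (hc : p + p + (q + q) = p + q + (p + q)) :
    (hatPQ (p + q) (p + q) g ∘ Fin.cast hc, hatPQ p p s, hatPQ q q t) ∈ LRcone (p + p) (q + q) ↔
      ∃ N, N.IsHermitian ∧ BlockSpectra (tripleVec g s t) N := by
  constructor
  · rintro ⟨M, hM, h⟩
    obtain ⟨N, rfl⟩ := (reindex (regroup p q).symm (regroup p q).symm).surjective M
    exact ⟨N, (isHermitian_submatrix_equiv (regroup p q)).1 hM,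
      (blockSpectra_iff_eq_eigVec hu hu0 hc N hM).2 h⟩
  · rintro ⟨N, hN, h⟩
    exact ⟨_, hN.submatrix _, (blockSpectra_iff_eq_eigVec hu hu0 hc N _).1 h⟩

end Cones

end FlagMoment

open FlagMoment in
theorem stmt_12_general (p q : ℕ)
    (g : Fin (p + q) → ℝ) (hg : Antitone g) (hg0 : ∀ i, 0 ≤ g i)
    (s : Fin p → ℝ) (hs : Antitone s) (hs0 : ∀ i, 0 ≤ s i)
    (t : Fin q → ℝ) (ht : Antitone t) (ht0 : ∀ i, 0 ≤ t i) :
    (g, s, t) ∈ coneT p q ↔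
      (hatPQ (p + q) (p + q) g ∘
          Fin.cast (show p + p + (q + q) = p + q + (p + q) by ring),
        hatPQ p p s, hatPQ q q t) ∈ LRcone (p + p) (q + q) := by
  have hu (τ : Fin 3) : Antitone (tripleVec g s t τ) := match τ with | 0 => hg | 1 => hs | 2 => ht
  have hu0 (τ : Fin 3) : ∀ i, 0 ≤ tripleVec g s t τ i :=
    match τ with | 0 => hg0 | 1 => hs0 | 2 => ht0
  rw [mem_coneT_iff hu hu0, mem_LRcone_iff hu hu0]
  constructor
  · rintro ⟨M, hM⟩
    exact ⟨_, isHermitian_fromBlocks_iff.2 ⟨isHermitian_zero, rfl, conjTranspose_conjTranspose M,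
      isHermitian_zero⟩, hM⟩
  · rintro ⟨N, hN, h⟩
    exact exists_blockSpectra_fromBlocks hu hu0 hN h

theorem stmt_12 (p q : ℕ) (hq : 1 ≤ q) (hpq : q ≤ p)
    (g : Fin (p + q) → ℝ) (hg : Antitone g) (hg0 : ∀ i, 0 ≤ g i)
    (s : Fin p → ℝ) (hs : Antitone s) (hs0 : ∀ i, 0 ≤ s i)
    (t : Fin q → ℝ) (ht : Antitone t) (ht0 : ∀ i, 0 ≤ t i) :
    (g, s, t) ∈ coneT p q ↔
      (hatPQ (p + q) (p + q) g ∘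
          Fin.cast (show p + p + (q + q) = p + q + (p + q) by ring),
        hatPQ p p s, hatPQ q q t) ∈ LRcone (p + p) (q + q) :=
  stmt_12_general p q g hg hg0 s hs hs0 t ht ht0
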